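/- arXiv:2412.15771 — 3 statements merged into one kernel-verified Lean document; each statement's English description precedes it below -/
import Mathlib

section
/- Let n ≥ 2 and let ω be a smooth (n−1)-form on an open set U ⊆ ℝⁿ with ω_x ≠ 0 at a point x ∈ U. Then ω has constant coefficients on a neighbourhood of x if and only if dω = 0 on a neighbourhood of x. -/
/-- Constant coefficients for a `p`-form (see context). -/
def HasConstantCoefficientsFormAt (n p : ℕ) (U : Set (Fin n → ℝ))
    (ω : (Fin n → ℝ) → ((Fin n → ℝ) [×p]→L[ℝ] ℝ)) (x : Fin n → ℝ) : Prop :=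
  ∃ V : Set (Fin n → ℝ), IsOpen V ∧ x ∈ V ∧ V ⊆ U ∧
    ∃ u : (Fin n → ℝ) → (Fin n → ℝ),
      ContDiffOn ℝ (⊤ : ℕ∞) u V ∧ Set.InjOn u V ∧ IsOpen (u '' V) ∧
      (∀ y ∈ V, Function.Bijective (fderiv ℝ u y)) ∧
      ∃ c : (Fin n → ℝ) [×p]→L[ℝ] ℝ,
        ∀ y ∈ V, ∀ v : Fin p → (Fin n → ℝ),
          ω y v = c (fun i => fderiv ℝ u y (v i))

/-!
Contracting the constant volume form with a vector field `X` identifies vector fields with forms of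
codimension one, so `ω = ι_X (dx₁ ∧ ⋯ ∧ dxₙ)` with `X x ≠ 0`. In coordinates that straighten `X`
to `∂₁` the form becomes `h dx₂ ∧ ⋯ ∧ dxₙ`, and it is closed exactly when `∂₁ h = 0`. Since `n ≥ 2`,
there is a second coordinate; replacing `x₂` by a primitive of `h` in the direction `∂₂` that does
not depend on `x₁` turns `h dx₂` into `dx₂` modulo `dx₃, …, dxₙ`, which absorbs the coefficient.

The smooth flow that straightens `X` comes from the inverse function theorem in the Banach space of
continuous curves, applied to the integral equation.
-/

open Set Filter Topology

section Superposition

universe u v w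

variable {K : Type u} [TopologicalSpace K] [CompactSpace K] {E : Type v} {F : Type w}
  [NormedAddCommGroup E] [NormedSpace ℝ E] [NormedAddCommGroup F] [NormedSpace ℝ F]

variable (K E F) in
/-- Pointwise application `(A, g) ↦ (t ↦ A t (g t))` of a continuous family of operators to a
continuous function; it is the shape of the derivative of a superposition operator. -/
noncomputable def pointwiseApplyL : C(K, E →L[ℝ] F) →L[ℝ] C(K, E) →L[ℝ] C(K, F) :=
  LinearMap.mkContinuous₂
    (LinearMap.mk₂ ℝ
      (fun (A : C(K, E →L[ℝ] F)) (g : C(K, E)) ↦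
        (⟨fun t ↦ A t (g t), A.continuous.clm_apply g.continuous⟩ : C(K, F)))
      (fun _ _ _ ↦ by ext; simp) (fun _ _ _ ↦ by ext; simp) (fun _ _ _ ↦ by ext; simp)
      (fun _ _ _ ↦ by ext; simp))
    1 fun A g ↦ by
      rw [one_mul, ContinuousMap.norm_le _ (by positivity)]
      exact fun t ↦ (A t).le_of_opNorm_le_of_le (A.norm_coe_le_norm t) (g.norm_coe_le_norm t)

@[simp]
theorem pointwiseApplyL_apply (A : C(K, E →L[ℝ] F)) (g : C(K, E)) (t : K) :
    pointwiseApplyL K E F A g t = A t (g t) :=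
  rfl

theorem hasFDerivAt_superposition {f : C(E, F)} {f' : C(E, E →L[ℝ] F)}
    (hf : ∀ x, HasFDerivAt f (f' x) x) (g : C(K, E)) :
    HasFDerivAt (fun g : C(K, E) ↦ f.comp g) (pointwiseApplyL K E F (f'.comp g)) g := by
  rw [hasFDerivAt_iff_isLittleO, Asymptotics.isLittleO_iff]
  intro ε hε
  have hcont : ∀ᶠ g' : C(K, E) in 𝓝 g, f'.comp g' ∈ Metric.ball (f'.comp g) ε :=
    (f'.continuous_postcomp.tendsto g).eventually_mem (Metric.ball_mem_nhds (f'.comp g) hε)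
  obtain ⟨δ, hδ, hclose⟩ := Metric.eventually_nhds_iff_ball.1 hcont
  have hclose_apply (t : K) (z : E) (hz : z ∈ Metric.ball (g t) δ) :
      ‖f' z - f' (g t)‖ ≤ ε := by
    have hshift : g + ContinuousMap.const K (z - g t) ∈ Metric.ball g δ := by
      rw [mem_ball_iff_norm, add_sub_cancel_left]
      exact ((ContinuousMap.norm_le _ (norm_nonneg _)).2 fun _ ↦ le_rfl).trans_lt
        (mem_ball_iff_norm.1 hz)
    simpa [dist_eq_norm] using (ContinuousMap.dist_apply_le_dist t).trans (hclose _ hshift).le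
  filter_upwards [Metric.ball_mem_nhds g hδ] with g' hg'
  refine (ContinuousMap.norm_le _ (by positivity)).2 fun t ↦ ?_
  have hg't : g' t ∈ Metric.ball (g t) δ := (ContinuousMap.dist_apply_le_dist t).trans_lt hg'
  calc ‖f (g' t) - f (g t) - f' (g t) (g' t - g t)‖
      ≤ ε * ‖g' t - g t‖ :=
        (convex_ball (g t) δ).norm_image_sub_le_of_norm_hasFDerivWithin_le'
          (fun z _ ↦ (hf z).hasFDerivWithinAt) (hclose_apply t) (Metric.mem_ball_self hδ) hg't
    _ ≤ ε * ‖g' - g‖ := by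
        gcongr
        exact ContinuousMap.norm_coe_le_norm (g' - g) t

/- The universe of `F` has to contain that of `E`, since the induction passes from `F` to
`E →L[ℝ] F`. -/
theorem contDiff_superposition_nat (k : ℕ) :
    ∀ {F : Type (max v w)} [NormedAddCommGroup F] [NormedSpace ℝ F] {f : C(E, F)},
      ContDiff ℝ k f → ContDiff ℝ k fun g : C(K, E) ↦ f.comp g := by
  induction k with
  | zero => exact fun {_ _ _ f} _ ↦ contDiff_zero.2 f.continuous_postcomp
  | succ k ih =>
    intro F _ _ f hf
    have hk : (k + 1 : ℕ) ≠ (0 : WithTop ℕ∞) := by simp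
    let f' : C(E, E →L[ℝ] F) := ⟨fderiv ℝ f, hf.continuous_fderiv hk⟩
    have hderiv := hasFDerivAt_superposition (K := K) (f' := f')
      fun x ↦ (hf.differentiable hk x).hasFDerivAt
    rw [Nat.cast_succ, contDiff_succ_iff_fderiv, funext fun g ↦ (hderiv g).fderiv]
    have hf' : ContDiff ℝ k f' := hf.fderiv_right (by norm_cast)
    refine ⟨fun g ↦ (hderiv g).differentiableAt, by simp, ?_⟩
    exact (pointwiseApplyL K E F).contDiff.comp (ih hf')

theorem contDiff_superposition {n : ℕ∞} {f : C(E, F)} (hf : ContDiff ℝ n f) :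
    ContDiff ℝ n fun g : C(K, E) ↦ f.comp g := by
  let down : ULift.{v} F ≃L[ℝ] F := .ulift
  let f' : C(E, ULift.{v} F) := (down.symm : C(F, ULift.{v} F)).comp f
  have hf' : ContDiff ℝ n fun g : C(K, E) ↦ f'.comp g :=
    contDiff_iff_forall_nat_le.2 fun k hk ↦ contDiff_superposition_nat.{u, v, w} k
      ((down.symm.contDiff.comp hf).of_le (by exact_mod_cast hk))
  exact ((down : ULift.{v} F →L[ℝ] F).compLeftContinuous ℝ K).contDiff.comp hf'

end Superposition

section Chart

variable {E F G : Type*} [NormedAddCommGroup E] [NormedSpace ℝ E] [NormedAddCommGroup F]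
  [NormedSpace ℝ F] [NormedAddCommGroup G] [NormedSpace ℝ G] {n : WithTop ℕ∞}

/-- An open partial homeomorphism between normed spaces that is `C^n` together with its inverse,
i.e. a local change of coordinates of class `C^n`. -/
structure IsContDiffChart (n : WithTop ℕ∞) (e : OpenPartialHomeomorph E F) : Prop where
  contDiffOn : ContDiffOn ℝ n e e.source
  contDiffOn_symm : ContDiffOn ℝ n e.symm e.target

namespace IsContDiffChart

variable {e : OpenPartialHomeomorph E F} {e' : OpenPartialHomeomorph F G}

theorem symm (he : IsContDiffChart n e) : IsContDiffChart n e.symm :=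
  ⟨he.contDiffOn_symm, he.contDiffOn⟩

theorem trans (he : IsContDiffChart n e) (he' : IsContDiffChart n e') :
    IsContDiffChart n (e.trans e') where
  contDiffOn := he'.contDiffOn.comp (he.contDiffOn.mono (by simp)) fun y hy ↦ by
    simpa using (e.trans_source e' ▸ hy).2
  contDiffOn_symm := he.contDiffOn_symm.comp (he'.contDiffOn_symm.mono (by simp)) fun y hy ↦ by
    simpa using (e.trans_target e' ▸ hy).2

theorem restrOpen (he : IsContDiffChart n e) {s : Set E} (hs : IsOpen s) :
    IsContDiffChart n (e.restrOpen s hs) where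
  contDiffOn := he.contDiffOn.mono inter_subset_left
  contDiffOn_symm := he.contDiffOn_symm.mono inter_subset_left

theorem contDiffAt (he : IsContDiffChart n e) {y : E} (hy : y ∈ e.source) : ContDiffAt ℝ n e y :=
  he.contDiffOn.contDiffAt (e.open_source.mem_nhds hy)

theorem differentiableAt (he : IsContDiffChart n e) (hn : n ≠ 0) {y : E} (hy : y ∈ e.source) :
    DifferentiableAt ℝ e y :=
  (he.contDiffAt hy).differentiableAt hn

theorem fderiv_symm_comp_fderiv (he : IsContDiffChart n e) (hn : n ≠ 0) {y : E}
    (hy : y ∈ e.source) : (fderiv ℝ e.symm (e y)).comp (fderiv ℝ e y) = .id ℝ E := by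
  have hinv : e.symm ∘ e =ᶠ[𝓝 y] id := e.eventually_left_inverse hy
  rw [← fderiv_comp y (he.symm.differentiableAt hn (e.map_source hy)) (he.differentiableAt hn hy),
    hinv.fderiv_eq, fderiv_id]

theorem exists_hasFDerivAt_equiv (he : IsContDiffChart n e) (hn : n ≠ 0) {y : E}
    (hy : y ∈ e.source) : ∃ A : E ≃L[ℝ] F, HasFDerivAt e (A : E →L[ℝ] F) y := by
  have hleft := he.fderiv_symm_comp_fderiv hn hy
  have hright := he.symm.fderiv_symm_comp_fderiv hn (e.map_source hy)
  rw [e.symm_symm, e.left_inv hy] at hright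
  exact ⟨.equivOfInverse _ _ (DFunLike.congr_fun hleft) (DFunLike.congr_fun hright),
    (he.differentiableAt hn hy).hasFDerivAt⟩

end IsContDiffChart

theorem exists_isContDiffChart_of_hasFDerivAt_equiv [CompleteSpace E] {f : E → F} {U : Set E}
    (hU : IsOpen U) (hf : ContDiffOn ℝ n f U) (hn : n ≠ 0) {x : E} (hx : x ∈ U) {f' : E ≃L[ℝ] F}
    (hf' : HasFDerivAt f (f' : E →L[ℝ] F) x) :
    ∃ e : OpenPartialHomeomorph E F,
      IsContDiffChart n e ∧ x ∈ e.source ∧ e.source ⊆ U ∧ ⇑e = f := by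
  have hfx : ContDiffAt ℝ n f x := hf.contDiffAt (hU.mem_nhds hx)
  let S : Set E := U ∩ fderiv ℝ f ⁻¹' range ((↑) : (E ≃L[ℝ] F) → E →L[ℝ] F)
  have hf'_cont : ContinuousOn (fderiv ℝ f) U :=
    hf.continuousOn_fderiv_of_isOpen hU (ENat.one_le_iff_ne_zero_withTop.2 hn)
  have hS : IsOpen S := hf'_cont.isOpen_inter_preimage hU ContinuousLinearEquiv.isOpen
  let e := (hfx.toOpenPartialHomeomorph f hf' hn).restrOpen S hS
  have hsource : e.source ⊆ S := inter_subset_right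
  have hfS {y : E} (hy : y ∈ e.source) : ContDiffAt ℝ n f y :=
    hf.contDiffAt (hU.mem_nhds (hsource hy).1)
  refine ⟨e, ⟨fun y hy ↦ (hfS hy).contDiffWithinAt, fun z hz ↦ ?_⟩,
    ⟨hfx.mem_toOpenPartialHomeomorph_source hf' hn, hx, f', hf'.fderiv.symm⟩,
    fun y hy ↦ (hsource hy).1, rfl⟩
  obtain ⟨A, hA⟩ := (hsource (e.map_target hz)).2
  have hderiv : HasFDerivAt e (A : E →L[ℝ] F) (e.symm z) := by
    rw [hA]
    exact ((hfS (e.map_target hz)).differentiableAt hn).hasFDerivAt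
  exact (e.contDiffAt_symm hz hderiv (hfS (e.map_target hz))).contDiffWithinAt

section FixedPoint

variable {P Y : Type*} [NormedAddCommGroup P] [NormedSpace ℝ P] [CompleteSpace P]
  [NormedAddCommGroup Y] [NormedSpace ℝ Y] [CompleteSpace Y]

/- The graph map `(p, y) ↦ (p, y - G (p, y))` is a local diffeomorphism, and `Γ` is read off its
inverse along `P × {0}`. -/
theorem exists_contDiffOn_fixedPoint {G : P × Y → Y} (hG : ContDiff ℝ n G) (hn : n ≠ 0) {p₀ : P}
    {y₀ : Y} (hfix : G (p₀, y₀) = y₀) {L : P →L[ℝ] Y}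
    (hL : HasFDerivAt G (L.comp (.fst ℝ P Y)) (p₀, y₀)) :
    ∃ (Γ : P → Y) (O : Set P), IsOpen O ∧ p₀ ∈ O ∧ ContDiffOn ℝ n Γ O ∧ Γ p₀ = y₀ ∧
      ∀ p ∈ O, Γ p = G (p, Γ p) := by
  let f : P × Y → P × Y := fun q ↦ (q.1, q.2 - G q)
  have hf : ContDiff ℝ n f := contDiff_fst.prodMk (contDiff_snd.sub hG)
  have hf' : HasFDerivAt f
      (ContinuousLinearEquiv.skewProd (.refl ℝ P) (.refl ℝ Y) (-L) : P × Y →L[ℝ] P × Y)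
      (p₀, y₀) :=
    (hasFDerivAt_fst.prodMk (hasFDerivAt_snd.sub hL)).congr_fderiv (by ext <;> simp)
  obtain ⟨e, he, he₀, -, hef⟩ :=
    exists_isContDiffChart_of_hasFDerivAt_equiv isOpen_univ hf.contDiffOn hn (mem_univ _) hf'
  have hj : ContDiff ℝ n fun p : P ↦ (p, (0 : Y)) := contDiff_id.prodMk contDiff_const
  have hfp₀ : (p₀, 0) = e (p₀, y₀) := by simp [hef, f, hfix]
  refine ⟨fun p ↦ (e.symm (p, 0)).2, _, e.open_target.preimage hj.continuous,
    mem_preimage.2 (hfp₀ ▸ e.map_source he₀),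
    contDiff_snd.comp_contDiffOn (he.contDiffOn_symm.comp hj.contDiffOn fun _ hp ↦ hp),
    by simp only [hfp₀, e.left_inv he₀], fun p hp ↦ ?_⟩
  have hinv : f (e.symm (p, 0)) = (p, 0) := hef ▸ e.right_inv hp
  obtain ⟨hfst, hsnd⟩ := Prod.mk.inj hinv
  calc (e.symm (p, 0)).2 = G (e.symm (p, 0)) := sub_eq_zero.1 hsnd
    _ = G (p, (e.symm (p, 0)).2) := congrArg G (Prod.ext hfst rfl)

end FixedPoint

end Chart

section Flow

open scoped unitInterval

variable {E : Type*} [NormedAddCommGroup E]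

theorem intervalIntegrable_IccExtend (g : C(I, E)) (a b : ℝ) :
    IntervalIntegrable (IccExtend zero_le_one g) MeasureTheory.volume a b :=
  (g.continuous.Icc_extend' (h := zero_le_one)).intervalIntegrable a b

variable [NormedSpace ℝ E]

variable (E) in
/-- The Volterra operator `g ↦ (t ↦ ∫ τ in 0..t, g τ)` on `C([0, 1], E)`. -/
noncomputable def volterraL : C(I, E) →L[ℝ] C(I, E) :=
  LinearMap.mkContinuous
    { toFun := fun g ↦
        ⟨fun t ↦ ∫ τ in (0 : ℝ)..t, IccExtend zero_le_one g τ,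
          (intervalIntegral.continuous_primitive (intervalIntegrable_IccExtend g) 0).comp
            continuous_subtype_val⟩
      map_add' := fun g h ↦ by
        ext t
        exact intervalIntegral.integral_add (intervalIntegrable_IccExtend g _ _)
          (intervalIntegrable_IccExtend h _ _)
      map_smul' := fun c g ↦ by
        ext t
        exact intervalIntegral.integral_smul c (IccExtend zero_le_one g) }
    1 fun g ↦ by
      refine (ContinuousMap.norm_le _ (by positivity)).2 fun t ↦ ?_
      calc ‖∫ τ in (0 : ℝ)..t, IccExtend zero_le_one g τ‖
          ≤ ‖g‖ * |(t : ℝ) - 0| :=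
            intervalIntegral.norm_integral_le_of_norm_le_const fun _ _ ↦ g.norm_coe_le_norm _
        _ ≤ 1 * ‖g‖ := by
            rw [mul_comm]
            gcongr
            simpa [abs_of_nonneg t.2.1] using t.2.2

theorem volterraL_apply (g : C(I, E)) (t : I) :
    volterraL E g t = ∫ τ in (0 : ℝ)..t, IccExtend zero_le_one g τ :=
  rfl

variable [CompleteSpace E]

theorem hasDerivWithinAt_IccExtend_volterraL (g : C(I, E)) (t : I) :
    HasDerivWithinAt (IccExtend zero_le_one (volterraL E g)) (g t) I t := by
  have hg : Continuous (IccExtend zero_le_one g) := g.continuous.Icc_extend'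
  have hprim : HasDerivAt (fun s ↦ ∫ τ in (0 : ℝ)..s, IccExtend zero_le_one g τ) (g t) t := by
    simpa using intervalIntegral.integral_hasDerivAt_right (intervalIntegrable_IccExtend g 0 t)
      (hg.stronglyMeasurableAtFilter _ _) hg.continuousAt
  exact hprim.hasDerivWithinAt.congr_of_mem
    (fun s hs ↦ by rw [IccExtend_of_mem _ _ hs, volterraL_apply]) t.2

theorem volterraL_eq_sub_of_hasDerivWithinAt {f : ℝ → E} {f' : C(I, E)}
    (hf : ∀ t : I, HasDerivWithinAt f (f' t) I t) (t : I) :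
    volterraL E f' t = f t - f 0 := by
  have hsub : Icc (0 : ℝ) t ⊆ I := Icc_subset_Icc_right t.2.2
  refine intervalIntegral.integral_eq_sub_of_hasDerivAt_of_le t.2.1
    (fun s hs ↦ ((hf ⟨s, hsub hs⟩).continuousWithinAt.mono hsub)) (fun s hs ↦ ?_)
    (intervalIntegrable_IccExtend f' 0 t)
  have hs' : s ∈ I := hsub (Ioo_subset_Icc_self hs)
  rw [IccExtend_of_mem _ _ hs']
  exact (hf ⟨s, hs'⟩).hasDerivAt (Icc_mem_nhds hs.1 (hs.2.trans_le t.2.2))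

/-- The map `t ↦ t • X (γ t)` on `[0, 1]`. For a solution `γ` of `γ' = s • X γ` it is the derivative
of `γ` with respect to the speed `s`. -/
def timeSMul (X : C(E, E)) (γ : C(I, E)) : C(I, E) :=
  ⟨fun t ↦ (t : ℝ) • X (γ t), by fun_prop⟩

theorem timeSMul_eq_volterraL {X : C(E, E)} {X' : C(E, E →L[ℝ] E)}
    (hX : ∀ x, HasFDerivAt X (X' x) x) {s : ℝ} {x : E} {γ : C(I, E)}
    (hγ : γ = .const I x + s • volterraL E (X.comp γ)) :
    timeSMul X γ = volterraL E (X.comp γ) +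
      s • volterraL E (pointwiseApplyL I E E (X'.comp γ) (timeSMul X γ)) := by
  have hγ' (t : I) : HasDerivWithinAt (IccExtend zero_le_one γ) (s • X (γ t)) I t := by
    refine (((hasDerivWithinAt_IccExtend_volterraL (X.comp γ) t).const_smul s).const_add
      x).congr_of_mem (fun τ _ ↦ ?_) t.2
    exact DFunLike.congr_fun hγ (projIcc 0 1 zero_le_one τ)
  have hderiv (t : I) : HasDerivWithinAt (fun τ ↦ τ • X (IccExtend zero_le_one γ τ))
      ((X.comp γ + s • pointwiseApplyL I E E (X'.comp γ) (timeSMul X γ)) t) I t := by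
    have hXγ := (hX _).comp_hasDerivWithinAt _ (hγ' t)
    refine ((hasDerivWithinAt_id _ _).smul hXγ).congr_deriv ?_
    simp [timeSMul, smul_comm s, add_comm]
  ext t
  have hftc := volterraL_eq_sub_of_hasDerivWithinAt hderiv t
  rw [zero_smul, sub_zero, IccExtend_val, map_add, map_smul] at hftc
  exact hftc.symm

theorem eq_of_eq_add_clm_apply {Y : Type*} [NormedAddCommGroup Y] [NormedSpace ℝ Y] {T : Y →L[ℝ] Y}
    (hT : ‖T‖ < 1) {b y z : Y} (hy : y = b + T y) (hz : z = b + T z) : y = z := by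
  have hsub : y - z = T (y - z) := by
    rw [map_sub]
    nth_rewrite 1 [hy, hz]
    abel
  have hle : ‖y - z‖ ≤ ‖T‖ * ‖y - z‖ := (congrArg norm hsub).le.trans (T.le_opNorm _)
  refine sub_eq_zero.1 (norm_eq_zero.1 (le_antisymm ?_ (norm_nonneg _)))
  nlinarith [norm_nonneg (y - z)]

variable {n : ℕ∞}

theorem exists_contDiffOn_volterra_solution (hn : n ≠ 0) {X : C(E, E)} (hX : ContDiff ℝ n X)
    (x₀ : E) :
    ∃ (Γ : ℝ × E → C(I, E)) (O : Set (ℝ × E)), IsOpen O ∧ (0, x₀) ∈ O ∧ ContDiffOn ℝ n Γ O ∧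
      ∀ p ∈ O, Γ p = .const I p.2 + p.1 • volterraL E (X.comp (Γ p)) := by
  have hn' : (n : WithTop ℕ∞) ≠ 0 := by exact_mod_cast hn
  let W : (ℝ × E) × C(I, E) → C(I, E) := fun q ↦ volterraL E (X.comp q.2)
  have hW : ContDiff ℝ n W :=
    (volterraL E).contDiff.comp ((contDiff_superposition hX).comp contDiff_snd)
  let const : E →L[ℝ] C(I, E) := .const ℝ I
  let G : (ℝ × E) × C(I, E) → C(I, E) := fun q ↦ const q.1.2 + q.1.1 • W q
  have hG : ContDiff ℝ n G := by fun_prop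
  have hL : HasFDerivAt G
      ((const.comp (.snd ℝ ℝ E) + (ContinuousLinearMap.fst ℝ ℝ E).smulRight
        (W ((0, x₀), const x₀))).comp (.fst ℝ (ℝ × E) C(I, E))) ((0, x₀), const x₀) := by
    let params := ContinuousLinearMap.fst ℝ (ℝ × E) C(I, E)
    refine (((const.comp (.snd ℝ ℝ E)).comp params).hasFDerivAt.add
      (((ContinuousLinearMap.fst ℝ ℝ E).comp params).hasFDerivAt.smul
        (hW.differentiable hn' _).hasFDerivAt)).congr_fderiv ?_
    ext <;> simp [params]
  obtain ⟨Γ, O, hO, hp₀, hΓ, -, hfix⟩ :=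
    exists_contDiffOn_fixedPoint hG hn' (by simp [G]) hL
  exact ⟨Γ, O, hO, hp₀, hΓ, hfix⟩

/- Both sides solve the linear equation obtained by differentiating the Volterra equation in the
first variable, and that equation has at most one solution. -/
theorem fderiv_volterra_solution {X : C(E, E)} {X' : C(E, E →L[ℝ] E)}
    (hX : ∀ x, HasFDerivAt X (X' x) x) {Γ : ℝ × E → C(I, E)} {p : ℝ × E}
    (hΓ : DifferentiableAt ℝ Γ p)
    (hsol : ∀ᶠ q in 𝓝 p, Γ q = .const I q.2 + q.1 • volterraL E (X.comp (Γ q)))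
    (hsmall : ‖p.1 • (volterraL E).comp (pointwiseApplyL I E E (X'.comp (Γ p)))‖ < 1) :
    fderiv ℝ Γ p (1, 0) = timeSMul X (Γ p) := by
  let const : E →L[ℝ] C(I, E) := .const ℝ I
  have hXΓ := (hasFDerivAt_superposition hX (Γ p)).comp p hΓ.hasFDerivAt
  have hrhs := (const.hasFDerivAt.comp p hasFDerivAt_snd).add
    (hasFDerivAt_fst.smul ((volterraL E).hasFDerivAt.comp p hXΓ))
  have hderiv := hΓ.hasFDerivAt.unique (hrhs.congr_of_eventuallyEq hsol)
  refine eq_of_eq_add_clm_apply hsmall ?_ (timeSMul_eq_volterraL hX hsol.self_of_nhds)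
  nth_rewrite 1 [hderiv]
  simp [add_comm]

theorem exists_contDiffOn_flow (hn : n ≠ 0) {X : E → E} (hX : ContDiff ℝ n X) (x₀ : E) :
    ∃ (F : ℝ × E → E) (O : Set (ℝ × E)), IsOpen O ∧ (0, x₀) ∈ O ∧ ContDiffOn ℝ n F O ∧
      (∀ x, (0, x) ∈ O → F (0, x) = x) ∧ ∀ p ∈ O, fderiv ℝ F p (1, 0) = X (F p) := by
  have hn' : (n : WithTop ℕ∞) ≠ 0 := by exact_mod_cast hn
  let Xc : C(E, E) := ⟨X, hX.continuous⟩
  let X' : C(E, E →L[ℝ] E) := ⟨fderiv ℝ X, hX.continuous_fderiv hn'⟩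
  obtain ⟨Γ, O, hO, hp₀, hΓ, hsol⟩ := exists_contDiffOn_volterra_solution hn (X := Xc) hX x₀
  let T : ℝ × E → C(I, E) →L[ℝ] C(I, E) := fun p ↦
    p.1 • (volterraL E).comp (pointwiseApplyL I E E (X'.comp (Γ p)))
  have hT : ContinuousOn T O := by
    have hX'Γ : ContinuousOn (fun p ↦ X'.comp (Γ p)) O :=
      X'.continuous_postcomp.comp_continuousOn hΓ.continuousOn
    fun_prop
  have hTnorm : ContinuousOn (fun p ↦ ‖T p‖) O :=
    (continuous_norm (E := C(I, E) →L[ℝ] C(I, E))).comp_continuousOn hT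
  have hT₀ : ‖T (0, x₀)‖ < 1 := by
    have hzero : T (0, x₀) = 0 := ContinuousLinearMap.ext fun g ↦ zero_smul ℝ (volterraL E _)
    rw [hzero, ContinuousLinearMap.opNorm_zero]
    exact one_pos
  have hdiff {p : ℝ × E} (hp : p ∈ O) : DifferentiableAt ℝ Γ p :=
    (hΓ.contDiffAt (hO.mem_nhds hp)).differentiableAt hn'
  let ev : C(I, E) →L[ℝ] E := ContinuousMap.evalCLM ℝ 1
  refine ⟨fun p ↦ ev (Γ p), O ∩ (fun p ↦ ‖T p‖) ⁻¹' Iio 1,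
    hTnorm.isOpen_inter_preimage hO isOpen_Iio, ⟨hp₀, hT₀⟩,
    ev.contDiff.comp_contDiffOn (hΓ.mono inter_subset_left), fun x hx ↦ ?_, fun p hp ↦ ?_⟩
  · calc ev (Γ (0, x)) = ev (.const I x + (0 : ℝ) • volterraL E (Xc.comp (Γ (0, x)))) :=
          congrArg ev (hsol _ hx.1)
      _ = x := by simp [ev]
  · have htime : fderiv ℝ Γ p (1, 0) = timeSMul Xc (Γ p) :=
      fderiv_volterra_solution (fun x ↦ (hX.differentiable hn' x).hasFDerivAt) (hdiff hp.1)
        (eventually_of_mem (hO.mem_nhds hp.1) hsol) hp.2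
    have hev : fderiv ℝ (fun p ↦ ev (Γ p)) p = ev.comp (fderiv ℝ Γ p) :=
      (ev.hasFDerivAt.comp p (hdiff hp.1).hasFDerivAt).fderiv
    rw [hev, ContinuousLinearMap.comp_apply, htime]
    simp [timeSMul, ev, Xc]

end Flow

section FlowBox

theorem exists_contDiff_eventuallyEq {E F : Type*} [NormedAddCommGroup E] [NormedSpace ℝ E]
    [HasContDiffBump E] [NormedAddCommGroup F] [NormedSpace ℝ F] {n : ℕ∞} {U : Set E}
    (hU : IsOpen U) {f : E → F} (hf : ContDiffOn ℝ n f U) {x : E} (hx : x ∈ U) :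
    ∃ g : E → F, ContDiff ℝ n g ∧ g =ᶠ[𝓝 x] f := by
  obtain ⟨r, hr, hrU⟩ := Metric.nhds_basis_closedBall.mem_iff.1 (hU.mem_nhds hx)
  let φ : ContDiffBump x := ⟨r / 2, r, half_pos hr, half_lt_self hr⟩
  refine ⟨fun y ↦ φ y • f y, contDiff_iff_contDiffAt.2 fun y ↦ ?_, ?_⟩
  · by_cases hy : y ∈ Metric.closedBall x r
    · exact φ.contDiffAt.smul (hf.contDiffAt (hU.mem_nhds (hrU hy)))
    · refine contDiffAt_const (c := (0 : F)) |>.congr_of_eventuallyEq ?_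
      filter_upwards [Metric.isClosed_closedBall.isOpen_compl.mem_nhds hy] with z hz
      have hzr : r < dist z x := not_le.1 hz
      rw [φ.zero_of_le_dist hzr.le, zero_smul]
  · filter_upwards [φ.eventuallyEq_one] with y hy
    rw [hy, Pi.one_apply, one_smul]

variable {E : Type*} [NormedAddCommGroup E] [NormedSpace ℝ E]

theorem fderiv_apply_zero_prodMk {F : ℝ × E → E} {x : E} (hF : DifferentiableAt ℝ F (0, x))
    (hF₀ : ∀ᶠ z in 𝓝 x, F (0, z) = z) (w : E) : fderiv ℝ F (0, x) (0, w) = w := by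
  have hslice : HasFDerivAt (fun z ↦ F (0, z))
      ((fderiv ℝ F (0, x)).comp (ContinuousLinearMap.inr ℝ ℝ E)) x :=
    hF.hasFDerivAt.comp x (hasFDerivAt_prodMk_right _ _)
  have hid : HasFDerivAt (fun z ↦ F (0, z)) (ContinuousLinearMap.id ℝ E) x :=
    (hasFDerivAt_id x).congr_of_eventuallyEq hF₀
  exact DFunLike.congr_fun (hslice.unique hid) w

/- With `φ v = 1` and `L v = X x₀`, flow for time `φ y` from the point `x₀ + L (y - φ y • v)` of
the hyperplane through `x₀` complementary to `X x₀`. -/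
theorem exists_isContDiffChart_flowBox [CompleteSpace E] {n : ℕ∞} (hn : n ≠ 0) {X : E → E}
    (hX : ContDiff ℝ n X) {x₀ : E} (hX₀ : X x₀ ≠ 0) {v : E} (hv : v ≠ 0) :
    ∃ e : OpenPartialHomeomorph E E, IsContDiffChart n e ∧ 0 ∈ e.source ∧ e 0 = x₀ ∧
      ∀ y ∈ e.source, fderiv ℝ e y v = X (e y) := by
  have hn' : (n : WithTop ℕ∞) ≠ 0 := by exact_mod_cast hn
  obtain ⟨F, O, hO, hp₀, hF, hF₀, hFX⟩ := exists_contDiffOn_flow hn hX x₀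
  obtain ⟨φ, hφ⟩ := SeparatingDual.exists_eq_one (R := ℝ) hv
  obtain ⟨L, hL⟩ := SeparatingDual.exists_continuousLinearEquiv_apply_eq (R := ℝ) hv hX₀
  let M : E →L[ℝ] ℝ × E := φ.prod ((L : E →L[ℝ] E).comp (.id ℝ E - φ.smulRight v))
  have hM (w : E) : M w = φ w • (1, 0) + (0, L w - φ w • X x₀) := by simp [M, hL]
  have hMv : M v = (1, 0) := by simp [hM, hφ, hL]
  let q : E → ℝ × E := fun y ↦ (0, x₀) + M y
  have hq : ContDiff ℝ n q := contDiff_const.add M.contDiff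
  have hq₀ : q 0 = (0, x₀) := by simp [q]
  have hOq : IsOpen (q ⁻¹' O) := hO.preimage hq.continuous
  have h₀ : 0 ∈ q ⁻¹' O := by rwa [mem_preimage, hq₀]
  have hdiff {p : ℝ × E} (hp : p ∈ O) : DifferentiableAt ℝ F p :=
    (hF.contDiffAt (hO.mem_nhds hp)).differentiableAt hn'
  have hderiv {y : E} (hy : q y ∈ O) : HasFDerivAt (F ∘ q) ((fderiv ℝ F (q y)).comp M) y :=
    (hdiff hy).hasFDerivAt.comp y (M.hasFDerivAt.const_add _)
  have hslice : ∀ᶠ z in 𝓝 x₀, F (0, z) = z :=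
    eventually_of_mem ((hO.preimage (Continuous.prodMk_right 0)).mem_nhds hp₀) hF₀
  have hderiv₀ : HasFDerivAt (F ∘ q) (L : E →L[ℝ] E) 0 := by
    refine (hderiv h₀).congr_fderiv (ContinuousLinearMap.ext fun w ↦ ?_)
    rw [ContinuousLinearMap.comp_apply, hq₀, hM, map_add, map_smul, hFX _ hp₀, hF₀ _ hp₀,
      fderiv_apply_zero_prodMk (hdiff hp₀) hslice]
    exact add_sub_cancel _ _
  obtain ⟨e, he, he₀, heO, hee⟩ := exists_isContDiffChart_of_hasFDerivAt_equiv hOq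
    (hF.comp hq.contDiffOn fun _ hy ↦ hy) hn' h₀ hderiv₀
  refine ⟨e, he, he₀, ?_, fun y hy ↦ ?_⟩
  · rw [hee, Function.comp_apply, hq₀, hF₀ _ hp₀]
  · rw [hee, (hderiv (heO hy)).fderiv, ContinuousLinearMap.comp_apply, hMv, hFX _ (heO hy)]
    rfl

end FlowBox

section Directional

variable {E F : Type*} [NormedAddCommGroup E] [NormedSpace ℝ E] [NormedAddCommGroup F]
  [NormedSpace ℝ F] {v : E}

theorem apply_add_eq_of_fderiv_apply_eq_zero {S : Set E} (hS : Convex ℝ S) {h : E → F}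
    (hh : ∀ z ∈ S, DifferentiableAt ℝ h z) (hv : ∀ z ∈ S, fderiv ℝ h z v = 0) {y : E} (hy : y ∈ S)
    (hyv : y + v ∈ S) : h (y + v) = h y := by
  have hderiv (s : ℝ) (hs : s ∈ Icc (0 : ℝ) 1) : HasDerivAt (fun s : ℝ ↦ h (y + s • v)) 0 s := by
    have hmem : y + s • v ∈ S := hS.add_smul_mem hy hyv hs
    have hline : HasDerivAt (fun s : ℝ ↦ y + s • v) v s := by
      simpa using ((hasDerivAt_id s).smul_const v).const_add y
    exact hv _ hmem ▸ (hh _ hmem).hasFDerivAt.comp_hasDerivAt s hline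
  have hle := norm_image_sub_le_of_norm_deriv_le_segment_01' (C := 0)
    (fun s hs ↦ (hderiv s hs).hasDerivWithinAt) (fun _ _ ↦ norm_zero.le)
  simpa [sub_eq_zero] using hle

theorem fderiv_apply_eq_zero_of_forall_add_smul {f : E → F} {y : E} (hf : DifferentiableAt ℝ f y)
    (hv : ∀ s : ℝ, f (y + s • v) = f y) : fderiv ℝ f y v = 0 := by
  rw [← hf.lineDeriv_eq_fderiv, lineDeriv, funext hv, deriv_const]

variable {φ : E →L[ℝ] ℝ} {n : ℕ∞}

theorem exists_contDiff_eventuallyEq_of_fderiv_apply_eq_zero [HasContDiffBump E] (hφ : φ v = 1)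
    (hn : n ≠ 0) {h : E → F} {U : Set E} (hU : IsOpen U) (h₀ : 0 ∈ U) (hh : ContDiffOn ℝ n h U)
    (hv : ∀ᶠ y in 𝓝 0, fderiv ℝ h y v = 0) :
    ∃ g : E → F, ContDiff ℝ n g ∧ g =ᶠ[𝓝 0] h ∧ ∀ (y : E) (s : ℝ), g (y + s • v) = g y := by
  obtain ⟨g, hg, hgh⟩ := exists_contDiff_eventuallyEq hU hh h₀
  let proj : E →L[ℝ] E := .id ℝ E - φ.smulRight v
  have hproj (y : E) : proj y = y + (-φ y) • v := by simp [proj, sub_eq_add_neg]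
  have hproj₀ : Tendsto proj (𝓝 0) (𝓝 0) := by simpa using proj.continuous.tendsto 0
  have hdiff : ∀ᶠ y in 𝓝 0, DifferentiableAt ℝ h y := eventually_of_mem (hU.mem_nhds h₀) fun y hy ↦
    (hh.contDiffAt (hU.mem_nhds hy)).differentiableAt (by exact_mod_cast hn)
  obtain ⟨r, hr, hball⟩ := Metric.eventually_nhds_iff_ball.1 (hdiff.and hv)
  have hmem : ∀ᶠ y in 𝓝 (0 : E), y ∈ Metric.ball 0 r := Metric.ball_mem_nhds 0 hr
  refine ⟨g ∘ proj, hg.comp proj.contDiff, ?_, fun y s ↦ ?_⟩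
  · filter_upwards [hproj₀.eventually hgh, hmem, hproj₀.eventually hmem] with y hgy hy hpy
    rw [Function.comp_apply, hgy, hproj]
    refine apply_add_eq_of_fderiv_apply_eq_zero (convex_ball 0 r)
      (fun z hz ↦ (hball z hz).1) (fun z hz ↦ ?_) hy (hproj y ▸ hpy)
    rw [map_smul, (hball z hz).2, smul_zero]
  · have hshift : proj (y + s • v) = proj y := by
      simp only [hproj, map_add, map_smul, hφ, smul_eq_mul, mul_one]
      module
    rw [Function.comp_apply, hshift, Function.comp_apply]

/-- The primitive of `h` in the direction `v` that vanishes on the hyperplane `φ = 0`, where `φ` is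
a functional with `φ v = 1`: the integral of `h` along the segment that joins the projection
`y - φ y • v` of `y` to this hyperplane to `y`. -/
noncomputable def primitiveAlong (φ : E →L[ℝ] ℝ) (v : E) (h : E → F) (y : E) : F :=
  ∫ τ in (0 : ℝ)..φ y, h (y + (τ - φ y) • v)

theorem primitiveAlong_add_smul {h : E → F} {e : E} (he : φ e = 0)
    (hh : ∀ (y : E) (s : ℝ), h (y + s • e) = h y) (y : E) (s : ℝ) :
    primitiveAlong φ v h (y + s • e) = primitiveAlong φ v h y := by
  simp only [primitiveAlong, map_add, map_smul, he, smul_zero, add_zero,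
    add_right_comm y (s • e), hh]

theorem hasLineDerivAt_primitiveAlong [CompleteSpace F] (hφ : φ v = 1) {h : E → F}
    (hh : Continuous h) (y : E) : HasLineDerivAt ℝ (primitiveAlong φ v h) (h y) y v := by
  have hline : Continuous fun τ : ℝ ↦ h (y + (τ - φ y) • v) := by fun_prop
  have hftc : HasDerivAt (fun s ↦ ∫ τ in (0 : ℝ)..s, h (y + (τ - φ y) • v)) (h y) (φ y + 0) := by
    simpa using (hline.integral_hasStrictDerivAt 0 (φ y + 0)).hasDerivAt
  refine (hftc.comp_const_add (φ y) 0).congr_of_eventuallyEq (.of_forall fun s ↦ ?_)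
  have hshift (τ : ℝ) : y + s • v + (τ - (φ y + s)) • v = y + (τ - φ y) • v := by module
  simp only [primitiveAlong, map_add, map_smul, hφ, smul_eq_mul, mul_one, hshift]

theorem contDiff_primitiveAlong [CompleteSpace F] {h : E → F} (hh : ContDiff ℝ n h) :
    ContDiff ℝ n (primitiveAlong φ v h) := by
  let I := Icc (0 : ℝ) 1
  let hc : C(E, F) := ⟨h, hh.continuous⟩
  let ray : C(I, E) := ⟨fun t ↦ ((t : ℝ) - 1) • v, by fun_prop⟩
  let path : E →L[ℝ] C(I, E) := .const ℝ I + φ.smulRight ray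
  have hpath (y : E) (t : I) : path y t = y + (φ y * t - φ y) • v := by
    rw [← mul_sub_one, ← smul_smul]
    rfl
  let ev : C(I, F) →L[ℝ] F := ContinuousMap.evalCLM ℝ 1
  have hprim : primitiveAlong φ v h = fun y ↦ φ y • ev (volterraL F (hc.comp (path y))) := by
    funext y
    have hscale := intervalIntegral.smul_integral_comp_mul_left (a := 0) (b := 1)
      (fun τ ↦ h (y + (τ - φ y) • v)) (φ y)
    rw [mul_zero, mul_one] at hscale
    refine hscale.symm.trans (congrArg _ (intervalIntegral.integral_congr fun τ hτ ↦ ?_))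
    rw [uIcc_of_le zero_le_one] at hτ
    rw [IccExtend_of_mem _ _ hτ, ContinuousMap.comp_apply, hpath, ContinuousMap.coe_mk]
  rw [hprim]
  exact φ.contDiff.smul (ev.contDiff.comp ((volterraL F).contDiff.comp
    ((contDiff_superposition (f := hc) hh).comp path.contDiff)))

end Directional

section VolumeForm

section Algebra

variable {R M N : Type*} [CommRing R] [AddCommGroup M] [Module R M] [AddCommGroup N] [Module R N]
  {m : ℕ}

theorem alternatingMap_ext_removeNth {f g : M [⋀^Fin m]→ₗ[R] N}
    (b : Module.Basis (Fin (m + 1)) R M)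
    (h : ∀ i : Fin (m + 1), f (i.removeNth b) = g (i.removeNth b)) : f = g := by
  refine b.ext_alternating fun v hv ↦ ?_
  obtain ⟨i, hi⟩ : ∃ i, i ∉ range v := by
    by_contra! hsurj
    simpa using Fintype.card_le_of_surjective v hsurj
  choose σ hσ using fun j ↦ Fin.exists_succAbove_eq fun hj : v j = i ↦ hi ⟨j, hj⟩
  have hσ_inj : Function.Injective σ := fun j k hjk ↦ hv (by rw [← hσ j, ← hσ k, hjk])
  let τ : Equiv.Perm (Fin m) := .ofBijective σ (Finite.injective_iff_bijective.1 hσ_inj)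
  have hvτ : (fun j ↦ b (v j)) = i.removeNth b ∘ τ := funext fun j ↦ congrArg b (hσ j).symm
  rw [hvτ, f.map_perm, g.map_perm, h]

theorem det_cons_removeNth (b : Module.Basis (Fin (m + 1)) R M) (i j : Fin (m + 1)) :
    b.det (Fin.cons (b j) (i.removeNth b) : Fin (m + 1) → M) =
      if i = j then (-1) ^ (i : ℕ) else 0 := by
  split_ifs with hij
  · subst hij
    have hswap := b.det.neg_one_pow_smul_map_insertNth i (b i) (i.removeNth b)
    rw [Fin.insertNth_self_removeNth, b.det_self] at hswap
    exact hswap.symm.trans (by simp)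
  · obtain ⟨k, hk⟩ := Fin.exists_succAbove_eq (Ne.symm hij)
    exact b.det.map_eq_zero_of_eq _ (by simp [Fin.removeNth, hk]) (Fin.succ_ne_zero k).symm

end Algebra

variable {𝕜 E : Type*} [NontriviallyNormedField 𝕜] [NormedAddCommGroup E] [NormedSpace 𝕜 E]

section DualVector

variable {m : ℕ} (b : Module.Basis (Fin (m + 1)) 𝕜 E)

/-- The vector `X` whose contraction with `volumeForm b` is a given form of codimension one,
see `volumeForm_curryLeft_dualVector`. -/
noncomputable def dualVector : (E [⋀^Fin m]→L[𝕜] 𝕜) →L[𝕜] E :=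
  ∑ i : Fin (m + 1), ((-1 : 𝕜) ^ (i : ℕ) •
    ContinuousAlternatingMap.apply 𝕜 E 𝕜 (i.removeNth b)).smulRight (b i)

theorem dualVector_apply (α : E [⋀^Fin m]→L[𝕜] 𝕜) :
    dualVector b α = ∑ i : Fin (m + 1), ((-1) ^ (i : ℕ) * α (i.removeNth b)) • b i := by
  simp [dualVector]

end DualVector

variable [CompleteSpace 𝕜]

section Basis

variable {ι : Type*} [Fintype ι] [DecidableEq ι] (b : Module.Basis ι 𝕜 E)

/-- The determinant with respect to a basis of a finite-dimensional normed space, as a continuous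
alternating form: the constant volume form `dx₁ ∧ ⋯ ∧ dxₙ`. -/
noncomputable def volumeForm : E [⋀^ι]→L[𝕜] 𝕜 :=
  { b.det with
    cont := by
      have := b.finiteDimensional_of_finite
      have hcoord (i : ι) : Continuous (b.coord i) := LinearMap.continuous_of_finiteDimensional _
      refine Continuous.matrix_det (continuous_matrix fun i j ↦ ?_)
      exact (hcoord i).comp (continuous_apply j) }

theorem volumeForm_apply (v : ι → E) : volumeForm b v = b.det v :=
  rfl

theorem volumeForm_compContinuousLinearMap (A : E →L[𝕜] E) :
    (volumeForm b).compContinuousLinearMap A = A.det • volumeForm b := by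
  ext v
  exact b.det_comp A v

theorem contDiff_det [FiniteDimensional 𝕜 E] {n : WithTop ℕ∞} :
    ContDiff 𝕜 n fun A : E →L[𝕜] E ↦ A.det := by
  let b := Module.finBasis 𝕜 E
  have hdet (A : E →L[𝕜] E) : A.det = volumeForm b fun i ↦ A (b i) := by
    have hpull := DFunLike.congr_fun (volumeForm_compContinuousLinearMap b A) ⇑b
    exact (hpull.trans (by simp [volumeForm_apply, b.det_self])).symm
  rw [funext hdet]
  exact (volumeForm b).toContinuousMultilinearMap.contDiff.comp
    (contDiff_pi.2 fun i ↦ contDiff_id.clm_apply contDiff_const)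

end Basis

variable {m : ℕ} (b : Module.Basis (Fin (m + 1)) 𝕜 E)

theorem volumeForm_curryLeft_apply_removeNth (i j : Fin (m + 1)) :
    (volumeForm b).curryLeft (b j) (i.removeNth b) = if i = j then (-1) ^ (i : ℕ) else 0 :=
  det_cons_removeNth b i j

theorem volumeForm_curryLeft_compContinuousLinearMap (A : E →L[𝕜] E) (w : E) :
    ((volumeForm b).curryLeft (A w)).compContinuousLinearMap A =
      A.det • (volumeForm b).curryLeft w := by
  rw [← ContinuousAlternatingMap.curryLeft_compContinuousLinearMap,
    volumeForm_compContinuousLinearMap, ContinuousAlternatingMap.curryLeft_smul, smul_apply]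

theorem volumeForm_curryLeft_dualVector (α : E [⋀^Fin m]→L[𝕜] 𝕜) :
    (volumeForm b).curryLeft (dualVector b α) = α := by
  refine ContinuousAlternatingMap.toAlternatingMap_injective
    (alternatingMap_ext_removeNth b fun i ↦ ?_)
  have hterm (j : Fin (m + 1)) :
      (((-1) ^ (j : ℕ) * α (j.removeNth b)) • (volumeForm b).curryLeft (b j)) (i.removeNth b) =
        if i = j then α (i.removeNth b) else 0 := by
    rw [ContinuousAlternatingMap.smul_apply, volumeForm_curryLeft_apply_removeNth]
    split_ifs with hij
    · simp [hij, mul_right_comm, ← mul_pow]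
    · exact smul_zero _
  simp only [ContinuousAlternatingMap.coe_toAlternatingMap, dualVector_apply, map_sum, map_smul,
    ContinuousAlternatingMap.sum_apply, hterm, Finset.sum_ite_eq, Finset.mem_univ, if_true]

theorem dualVector_ne_zero {α : E [⋀^Fin m]→L[𝕜] 𝕜} (hα : α ≠ 0) : dualVector b α ≠ 0 := by
  intro hzero
  rw [← volumeForm_curryLeft_dualVector b α, hzero, map_zero] at hα
  exact hα rfl

theorem extDeriv_smul_volumeForm_curryLeft_apply {h : E → 𝕜} {y : E} (hh : DifferentiableAt 𝕜 h y)
    (j : Fin (m + 1)) :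
    extDeriv (fun z ↦ h z • (volumeForm b).curryLeft (b j)) y b = fderiv 𝕜 h y (b j) := by
  have hcoeff (i : Fin (m + 1)) :
      (-1 : ℤ) ^ (i : ℕ) •
          fderiv 𝕜 (fun z ↦ (h z • (volumeForm b).curryLeft (b j)) (i.removeNth b)) y (b i) =
        if i = j then fderiv 𝕜 h y (b j) else 0 := by
    simp only [ContinuousAlternatingMap.smul_apply, volumeForm_curryLeft_apply_removeNth,
      smul_eq_mul, fderiv_mul_const hh]
    split_ifs with hij
    · simp [hij, ← mul_assoc, ← mul_pow]
    · simp
  rw [extDeriv_apply (hh.smul_const _), Finset.sum_congr rfl fun i _ ↦ hcoeff i,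
    Finset.sum_ite_eq' _ j, if_pos (Finset.mem_univ j)]

end VolumeForm

section NormalForm

section Rescaling

variable {E : Type*} [NormedAddCommGroup E] [NormedSpace ℝ E] {v w : E} {ψ : E →L[ℝ] ℝ} {n : ℕ∞}

theorem det_id_add_smulRight [FiniteDimensional ℝ E] (θ : E →L[ℝ] ℝ) (w : E) :
    (ContinuousLinearMap.id ℝ E + θ.smulRight w).det = 1 + θ w :=
  LinearMap.transvection.det (θ : E →ₗ[ℝ] ℝ) w

/- The chart is `y ↦ y + (p y - ψ y) • w`, where `p` is a primitive of `h` in the direction `w`: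
it replaces the coordinate `ψ` by `p`. -/
theorem exists_isContDiffChart_det_fderiv_eq [FiniteDimensional ℝ E] (hn : n ≠ 0)
    (hψv : ψ v = 0) (hψw : ψ w = 1) (hv : v ≠ 0) {h : E → ℝ} {U : Set E} (hU : IsOpen U)
    (h₀ : 0 ∈ U) (hh : ContDiffOn ℝ n h U) (hh₀ : h 0 ≠ 0) (hhv : ∀ᶠ y in 𝓝 0, fderiv ℝ h y v = 0) :
    ∃ e : OpenPartialHomeomorph E E, IsContDiffChart n e ∧ 0 ∈ e.source ∧
      ∀ᶠ y in 𝓝 0, fderiv ℝ e y v = v ∧ (fderiv ℝ e y).det = h y := by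
  have hn' : (n : WithTop ℕ∞) ≠ 0 := by exact_mod_cast hn
  obtain ⟨φ, hφ⟩ := SeparatingDual.exists_eq_one (R := ℝ) hv
  obtain ⟨g, hg, hgh, hgv⟩ :=
    exists_contDiff_eventuallyEq_of_fderiv_apply_eq_zero hφ hn hU h₀ hh hhv
  let p : E → ℝ := primitiveAlong ψ w g
  have hp : ContDiff ℝ n p := contDiff_primitiveAlong hg
  have hpdiff : Differentiable ℝ p := hp.differentiable hn'
  have hpv (y : E) : fderiv ℝ p y v = 0 :=
    fderiv_apply_eq_zero_of_forall_add_smul (hpdiff y) (primitiveAlong_add_smul hψv hgv y)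
  have hpw (y : E) : fderiv ℝ p y w = g y := by
    rw [← (hpdiff y).lineDeriv_eq_fderiv]
    exact (hasLineDerivAt_primitiveAlong hψw hg.continuous y).lineDeriv
  let f : E → E := fun y ↦ y + (p y - ψ y) • w
  have hf : ContDiff ℝ n f := contDiff_id.add ((hp.sub ψ.contDiff).smul contDiff_const)
  have hderiv (y : E) : HasFDerivAt f (.id ℝ E + (fderiv ℝ p y - ψ).smulRight w) y :=
    (hasFDerivAt_id y).add (((hpdiff y).hasFDerivAt.sub ψ.hasFDerivAt).smul_const w)
  have hdet (y : E) : (fderiv ℝ f y).det = g y := by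
    rw [(hderiv y).fderiv, det_id_add_smulRight, sub_apply, hpw, hψw, add_sub_cancel]
  have hdet₀ : (fderiv ℝ f 0).det ≠ 0 := by rwa [hdet, hgh.self_of_nhds]
  obtain ⟨e, he, he₀, -, hef⟩ := exists_isContDiffChart_of_hasFDerivAt_equiv isOpen_univ
    hf.contDiffOn hn' (mem_univ 0)
    (f' := (fderiv ℝ f 0).toContinuousLinearEquivOfDetNeZero hdet₀)
    (hderiv 0).differentiableAt.hasFDerivAt
  refine ⟨e, he, he₀, ?_⟩
  filter_upwards [hgh] with y hy
  rw [hef, hdet, (hderiv y).fderiv]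
  exact ⟨by simp [hpv, hψv], hy⟩

end Rescaling

section Pullback

variable {E F G : Type*} [NormedAddCommGroup E] [NormedSpace ℝ E] [NormedAddCommGroup F]
  [NormedSpace ℝ F] [NormedAddCommGroup G] [NormedSpace ℝ G] {m : ℕ}

theorem extDeriv_pullback_eq_zero {α : F → F [⋀^Fin m]→L[ℝ] ℝ} {f : E → F} {y : E}
    (hα : DifferentiableAt ℝ α (f y)) (hf : ContDiffAt ℝ 2 f y) (hclosed : extDeriv α (f y) = 0) :
    extDeriv (fun z ↦ (α (f z)).compContinuousLinearMap (fderiv ℝ f z)) y = 0 := by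
  rw [extDeriv_pullback hα hf minSmoothness_of_isRCLikeNormedField.le, hclosed]
  rfl

theorem IsContDiffChart.eventually_eq_compContinuousLinearMap_symm_trans {n : WithTop ℕ∞}
    {e : OpenPartialHomeomorph E F} {e' : OpenPartialHomeomorph E G} (he : IsContDiffChart n e)
    (he' : IsContDiffChart n e') (hn : n ≠ 0) {z₀ : E} (hz₀ : z₀ ∈ e.source) (hz₀' : z₀ ∈ e'.source)
    {α : F → F [⋀^Fin m]→L[ℝ] ℝ} {c : G [⋀^Fin m]→L[ℝ] ℝ}
    (hpull : ∀ᶠ z in 𝓝 z₀, (α (e z)).compContinuousLinearMap (fderiv ℝ e z) =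
      c.compContinuousLinearMap (fderiv ℝ e' z)) :
    ∀ᶠ y in 𝓝 (e z₀), α y = c.compContinuousLinearMap (fderiv ℝ (e.symm.trans e') y) := by
  have htends : Tendsto e.symm (𝓝 (e z₀)) (𝓝 z₀) := e.tendsto_symm hz₀
  filter_upwards [e.open_target.mem_nhds (e.map_source hz₀), htends.eventually hpull,
    htends.eventually (e'.open_source.mem_nhds hz₀')] with y hy hpull_y hy'
  have hright : (fderiv ℝ e (e.symm y)).comp (fderiv ℝ e.symm y) = .id ℝ F := by
    simpa using he.symm.fderiv_symm_comp_fderiv hn hy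
  rw [e.right_inv hy] at hpull_y
  rw [OpenPartialHomeomorph.coe_trans, fderiv_comp y (he'.differentiableAt hn hy')
    (he.symm.differentiableAt hn hy)]
  ext v
  have happly := DFunLike.congr_fun hpull_y fun i ↦ fderiv ℝ e.symm y (v i)
  have hcancel (w : F) : fderiv ℝ e (e.symm y) (fderiv ℝ e.symm y w) = w :=
    DFunLike.congr_fun hright w
  simpa [Function.comp_def, hcancel] using happly

end Pullback

section CodimOne

open scoped ContDiff

variable {E : Type*} [NormedAddCommGroup E] [NormedSpace ℝ E] {m : ℕ} {U : Set E} {x : E}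

theorem exists_isContDiffChart_pullback_eq_smul (b : Module.Basis (Fin (m + 1)) ℝ E) {n : ℕ∞}
    (hn : n ≠ 0) {α : E → E [⋀^Fin m]→L[ℝ] ℝ} (hU : IsOpen U) (hα : ContDiffOn ℝ n α U) (hx : x ∈ U)
    (hαx : α x ≠ 0) {v : E} (hv : v ≠ 0) :
    ∃ e : OpenPartialHomeomorph E E, IsContDiffChart n e ∧ 0 ∈ e.source ∧ e 0 = x ∧
      ∀ᶠ y in 𝓝 0, (α (e y)).compContinuousLinearMap (fderiv ℝ e y) =
        (fderiv ℝ e y).det • (volumeForm b).curryLeft v := by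
  have := b.finiteDimensional_of_finite
  have := FiniteDimensional.complete ℝ E
  obtain ⟨α', hα', heq⟩ := exists_contDiff_eventuallyEq hU hα hx
  obtain ⟨e, he, he₀, he0, hev⟩ := exists_isContDiffChart_flowBox hn
    ((dualVector b).contDiff.comp hα') (dualVector_ne_zero b (heq.self_of_nhds.symm ▸ hαx)) hv
  refine ⟨e, he, he₀, he0, ?_⟩
  have htends : Tendsto e (𝓝 0) (𝓝 x) := he0 ▸ e.continuousAt he₀
  filter_upwards [e.open_source.mem_nhds he₀, htends.eventually heq] with y hy hαy
  rw [← volumeForm_curryLeft_compContinuousLinearMap, hev y hy, Function.comp_apply,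
    volumeForm_curryLeft_dualVector, hαy]

theorem fderiv_apply_eq_zero_of_pullback_eq_smul (b : Module.Basis (Fin (m + 1)) ℝ E)
    (j : Fin (m + 1)) {α : E → E [⋀^Fin m]→L[ℝ] ℝ} {f : E → E} {h : E → ℝ} {y : E}
    (hα : DifferentiableAt ℝ α (f y)) (hf : ContDiffAt ℝ 2 f y) (hh : DifferentiableAt ℝ h y)
    (hpull : ∀ᶠ z in 𝓝 y, (α (f z)).compContinuousLinearMap (fderiv ℝ f z) =
      h z • (volumeForm b).curryLeft (b j))
    (hclosed : extDeriv α (f y) = 0) : fderiv ℝ h y (b j) = 0 := by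
  rw [← extDeriv_smul_volumeForm_curryLeft_apply b hh,
    ← Filter.EventuallyEq.extDeriv_eq hpull, extDeriv_pullback_eq_zero hα hf hclosed]
  rfl

theorem IsContDiffChart.det_fderiv_ne_zero {n : WithTop ℕ∞} {e : OpenPartialHomeomorph E E}
    (he : IsContDiffChart n e) (hn : n ≠ 0) {y : E} (hy : y ∈ e.source) :
    (fderiv ℝ e y).det ≠ 0 := by
  obtain ⟨A, hA⟩ := he.exists_hasFDerivAt_equiv hn hy
  exact hA.fderiv ▸ A.toLinearEquiv.isUnit_det'.ne_zero

theorem exists_isContDiffChart_pullback_eq_smul_of_extDeriv_eq_zero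
    (b : Module.Basis (Fin (m + 1)) ℝ E) (j : Fin (m + 1)) {α : E → E [⋀^Fin m]→L[ℝ] ℝ}
    (hU : IsOpen U) (hα : ContDiffOn ℝ ∞ α U) (hx : x ∈ U) (hαx : α x ≠ 0)
    (hclosed : ∀ y ∈ U, extDeriv α y = 0) :
    ∃ (e : OpenPartialHomeomorph E E) (h : E → ℝ), IsContDiffChart ∞ e ∧ 0 ∈ e.source ∧ e 0 = x ∧
      ContDiffOn ℝ ∞ h e.source ∧ h 0 ≠ 0 ∧ ∀ᶠ y in 𝓝 0, fderiv ℝ h y (b j) = 0 ∧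
        (α (e y)).compContinuousLinearMap (fderiv ℝ e y) =
          h y • (volumeForm b).curryLeft (b j) := by
  have := b.finiteDimensional_of_finite
  obtain ⟨e, he, h₀, rfl, hpull⟩ := exists_isContDiffChart_pullback_eq_smul b
    ENat.top_ne_zero hU hα hx hαx (b.ne_zero j)
  have hh : ContDiffOn ℝ ∞ (fun y ↦ (fderiv ℝ e y).det) e.source :=
    contDiff_det.comp_contDiffOn (he.contDiffOn.fderiv_of_isOpen e.open_source le_rfl)
  refine ⟨e, _, he, h₀, rfl, hh, he.det_fderiv_ne_zero (by simp) h₀, ?_⟩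
  filter_upwards [hpull.eventually_nhds, e.open_source.mem_nhds h₀,
    (e.continuousAt h₀).preimage_mem_nhds (hU.mem_nhds hx)] with y hpull_y hy hyU
  refine ⟨?_, hpull_y.self_of_nhds⟩
  exact fderiv_apply_eq_zero_of_pullback_eq_smul b j
    ((hα.contDiffAt (hU.mem_nhds hyU)).differentiableAt (by simp))
    ((he.contDiffAt hy).of_le (WithTop.coe_le_coe.2 le_top))
    ((hh.contDiffAt (e.open_source.mem_nhds hy)).differentiableAt (by simp)) hpull_y
    (hclosed _ hyU)

theorem exists_isContDiffChart_eq_compContinuousLinearMap (b : Module.Basis (Fin (m + 2)) ℝ E)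
    {α : E → E [⋀^Fin (m + 1)]→L[ℝ] ℝ} (hU : IsOpen U) (hα : ContDiffOn ℝ ∞ α U) (hx : x ∈ U)
    (hαx : α x ≠ 0) (hclosed : ∀ y ∈ U, extDeriv α y = 0) :
    ∃ e : OpenPartialHomeomorph E E, IsContDiffChart ∞ e ∧ x ∈ e.source ∧ e.source ⊆ U ∧
      ∀ y ∈ e.source, α y =
        ((volumeForm b).curryLeft (b 0)).compContinuousLinearMap (fderiv ℝ e y) := by
  have := b.finiteDimensional_of_finite
  obtain ⟨e₁, h, he₁, h₁, rfl, hh, hh₀, hpull₁⟩ :=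
    exists_isContDiffChart_pullback_eq_smul_of_extDeriv_eq_zero b 0 hU hα hx hαx hclosed
  obtain ⟨e₂, he₂, h₂, hdet⟩ := exists_isContDiffChart_det_fderiv_eq ENat.top_ne_zero
    (ψ := (b.coord 1).toContinuousLinearMap) (w := b 1) (by simp) (by simp) (b.ne_zero 0)
    e₁.open_source h₁ hh hh₀ (hpull₁.mono fun _ hy ↦ hy.1)
  have hpull₂ : ∀ᶠ y in 𝓝 0, (α (e₁ y)).compContinuousLinearMap (fderiv ℝ e₁ y) =
      ((volumeForm b).curryLeft (b 0)).compContinuousLinearMap (fderiv ℝ e₂ y) := by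
    filter_upwards [hpull₁, hdet] with y ⟨_, hpull_y⟩ ⟨hfix, hdet_y⟩
    rw [hpull_y, ← hdet_y, ← volumeForm_curryLeft_compContinuousLinearMap, hfix]
  have hα_eq := he₁.eventually_eq_compContinuousLinearMap_symm_trans he₂ (by simp) h₁ h₂ hpull₂
  obtain ⟨W, hWsub, hW, hxW⟩ := mem_nhds_iff.1 (hα_eq.and (hU.mem_nhds hx))
  refine ⟨_, (he₁.symm.trans he₂).restrOpen hW, ⟨?_, hxW⟩, fun y hy ↦ (hWsub hy.2).2,
    fun y hy ↦ (hWsub hy.2).1⟩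
  simpa [h₁] using h₂

end CodimOne

end NormalForm

section AlternatingForms

section Lift

variable {𝕜 E F ι : Type*} [NontriviallyNormedField 𝕜] [NormedAddCommGroup E] [NormedSpace 𝕜 E]
  [NormedAddCommGroup F] [NormedSpace 𝕜 F]

theorem exists_toContinuousMultilinearMap_eq_of_surjective {M : Type*} [NormedAddCommGroup M]
    [NormedSpace 𝕜 M] {A : E →L[𝕜] M} (hA : Function.Surjective A) {f : E [⋀^ι]→L[𝕜] F}
    {c : ContinuousMultilinearMap 𝕜 (fun _ : ι ↦ M) F} (hf : ∀ v, f v = c fun i ↦ A (v i)) :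
    ∃ c' : M [⋀^ι]→L[𝕜] F, c'.toContinuousMultilinearMap = c := by
  obtain ⟨B, hB⟩ := hA.hasRightInverse
  have hc (w : ι → M) : c w = f fun i ↦ B (w i) := by simp only [hf, hB _]
  refine ⟨{ c with map_eq_zero_of_eq' := fun w i j hw hij ↦ ?_ }, rfl⟩
  exact (hc w).trans (f.map_eq_zero_of_eq _ (congrArg B hw) hij)

variable (𝕜 E F ι) in
/-- `ContinuousMultilinearMap.alternatization` as a continuous linear map; it is used to pass from
smooth families of multilinear maps to smooth families of alternating maps. -/
noncomputable def alternatizationCLM [Fintype ι] [DecidableEq ι] :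
    ContinuousMultilinearMap 𝕜 (fun _ : ι ↦ E) F →L[𝕜] E [⋀^ι]→L[𝕜] F where
  toFun f := f.alternatization
  map_add' f g := map_add _ f g
  map_smul' c f := by
    ext v
    simp [ContinuousMultilinearMap.alternatization_apply_apply, Finset.smul_sum, smul_comm c]
  cont := by
    refine continuous_induced_rng.2 (continuous_finsetSum _ fun σ _ ↦ ?_)
    exact (ContinuousMultilinearMap.domDomCongrₗᵢ 𝕜 E F σ).continuous.const_smul σ.sign

theorem alternatizationCLM_toContinuousMultilinearMap [Fintype ι] [DecidableEq ι]
    (f : E [⋀^ι]→L[𝕜] F) :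
    alternatizationCLM 𝕜 E F ι f.toContinuousMultilinearMap = (Fintype.card ι).factorial • f := by
  ext v
  have h := DFunLike.congr_fun f.toAlternatingMap.coe_alternatization v
  simpa [MultilinearMap.alternatization_apply,
    ContinuousMultilinearMap.alternatization_apply_apply, alternatizationCLM,
    Function.comp_def] using h

theorem exists_contDiffOn_toContinuousMultilinearMap_eq [CharZero 𝕜] [Fintype ι]
    {P : Type*} [NormedAddCommGroup P] [NormedSpace 𝕜 P] {n : WithTop ℕ∞} {U : Set P}
    {ω : P → ContinuousMultilinearMap 𝕜 (fun _ : ι ↦ E) F} (hω : ContDiffOn 𝕜 n ω U)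
    (halt : ∀ y ∈ U, ∀ (v : ι → E) (i j : ι), i ≠ j → v i = v j → ω y v = 0) :
    ∃ α : P → E [⋀^ι]→L[𝕜] F, ContDiffOn 𝕜 n α U ∧
      ∀ y ∈ U, (α y).toContinuousMultilinearMap = ω y := by
  classical
  let c : 𝕜 := ((Fintype.card ι).factorial : 𝕜)⁻¹
  refine ⟨fun y ↦ (c • alternatizationCLM 𝕜 E F ι) (ω y),
    (c • alternatizationCLM 𝕜 E F ι).contDiff.comp_contDiffOn hω, fun y hy ↦ ?_⟩
  let f : E [⋀^ι]→L[𝕜] F :=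
    { ω y with map_eq_zero_of_eq' := fun v i j hv hij ↦ halt y hy v i j hij hv }
  have hfact : ((Fintype.card ι).factorial : 𝕜) ≠ 0 := by exact_mod_cast Nat.factorial_ne_zero _
  have hlift : (c • alternatizationCLM 𝕜 E F ι) f.toContinuousMultilinearMap = f := by
    rw [smul_apply, alternatizationCLM_toContinuousMultilinearMap, ← Nat.cast_smul_eq_nsmul 𝕜,
      inv_smul_smul₀ hfact]
  exact congrArg ContinuousAlternatingMap.toContinuousMultilinearMap hlift

end Lift

section ExtDeriv

variable {𝕜 E F : Type*} [NontriviallyNormedField 𝕜] [NormedAddCommGroup E] [NormedSpace 𝕜 E]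
  [NormedAddCommGroup F] [NormedSpace 𝕜 F] {m : ℕ}

theorem extDeriv_apply_eq_sum_fderiv {ω : E → E [×m]→L[𝕜] F} {α : E → E [⋀^Fin m]→L[𝕜] F} {y : E}
    (hα : DifferentiableAt 𝕜 α y)
    (heq : ∀ᶠ z in 𝓝 y, (α z).toContinuousMultilinearMap = ω z) (v : Fin (m + 1) → E) :
    extDeriv α y v = ∑ i : Fin (m + 1),
      (-1 : 𝕜) ^ (i : ℕ) • fderiv 𝕜 ω y (v i) (fun j ↦ v (i.succAbove j)) := by
  let toMultilinear : (E [⋀^Fin m]→L[𝕜] F) →L[𝕜] E [×m]→L[𝕜] F :=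
    ContinuousAlternatingMap.toContinuousMultilinearMapCLM 𝕜
  have hω : HasFDerivAt ω (toMultilinear.comp (fderiv 𝕜 α y)) y :=
    (toMultilinear.hasFDerivAt.comp y hα.hasFDerivAt).congr_of_eventuallyEq
      (heq.mono fun _ hz ↦ hz.symm)
  rw [extDeriv, ContinuousAlternatingMap.alternatizeUncurryFin_apply, hω.fderiv]
  refine Finset.sum_congr rfl fun i _ ↦ ?_
  rw [← Int.cast_smul_eq_zsmul 𝕜]
  push_cast
  rfl

end ExtDeriv

section ConstantCoefficients

variable {n p : ℕ} {U : Set (Fin n → ℝ)} {ω : (Fin n → ℝ) → (Fin n → ℝ) [×p]→L[ℝ] ℝ}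
  {x : Fin n → ℝ}

theorem HasConstantCoefficientsFormAt.of_isContDiffChart
    {u : OpenPartialHomeomorph (Fin n → ℝ) (Fin n → ℝ)} (hu : IsContDiffChart (⊤ : ℕ∞) u)
    (hx : x ∈ u.source) (hU : u.source ⊆ U) {c : (Fin n → ℝ) [×p]→L[ℝ] ℝ}
    (hc : ∀ y ∈ u.source, ∀ v, ω y v = c fun i ↦ fderiv ℝ u y (v i)) :
    HasConstantCoefficientsFormAt n p U ω x := by
  refine ⟨u.source, u.open_source, hx, hU, u, hu.contDiffOn, u.injOn, ?_, fun y hy ↦ ?_, c, hc⟩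
  · exact u.image_source_eq_target ▸ u.open_target
  · obtain ⟨A, hA⟩ := hu.exists_hasFDerivAt_equiv (by simp) hy
    exact hA.fderiv ▸ A.bijective

theorem HasConstantCoefficientsFormAt.eventually_extDeriv_eq_zero
    (h : HasConstantCoefficientsFormAt n p U ω x) {α : (Fin n → ℝ) → (Fin n → ℝ) [⋀^Fin p]→L[ℝ] ℝ}
    (hα : ∀ y ∈ U, (α y).toContinuousMultilinearMap = ω y) :
    ∀ᶠ y in 𝓝 x, extDeriv α y = 0 := by
  obtain ⟨V, hV, hxV, hVU, u, hu, -, -, hbij, c, hc⟩ := h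
  have hαc {y : Fin n → ℝ} (hy : y ∈ V) (v : Fin p → Fin n → ℝ) :
      α y v = c fun i ↦ fderiv ℝ u y (v i) :=
    (DFunLike.congr_fun (hα y (hVU hy)) v).trans (hc y hy v)
  obtain ⟨c', rfl⟩ := exists_toContinuousMultilinearMap_eq_of_surjective
    (hbij x hxV).surjective (hαc hxV)
  filter_upwards [hV.mem_nhds hxV] with y hy
  have hpull : α =ᶠ[𝓝 y] fun z ↦ c'.compContinuousLinearMap (fderiv ℝ u z) :=
    eventually_of_mem (hV.mem_nhds hy) fun z hz ↦ ContinuousAlternatingMap.ext (hαc hz)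
  have hconst : extDeriv (fun _ : Fin n → ℝ ↦ c') (u y) = 0 := by
    rw [extDeriv, fderiv_fun_const]
    exact map_zero (ContinuousAlternatingMap.alternatizeUncurryFinCLM ℝ (Fin n → ℝ) ℝ)
  rw [hpull.extDeriv_eq]
  exact extDeriv_pullback_eq_zero (differentiableAt_const c')
    ((hu.contDiffAt (hV.mem_nhds hy)).of_le (WithTop.coe_le_coe.2 le_top)) hconst

end ConstantCoefficients

end AlternatingForms

/-- for `n ≥ 2`, a smooth `(n−1)`-form `ω` on `U ⊆ ℝⁿ` with `ω_x ≠ 0`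
has constant coefficients on a neighbourhood of `x` if and only if `dω = 0` on a
neighbourhood of `x`, where
`dω_y(v₀,…,v_{n−1}) = Σᵢ (−1)ⁱ (Dω_y(vᵢ))(v₀,…,v̂ᵢ,…,v_{n−1})`. -/
theorem codimOneForm_constantCoefficients_iff_closed (n : ℕ) (hn : 2 ≤ n)
    (U : Set (Fin n → ℝ)) (hU : IsOpen U)
    (ω : (Fin n → ℝ) → ((Fin n → ℝ) [×(n - 1)]→L[ℝ] ℝ))
    (hω : ContDiffOn ℝ (⊤ : ℕ∞) ω U)
    (halt : ∀ y ∈ U, ∀ v : Fin (n - 1) → (Fin n → ℝ), ∀ i j, i ≠ j → v i = v j →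
      ω y v = 0)
    (x : Fin n → ℝ) (hx : x ∈ U) (hx0 : ω x ≠ 0) :
    HasConstantCoefficientsFormAt n (n - 1) U ω x ↔
      ∃ W : Set (Fin n → ℝ), IsOpen W ∧ x ∈ W ∧
        ∀ y ∈ W, ∀ v : Fin (n - 1 + 1) → (Fin n → ℝ),
          ∑ i : Fin (n - 1 + 1),
            (-1 : ℝ) ^ (i : ℕ) * fderiv ℝ ω y (v i) (fun j => v (i.succAbove j)) = 0 := by
  obtain ⟨α, hα, hαω⟩ := exists_contDiffOn_toContinuousMultilinearMap_eq hω halt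
  have hsum {y : Fin n → ℝ} (hy : y ∈ U) (v : Fin (n - 1 + 1) → Fin n → ℝ) :=
    extDeriv_apply_eq_sum_fderiv ((hα.contDiffAt (hU.mem_nhds hy)).differentiableAt (by simp))
      (eventually_of_mem (hU.mem_nhds hy) hαω) v
  constructor
  · intro hconst
    obtain ⟨W, hWsub, hW, hxW⟩ := mem_nhds_iff.1
      ((hconst.eventually_extDeriv_eq_zero hαω).and (hU.mem_nhds hx))
    refine ⟨W, hW, hxW, fun y hy v ↦ (hsum (hWsub hy).2 v).symm.trans ?_⟩
    exact DFunLike.congr_fun (hWsub hy).1 v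
  · rintro ⟨W, hW, hxW, hclosed⟩
    obtain ⟨k, rfl⟩ : ∃ k, n = k + 2 := ⟨n - 2, by omega⟩
    let b := Pi.basisFun ℝ (Fin (k + 2))
    have hαx : α x ≠ 0 := fun h ↦ hx0 (by rw [← hαω x hx, h]; rfl)
    obtain ⟨u, hu, hxu, huUW, hαu⟩ := exists_isContDiffChart_eq_compContinuousLinearMap
      b (hU.inter hW) (hα.mono inter_subset_left) ⟨hx, hxW⟩ hαx
      fun y hy ↦ ContinuousAlternatingMap.ext fun v ↦ (hsum hy.1 v).trans (hclosed y hy.2 v)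
    have huU := huUW.trans inter_subset_left
    refine .of_isContDiffChart hu hxu huU
      (c := ((volumeForm b).curryLeft (b 0)).toContinuousMultilinearMap) fun y hy v ↦ ?_
    exact (DFunLike.congr_fun (hαω y (huU hy)) v).symm.trans (DFunLike.congr_fun (hαu y hy) v)
end

section
/- Let n be even and let V be a smooth bivector field on an open set U ⊆ ℝⁿ such that for every y ∈ U the linear map V♮_y : (ℝⁿ)* → ℝⁿ determined by εⁱ(V♮_y(w)) = V_y(w,εⁱ) is bijective (V has maximal rank n). Then V has constant coefficients on a neighbourhood of a point x ∈ U if and only if its Schouten–Nijenhuis bracket with itself vanishes near x, i.e. Σ_{l=1}^{n} ( V^{li} ∂V^{jk}/∂x^l + V^{lj} ∂V^{ki}/∂x^l + V^{lk} ∂V^{ij}/∂x^l ) = 0 on a neighbourhood of x for all i,j,k, where V^{ij}(y) = V_y(εⁱ,εʲ). -/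
/-- Constant coefficients for a `q`-vector field (see context). -/
def HasConstantCoefficientsVecAt (n q : ℕ) (U : Set (Fin n → ℝ))
    (V : (Fin n → ℝ) → (((Fin n → ℝ) →L[ℝ] ℝ) [×q]→L[ℝ] ℝ)) (x : Fin n → ℝ) : Prop :=
  ∃ W : Set (Fin n → ℝ), IsOpen W ∧ x ∈ W ∧ W ⊆ U ∧
    ∃ u : (Fin n → ℝ) → (Fin n → ℝ),
      ContDiffOn ℝ (⊤ : ℕ∞) u W ∧ Set.InjOn u W ∧ IsOpen (u '' W) ∧
      (∀ y ∈ W, Function.Bijective (fderiv ℝ u y)) ∧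
      ∃ c : ((Fin n → ℝ) →L[ℝ] ℝ) [×q]→L[ℝ] ℝ,
        ∀ y ∈ W, ∀ w : Fin q → ((Fin n → ℝ) →L[ℝ] ℝ),
          c w = V y (fun i => (w i).comp (fderiv ℝ u y))

/-! A nondegenerate bivector field is inverse to a nondegenerate 2-form `Ω`, and its
Schouten–Nijenhuis bracket with itself vanishes exactly when `Ω` is closed. The chart is then
Darboux's, obtained by Moser's trick: on a ball around `x` the homotopy formula gives `α` with
`dα = Ω - Ω x`, and the flow of the time-dependent field `X` with `ι_X (Ω x + t (Ω - Ω x)) = -α`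
pulls `Ω` back to the constant form `Ω x`. As `X` vanishes to second order at `x`, the constant
curve at `x` is a solution at which the integral equation on `C([0, 1], E)` linearizes to the
identity; the inverse function theorem there yields the flow up to time one together with its smooth
dependence on the initial value. Conversely, differentiating the constancy of the push-forward
under a chart `u` expresses the bracket through second derivatives of `u`, which cancel by
symmetry. -/

noncomputable section

set_option maxSynthPendingDepth 3

namespace Darboux

open Set Filter Topology unitInterval
open scoped ContDiff

section Topological

variable {K E F : Type*} [TopologicalSpace K] [TopologicalSpace E] [TopologicalSpace F] [Zero F]
  {g : E → F} {s : Set E} {c : C(K, E)}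

/-- The superposition (Nemytskii) operator `c ↦ g ∘ c`, with junk value `0` where `g ∘ c` is
discontinuous. -/
def superposition (g : E → F) (c : C(K, E)) : C(K, F) := ContinuousMap.mkD (g ∘ c) 0

lemma superposition_apply (hg : ContinuousOn g s) (hc : range c ⊆ s) (t : K) :
    superposition g c t = g (c t) :=
  ContinuousMap.mkD_apply_of_continuous
    (hg.comp_continuous c.continuous fun t => hc (mem_range_self t))

end Topological

section Metric

variable {K E F : Type*} [TopologicalSpace K] [CompactSpace K] [PseudoMetricSpace E]
  {g : E → F} {s : Set E}

lemma exists_forall_ball_subset_and_dist_lt [PseudoMetricSpace F] {c : C(K, E)} (hs : IsOpen s)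
    (hg : ContinuousOn g s) (hc : range c ⊆ s) {ε : ℝ} (hε : 0 < ε) :
    ∃ δ > 0, ∀ t, ∀ y ∈ Metric.ball (c t) δ, y ∈ s ∧ dist (g y) (g (c t)) < ε := by
  have hK : IsCompact (range c) := isCompact_range c.continuous
  obtain ⟨δ₁, hδ₁, h₁⟩ := hK.exists_thickening_subset_open hs hc
  have huc := hK.uniformContinuousAt_of_continuousAt g
    (fun z hz => hg.continuousAt (hs.mem_nhds (hc hz))) (Metric.dist_mem_uniformity hε)
  obtain ⟨δ₂, hδ₂, h₂⟩ := Metric.mem_uniformity_dist.1 huc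
  refine ⟨min δ₁ δ₂, lt_min hδ₁ hδ₂, fun t y hy => ⟨?_, ?_⟩⟩
  · exact h₁ (Metric.mem_thickening_iff.2 ⟨c t, mem_range_self t, hy.trans_le (min_le_left _ _)⟩)
  · rw [dist_comm]
    exact h₂ (by rw [dist_comm]; exact hy.trans_le (min_le_right _ _)) (mem_range_self t)

lemma continuousOn_superposition [PseudoMetricSpace F] [Zero F] (hs : IsOpen s)
    (hg : ContinuousOn g s) : ContinuousOn (superposition g) {c : C(K, E) | range c ⊆ s} := by
  intro c hc
  refine (Metric.continuousAt_iff'.2 fun ε hε => ?_).continuousWithinAt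
  obtain ⟨δ, hδ, h⟩ := exists_forall_ball_subset_and_dist_lt hs hg hc (half_pos hε)
  filter_upwards [Metric.ball_mem_nhds c hδ,
    (ContinuousMap.isOpen_setOfPred_range_subset hs).mem_nhds hc] with d hd hds
  refine ((ContinuousMap.dist_le (half_pos hε).le).2 fun t => ?_).trans_lt (half_lt_self hε)
  rw [superposition_apply hg hds, superposition_apply hg hc]
  exact (h t (d t) ((ContinuousMap.dist_apply_le_dist t).trans_lt hd)).2.le

end Metric

section Superposition

universe u

variable {K : Type*} [TopologicalSpace K] [CompactSpace K]

/-- The pointwise application of a continuous family of linear maps, as a bilinear map between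
spaces of continuous functions; it expresses the derivative of a superposition operator. -/
def pointwiseApply {E F : Type*} [NormedAddCommGroup E] [NormedSpace ℝ E] [NormedAddCommGroup F]
    [NormedSpace ℝ F] : C(K, E →L[ℝ] F) →L[ℝ] C(K, E) →L[ℝ] C(K, F) :=
  LinearMap.mkContinuous₂
    (LinearMap.mk₂ ℝ (fun (A : C(K, E →L[ℝ] F)) (v : C(K, E)) =>
      (⟨fun t => A t (v t), by fun_prop⟩ : C(K, F)))
      (fun _ _ _ => by ext; simp) (fun _ _ _ => by ext; simp)
      (fun _ _ _ => by ext; simp) (fun _ _ _ => by ext; simp)) 1 fun A v => by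
    rw [ContinuousMap.norm_le _ (by positivity), one_mul]
    exact fun t => (A t).le_of_opNorm_le_of_le (A.norm_coe_le_norm t) (v.norm_coe_le_norm t)

variable {E F : Type u} [NormedAddCommGroup E] [NormedSpace ℝ E] [NormedAddCommGroup F]
  [NormedSpace ℝ F] {g : E → F} {s : Set E} {c : C(K, E)}

@[simp] lemma pointwiseApply_apply (A : C(K, E →L[ℝ] F)) (v : C(K, E)) (t : K) :
    pointwiseApply A v t = A t (v t) := rfl

lemma hasFDerivAt_superposition (hs : IsOpen s) (hg : ContDiffOn ℝ 1 g s) (hc : range c ⊆ s) :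
    HasFDerivAt (superposition g) (pointwiseApply (superposition (fderiv ℝ g) c)) c := by
  have hg' : ContinuousOn (fderiv ℝ g) s := hg.continuousOn_fderiv_of_isOpen hs le_rfl
  rw [hasFDerivAt_iff_isLittleO, Asymptotics.isLittleO_iff]
  intro ε hε
  obtain ⟨δ, hδ, h⟩ := exists_forall_ball_subset_and_dist_lt hs hg' hc hε
  filter_upwards [Metric.ball_mem_nhds c hδ,
    (ContinuousMap.isOpen_setOfPred_range_subset hs).mem_nhds hc] with d hd hds
  refine (ContinuousMap.norm_le _ (by positivity)).2 fun t => ?_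
  have hmean : ‖g (d t) - g (c t) - fderiv ℝ g (c t) (d t - c t)‖ ≤ ε * ‖d t - c t‖ := by
    refine (convex_ball (c t) δ).norm_image_sub_le_of_norm_hasFDerivWithin_le' (f' := fderiv ℝ g)
      (fun y hy => ?_) (fun y hy => ?_) (Metric.mem_ball_self hδ)
      ((ContinuousMap.dist_apply_le_dist t).trans_lt hd)
    · exact ((hg.differentiableOn one_ne_zero).differentiableAt
        (hs.mem_nhds (h t y hy).1)).hasFDerivAt.hasFDerivWithinAt
    · exact dist_eq_norm (fderiv ℝ g y) _ ▸ (h t y hy).2.le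
  simp only [ContinuousMap.sub_apply, superposition_apply hg.continuousOn hds,
    superposition_apply hg.continuousOn hc, pointwiseApply_apply, superposition_apply hg' hc]
  exact hmean.trans (by gcongr; exact (d - c).norm_coe_le_norm t)

lemma contDiffOn_superposition_nat (hs : IsOpen s) (k : ℕ) (hg : ContDiffOn ℝ k g s) :
    ContDiffOn ℝ k (superposition g) {c : C(K, E) | range c ⊆ s} := by
  have hO : IsOpen {c : C(K, E) | range c ⊆ s} := ContinuousMap.isOpen_setOfPred_range_subset hs
  induction k generalizing F with
  | zero => exact contDiffOn_zero.2 (continuousOn_superposition hs hg.continuousOn)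
  | succ k ih =>
    rw [Nat.cast_succ] at hg ⊢
    have hg' := (contDiffOn_succ_iff_fderiv_of_isOpen hs).1 hg
    have hderiv : ∀ c : C(K, E), range c ⊆ s →
        HasFDerivAt (superposition g) (pointwiseApply (superposition (fderiv ℝ g) c)) c :=
      fun c hc => hasFDerivAt_superposition hs (hg.of_le (by simp)) hc
    refine (contDiffOn_succ_iff_fderiv_of_isOpen hO).2
      ⟨fun c hc => (hderiv c hc).differentiableAt.differentiableWithinAt, by simp, ?_⟩
    have hsmooth : ContDiff ℝ k (pointwiseApply (K := K) (E := E) (F := F)) :=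
      ContinuousLinearMap.contDiff _
    exact (hsmooth.comp_contDiffOn (ih hg'.2.2)).congr fun c hc => (hderiv c hc).fderiv

lemma contDiffOn_superposition (hs : IsOpen s) (hg : ContDiffOn ℝ ∞ g s) :
    ContDiffOn ℝ ∞ (superposition g) {c : C(K, E) | range c ⊆ s} :=
  contDiffOn_infty.2 fun k => contDiffOn_superposition_nat hs k (contDiffOn_infty.1 hg k)

end Superposition

section Graph

variable {E : Type*} [TopologicalSpace E]

/-- The graph of a curve, through which a time-dependent map acts on curves. -/
def graph (c : C(I, E)) : C(I, ℝ × E) := .prodMk ⟨Subtype.val, continuous_subtype_val⟩ c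

@[simp] lemma graph_apply (c : C(I, E)) (t : I) : graph c t = ((t : ℝ), c t) := rfl

lemma range_graph_subset_iff {c : C(I, E)} {S : Set (ℝ × E)} :
    range (graph c) ⊆ S ↔ ∀ t : I, ((t : ℝ), c t) ∈ S :=
  range_subset_iff

end Graph

section Curves

variable {E : Type*} [NormedAddCommGroup E]

lemma intervalIntegrable_IccExtend (c : C(I, E)) (a b : ℝ) :
    IntervalIntegrable (IccExtend zero_le_one c) MeasureTheory.volume a b :=
  c.continuous.Icc_extend'.intervalIntegrable a b

variable [NormedSpace ℝ E]

lemma graph_eq_compLeftContinuous_add (c : C(I, E)) :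
    graph c = (ContinuousLinearMap.inr ℝ ℝ E).compLeftContinuous ℝ I c + graph 0 := by
  ext t <;> simp

lemma hasFDerivAt_graph (c : C(I, E)) :
    HasFDerivAt graph ((ContinuousLinearMap.inr ℝ ℝ E).compLeftContinuous ℝ I) c := by
  rw [funext (graph_eq_compLeftContinuous_add (E := E))]
  exact (ContinuousLinearMap.hasFDerivAt _).add_const _

lemma contDiff_graph {k : WithTop ℕ∞} : ContDiff ℝ k (graph : C(I, E) → C(I, ℝ × E)) := by
  rw [funext (graph_eq_compLeftContinuous_add (E := E))]
  exact (ContinuousLinearMap.contDiff _).add contDiff_const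

/-- The Volterra operator, sending a curve `c` to `t ↦ ∫ s in 0..t, c s`. -/
def primitive : C(I, E) →L[ℝ] C(I, E) :=
  LinearMap.mkContinuous
    { toFun := fun c => ⟨fun t => ∫ s in (0 : ℝ)..t, IccExtend zero_le_one c s,
        (intervalIntegral.continuous_primitive (intervalIntegrable_IccExtend c) 0).comp
          continuous_subtype_val⟩
      map_add' := fun c d => ContinuousMap.ext fun t => intervalIntegral.integral_add
        (intervalIntegrable_IccExtend c 0 t) (intervalIntegrable_IccExtend d 0 t)
      map_smul' := fun r c => ContinuousMap.ext fun t => intervalIntegral.integral_smul r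
        (IccExtend zero_le_one c) } 1 fun c => by
    refine (ContinuousMap.norm_le _ (by positivity)).2 fun t => ?_
    refine (intervalIntegral.norm_integral_le_of_norm_le_const
      fun s _ => c.norm_coe_le_norm (projIcc 0 1 zero_le_one s)).trans ?_
    rw [sub_zero, abs_of_nonneg t.2.1, one_mul]
    exact mul_le_of_le_one_right (norm_nonneg c) t.2.2

lemma primitive_apply (c : C(I, E)) (t : I) :
    primitive c t = ∫ s in (0 : ℝ)..t, IccExtend zero_le_one c s := rfl

lemma primitive_apply_one {c : C(I, E)} {f : ℝ → E} (hf : ∀ t : I, c t = f t) :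
    primitive c 1 = ∫ t in (0 : ℝ)..1, f t := by
  refine intervalIntegral.integral_congr fun t ht => ?_
  replace ht : t ∈ Icc (0 : ℝ) 1 := uIcc_of_le (zero_le_one' ℝ) ▸ ht
  rw [IccExtend_of_mem _ _ ht, hf]

lemma hasDerivWithinAt_IccExtend_of_eq_const_add_primitive [CompleteSpace E] {c d : C(I, E)} {a : E}
    (hc : c = .const I a + primitive d) (t : I) :
    HasDerivWithinAt (IccExtend zero_le_one c) (d t) (Icc 0 1) t := by
  have hderiv : HasDerivAt (fun r => a + ∫ s in (0 : ℝ)..r, IccExtend zero_le_one d s)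
      (IccExtend zero_le_one d t) t :=
    (intervalIntegral.integral_hasDerivAt_right (intervalIntegrable_IccExtend d 0 t)
      (d.continuous.Icc_extend'.stronglyMeasurableAtFilter _ _)
      d.continuous.Icc_extend'.continuousAt).const_add a
  rw [IccExtend_val] at hderiv
  refine hderiv.hasDerivWithinAt.congr_of_mem (fun r hr => ?_) t.2
  rw [IccExtend_of_mem _ _ hr, hc]
  rfl

end Curves

section TimeDependent

universe u

variable {E F : Type u} [NormedAddCommGroup E] [NormedSpace ℝ E] [NormedAddCommGroup F]
  [NormedSpace ℝ F] {S : Set (ℝ × E)} {X : ℝ × E → F}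

lemma hasFDerivAt_superposition_graph (hS : IsOpen S) (hX : ContDiffOn ℝ 1 X S) {c : C(I, E)}
    (hc : range (graph c) ⊆ S) :
    HasFDerivAt (fun c : C(I, E) => superposition X (graph c))
      (pointwiseApply (superposition (fderiv ℝ X) (graph c)) ∘L
        (ContinuousLinearMap.inr ℝ ℝ E).compLeftContinuous ℝ I) c :=
  (hasFDerivAt_superposition hS hX hc).comp c (hasFDerivAt_graph c)

lemma contDiffOn_superposition_graph (hS : IsOpen S) (hX : ContDiffOn ℝ ∞ X S) :
    ContDiffOn ℝ ∞ (fun c : C(I, E) => superposition X (graph c)) {c | range (graph c) ⊆ S} :=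
  (contDiffOn_superposition hS hX).comp contDiff_graph.contDiffOn fun _ hc => hc

variable {O : Set E}

lemma contDiffOn_integral (hS : IsOpen S) (hX : ContDiffOn ℝ ∞ X S)
    (hO : ∀ y ∈ O, ∀ t ∈ Icc (0 : ℝ) 1, (t, y) ∈ S) :
    ContDiffOn ℝ ∞ (fun y => ∫ t in (0 : ℝ)..1, X (t, y)) O := by
  have hrange : ∀ y ∈ O, range (graph (.const I y)) ⊆ S := fun y hy =>
    range_graph_subset_iff.2 fun t => hO y hy t t.2
  have hcomp : ContDiffOn ℝ ∞ (fun y => (ContinuousMap.evalCLM ℝ 1 ∘L primitive)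
      (superposition X (graph (ContinuousLinearMap.const ℝ I y)))) O :=
    (ContinuousLinearMap.contDiff _).comp_contDiffOn
      ((contDiffOn_superposition_graph hS hX).comp
        (ContinuousLinearMap.contDiff _).contDiffOn hrange)
  exact hcomp.congr fun y hy => (primitive_apply_one fun t =>
    superposition_apply hX.continuousOn (hrange y hy) t).symm

lemma fderiv_integral_apply (hS : IsOpen S) (hX : ContDiffOn ℝ 1 X S) (hO : IsOpen O)
    (hOS : ∀ y ∈ O, ∀ t ∈ Icc (0 : ℝ) 1, (t, y) ∈ S) {y : E} (hy : y ∈ O) (a : E) :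
    fderiv ℝ (fun y => ∫ t in (0 : ℝ)..1, X (t, y)) y a =
      ∫ t in (0 : ℝ)..1, fderiv ℝ X (t, y) (0, a) := by
  have hrange : ∀ y ∈ O, range (graph (.const I y)) ⊆ S := fun y hy =>
    range_graph_subset_iff.2 fun t => hOS y hy t t.2
  have hcomp := (ContinuousMap.evalCLM ℝ 1 ∘L primitive).hasFDerivAt.comp y
    ((hasFDerivAt_superposition_graph hS hX (hrange y hy)).comp y
      (ContinuousLinearMap.const ℝ I (M := E)).hasFDerivAt)
  have heq : (fun y => ∫ t in (0 : ℝ)..1, X (t, y)) =ᶠ[𝓝 y]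
      fun y => primitive (superposition X (graph (.const I y))) 1 :=
    (hO.eventually_mem hy).mono fun z hz => (primitive_apply_one fun t =>
      superposition_apply hX.continuousOn (hrange z hz) t).symm
  rw [(hcomp.congr_of_eventuallyEq heq).fderiv]
  exact primitive_apply_one fun t => by
    simp [superposition_apply (hX.continuousOn_fderiv_of_isOpen hS le_rfl) (hrange y hy)]

end TimeDependent

section InverseFunction

variable {E F : Type*} [NormedAddCommGroup E] [NormedSpace ℝ E] [CompleteSpace E]
  [NormedAddCommGroup F] [NormedSpace ℝ F]

lemma isOpen_setOf_isInvertible : IsOpen {A : E →L[ℝ] F | A.IsInvertible} :=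
  ContinuousLinearEquiv.isOpen

lemma exists_smooth_localInverse {f : E → F} {O : Set E} (hO : IsOpen O) (hf : ContDiffOn ℝ ∞ f O)
    {a : E} (ha : a ∈ O) (hinv : (fderiv ℝ f a).IsInvertible) :
    ∃ e : OpenPartialHomeomorph E F, e = f ∧ a ∈ e.source ∧ e.source ⊆ O ∧
      (∀ y ∈ e.source, (fderiv ℝ f y).IsInvertible) ∧ ContDiffOn ℝ ∞ e.symm e.target := by
  have hne : (∞ : WithTop ℕ∞) ≠ 0 := by simp
  have hfO : ∀ y ∈ O, ContDiffAt ℝ ∞ f y := fun y hy => hf.contDiffAt (hO.mem_nhds hy)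
  have hderiv : ∀ y ∈ O, HasFDerivAt f (fderiv ℝ f y) y := fun y hy =>
    ((hfO y hy).differentiableAt hne).hasFDerivAt
  obtain ⟨f', hf'⟩ := hinv
  have hf'a : HasFDerivAt f (f' : E →L[ℝ] F) a := hf' ▸ hderiv a ha
  have hO' : IsOpen (O ∩ fderiv ℝ f ⁻¹' {A | A.IsInvertible}) :=
    (hf.continuousOn_fderiv_of_isOpen hO (by simp)).isOpen_inter_preimage hO
      isOpen_setOf_isInvertible
  let e := ((hfO a ha).toOpenPartialHomeomorph f hf'a hne).restrOpen _ hO'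
  refine ⟨e, rfl, ⟨(hfO a ha).mem_toOpenPartialHomeomorph_source hf'a hne, ha, f', hf'⟩,
    fun y hy => hy.2.1, fun y hy => hy.2.2, fun z hz => ?_⟩
  obtain ⟨hO, g', hg'⟩ := (e.map_target hz).2
  exact (e.contDiffAt_symm hz (hg' ▸ hderiv _ hO) (hfO _ hO)).contDiffWithinAt

end InverseFunction

section Flow

universe u

variable {E : Type u} [NormedAddCommGroup E] [NormedSpace ℝ E] {S : Set (ℝ × E)} {X : ℝ × E → E}

/-- The linearization of `c ↦ X (t, c t)` at a curve `c`, i.e. the right-hand side of the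
variational equation along `c`. -/
def linearization (X : ℝ × E → E) (c : C(I, E)) : C(I, E) →L[ℝ] C(I, E) :=
  pointwiseApply (superposition (fderiv ℝ X) (graph c)) ∘L
    (ContinuousLinearMap.inr ℝ ℝ E).compLeftContinuous ℝ I

lemma linearization_apply (hS : IsOpen S) (hX : ContDiffOn ℝ 1 X S) {c : C(I, E)}
    (hc : range (graph c) ⊆ S) (v : C(I, E)) (t : I) :
    linearization X c v t = fderiv ℝ X (t, c t) (0, v t) := by
  simp [linearization, superposition_apply (hX.continuousOn_fderiv_of_isOpen hS le_rfl) hc]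

/-- The defect of a curve in the integral equation of `X`: the curves with defect `.const I z` are
the integral curves of `X` starting at `z`. -/
def defect (X : ℝ × E → E) (c : C(I, E)) : C(I, E) := c - primitive (superposition X (graph c))

lemma hasFDerivAt_defect (hS : IsOpen S) (hX : ContDiffOn ℝ 1 X S) {c : C(I, E)}
    (hc : range (graph c) ⊆ S) :
    HasFDerivAt (defect X) (.id ℝ C(I, E) - primitive ∘L linearization X c) c :=
  (hasFDerivAt_id c).sub
    ((primitive (E := E)).hasFDerivAt.comp c (hasFDerivAt_superposition_graph hS hX hc))

lemma contDiffOn_defect (hS : IsOpen S) (hX : ContDiffOn ℝ ∞ X S) :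
    ContDiffOn ℝ ∞ (defect X) {c | range (graph c) ⊆ S} :=
  contDiffOn_id.sub
    ((primitive (E := E)).contDiff.comp_contDiffOn (contDiffOn_superposition_graph hS hX))

lemma defect_const_of_equilibrium (hX : ContinuousOn X S) {x : E}
    (hxS : range (graph (.const I x)) ⊆ S) (hXx : ∀ t ∈ Icc (0 : ℝ) 1, X (t, x) = 0) :
    defect X (.const I x) = .const I x := by
  have hzero : superposition X (graph (.const I x)) = 0 := by
    ext t
    rw [superposition_apply hX hxS]
    exact hXx t t.2
  rw [defect, hzero, map_zero, sub_zero]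

/-- The flow of a time-dependent vector field `X` on `S`, as a smooth family over `O` of curves in
`S` parametrized by their initial value. -/
structure IsFlowOn (X : ℝ × E → E) (S : Set (ℝ × E)) (O : Set E) (γ : E → C(I, E)) : Prop where
  contDiffOn : ContDiffOn ℝ ∞ γ O
  range_graph_subset : ∀ z ∈ O, range (graph (γ z)) ⊆ S
  eq_const_add_primitive : ∀ z ∈ O, γ z = .const I z + primitive (superposition X (graph (γ z)))

lemma exists_isFlowOn_of_equilibrium [CompleteSpace E] (hS : IsOpen S) (hX : ContDiffOn ℝ ∞ X S)
    {x : E} (hxS : ∀ t ∈ Icc (0 : ℝ) 1, (t, x) ∈ S) (hXx : ∀ t ∈ Icc (0 : ℝ) 1, X (t, x) = 0)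
    (hDXx : ∀ t ∈ Icc (0 : ℝ) 1, ∀ v, fderiv ℝ X (t, x) (0, v) = 0) :
    ∃ O, IsOpen O ∧ x ∈ O ∧ ∃ γ, IsFlowOn X S O γ ∧ γ x = .const I x := by
  have hX₁ : ContDiffOn ℝ 1 X S := hX.of_le (by simp)
  have hD : IsOpen {c : C(I, E) | range (graph c) ⊆ S} :=
    (ContinuousMap.isOpen_setOfPred_range_subset hS).preimage
      (contDiff_graph (E := E) (k := 0)).continuous
  have hxD : range (graph (.const I x)) ⊆ S := range_graph_subset_iff.2 fun t => hxS t t.2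
  have hlin : linearization X (.const I x) = 0 := by
    ext v t
    rw [linearization_apply hS hX₁ hxD]
    exact hDXx t t.2 (v t)
  have hderiv : fderiv ℝ (defect X) (.const I x) = .id ℝ C(I, E) := by
    rw [(hasFDerivAt_defect hS hX₁ hxD).fderiv, hlin, ContinuousLinearMap.comp_zero, sub_zero]
  have hdefect := defect_const_of_equilibrium hX.continuousOn hxD hXx
  obtain ⟨e, he, hxe, heS, -, hsymm⟩ := exists_smooth_localInverse hD (contDiffOn_defect hS hX) hxD
    (hderiv ▸ ⟨.refl ℝ _, rfl⟩)
  have hconst : ContDiff ℝ ∞ (ContinuousMap.const I : E → C(I, E)) :=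
    (ContinuousLinearMap.const ℝ I (M := E)).contDiff
  refine ⟨ContinuousMap.const I ⁻¹' e.target, e.open_target.preimage hconst.continuous, ?_,
    fun z => e.symm (.const I z), ⟨hsymm.comp hconst.contDiffOn fun _ hz => hz,
      fun z hz => heS (e.map_target hz), fun z hz => ?_⟩, ?_⟩
  · have hmem := e.map_source hxe
    rwa [he, hdefect] at hmem
  · have hinv : defect X (e.symm (.const I z)) = .const I z := he ▸ e.right_inv hz
    exact sub_eq_iff_eq_add.1 hinv
  · have hinv := e.left_inv hxe
    rwa [he, hdefect] at hinv

namespace IsFlowOn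

variable {O : Set E} {γ : E → C(I, E)} {z : E}

lemma apply_zero (hγ : IsFlowOn X S O γ) (hz : z ∈ O) : γ z 0 = z := by
  rw [hγ.eq_const_add_primitive z hz]
  simp [primitive_apply]

lemma mem (hγ : IsFlowOn X S O γ) (hz : z ∈ O) {t : ℝ} (ht : t ∈ Icc (0 : ℝ) 1) :
    (t, IccExtend zero_le_one (γ z) t) ∈ S := by
  rw [IccExtend_of_mem _ _ ht]
  exact range_graph_subset_iff.1 (hγ.range_graph_subset z hz) ⟨t, ht⟩

lemma fderiv_eq_const_add_primitive (hγ : IsFlowOn X S O γ) (hS : IsOpen S)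
    (hX : ContDiffOn ℝ 1 X S) (hO : IsOpen O) (hz : z ∈ O) (v : E) :
    fderiv ℝ γ z v = .const I v + primitive (linearization X (γ z) (fderiv ℝ γ z v)) := by
  have hγz : HasFDerivAt γ (fderiv ℝ γ z) z :=
    ((hγ.contDiffOn.contDiffAt (hO.mem_nhds hz)).differentiableAt (by simp)).hasFDerivAt
  have hderiv := (ContinuousLinearMap.const ℝ I (M := E)).hasFDerivAt.add
    (primitive.hasFDerivAt.comp z
      ((hasFDerivAt_superposition_graph hS hX (hγ.range_graph_subset z hz)).comp z hγz))
  have heq : γ =ᶠ[𝓝 z] fun z => .const I z + primitive (superposition X (graph (γ z))) :=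
    (hO.eventually_mem hz).mono hγ.eq_const_add_primitive
  exact DFunLike.congr_fun (hγz.unique (hderiv.congr_of_eventuallyEq heq)) v

lemma fderiv_apply_zero (hγ : IsFlowOn X S O γ) (hS : IsOpen S) (hX : ContDiffOn ℝ 1 X S)
    (hO : IsOpen O) (hz : z ∈ O) (v : E) : fderiv ℝ γ z v 0 = v := by
  rw [hγ.fderiv_eq_const_add_primitive hS hX hO hz]
  simp [primitive_apply]

variable [CompleteSpace E]

lemma hasDerivWithinAt (hγ : IsFlowOn X S O γ) (hX : ContinuousOn X S) (hz : z ∈ O) {t : ℝ}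
    (ht : t ∈ Icc (0 : ℝ) 1) :
    HasDerivWithinAt (IccExtend zero_le_one (γ z)) (X (t, IccExtend zero_le_one (γ z) t))
      (Icc 0 1) t := by
  have hderiv := hasDerivWithinAt_IccExtend_of_eq_const_add_primitive
    (hγ.eq_const_add_primitive z hz) ⟨t, ht⟩
  rwa [superposition_apply hX (hγ.range_graph_subset z hz), graph_apply,
    ← IccExtend_of_mem zero_le_one (γ z) ht] at hderiv

lemma hasDerivWithinAt_fderiv (hγ : IsFlowOn X S O γ) (hS : IsOpen S) (hX : ContDiffOn ℝ 1 X S)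
    (hO : IsOpen O) (hz : z ∈ O) (v : E) {t : ℝ} (ht : t ∈ Icc (0 : ℝ) 1) :
    HasDerivWithinAt (IccExtend zero_le_one (fderiv ℝ γ z v))
      (fderiv ℝ X (t, IccExtend zero_le_one (γ z) t)
        (0, IccExtend zero_le_one (fderiv ℝ γ z v) t)) (Icc 0 1) t := by
  have hderiv := hasDerivWithinAt_IccExtend_of_eq_const_add_primitive
    (hγ.fderiv_eq_const_add_primitive hS hX hO hz v) ⟨t, ht⟩
  rwa [linearization_apply hS hX (hγ.range_graph_subset z hz),
    ← IccExtend_of_mem zero_le_one (γ z) ht,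
    ← IccExtend_of_mem zero_le_one (fderiv ℝ γ z v) ht] at hderiv

end IsFlowOn

end Flow

section Antisymmetry

variable {M E F : Type*} [NormedAddCommGroup M] [NormedSpace ℝ M] [NormedAddCommGroup E]
  [NormedSpace ℝ E] [NormedAddCommGroup F] [NormedSpace ℝ F]

lemma fderiv_antisymm {Θ : M → E →L[ℝ] E →L[ℝ] F} {p : M}
    (hΘ : ∀ᶠ q in 𝓝 p, ∀ a b, Θ q a b = -Θ q b a) (m : M) (a b : E) :
    fderiv ℝ Θ p m a b = -fderiv ℝ Θ p m b a := by
  let flipE : (E →L[ℝ] E →L[ℝ] F) ≃L[ℝ] (E →L[ℝ] E →L[ℝ] F) :=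
    (ContinuousLinearMap.flipₗᵢ ℝ E E F).toContinuousLinearEquiv
  have hflip : Θ =ᶠ[𝓝 p] fun q => -flipE (Θ q) := hΘ.mono fun q hq => by ext a b; exact hq a b
  have hfderiv : fderiv ℝ Θ p = -fderiv ℝ (fun q => flipE (Θ q)) p := by
    rw [← fderiv_fun_neg, ← hflip.fderiv_eq]
  exact congr($hfderiv m a b).trans congr(-$(flipE.comp_fderiv (f := Θ)) m a b)

end Antisymmetry

section Poincare

universe u

variable {E : Type u} [NormedAddCommGroup E] [NormedSpace ℝ E]

/-- Closedness at a point of the 2-form with coefficients `Ω`: the alternating sum of the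
derivatives, i.e. the exterior derivative of `Ω`, vanishes there. -/
def IsClosedAt (Ω : E → E →L[ℝ] E →L[ℝ] ℝ) (y : E) : Prop :=
  ∀ a b c, fderiv ℝ Ω y a b c + fderiv ℝ Ω y b c a + fderiv ℝ Ω y c a b = 0

/-- The integrand, as a function of `(t, y)`, of the homotopy formula along the rays from `x`. -/
def radialIntegrand (Ω : E → E →L[ℝ] E →L[ℝ] ℝ) (x : E) (p : ℝ × E) : E →L[ℝ] ℝ :=
  p.1 • Ω (x + p.1 • (p.2 - x)) (p.2 - x)

/-- The primitive of the 2-form `Ω` given by the homotopy formula along the rays from `x`. -/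
def radialPrimitive (Ω : E → E →L[ℝ] E →L[ℝ] ℝ) (x y : E) : E →L[ℝ] ℝ :=
  ∫ t in (0 : ℝ)..1, radialIntegrand Ω x (t, y)

variable {Ω : E → E →L[ℝ] E →L[ℝ] ℝ} {O : Set E} {x y : E}

lemma isOpen_setOf_ray_mem (hO : IsOpen O) : IsOpen {p : ℝ × E | x + p.1 • (p.2 - x) ∈ O} :=
  hO.preimage (by fun_prop)

lemma contDiffOn_radialIntegrand {k : WithTop ℕ∞} (hΩ : ContDiffOn ℝ k Ω O) :
    ContDiffOn ℝ k (radialIntegrand Ω x)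
      {p | x + p.1 • (p.2 - x) ∈ O} := by
  have hray : ContDiff ℝ k fun p : ℝ × E => x + p.1 • (p.2 - x) := by fun_prop
  exact contDiffOn_fst.smul ((hΩ.comp hray.contDiffOn fun _ hp => hp).clm_apply
    (contDiffOn_snd.sub contDiffOn_const))

lemma fderiv_radialIntegrand_apply (hO : IsOpen O) (hΩ : ContDiffOn ℝ 1 Ω O) {t : ℝ}
    (ht : x + t • (y - x) ∈ O) (a b : E) :
    fderiv ℝ (radialIntegrand Ω x) (t, y) (0, a) b =
      t ^ 2 * fderiv ℝ Ω (x + t • (y - x)) a (y - x) b + t * Ω (x + t • (y - x)) a b := by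
  have hΩ' : HasFDerivAt Ω (fderiv ℝ Ω (x + t • (y - x))) (x + t • (y - x)) :=
    ((hΩ.contDiffAt (hO.mem_nhds ht)).differentiableAt one_ne_zero).hasFDerivAt
  have hsub : HasFDerivAt (fun z => z - x) (.id ℝ E) y := (hasFDerivAt_id y).sub_const x
  have hray : HasFDerivAt (fun z => x + t • (z - x)) (t • .id ℝ E) y :=
    (hsub.const_smul t).const_add x
  have hpartial := ((HasFDerivAt.comp y hΩ' hray).clm_apply hsub).const_smul t
  have htotal := (((contDiffOn_radialIntegrand hΩ).contDiffAt
    ((isOpen_setOf_ray_mem hO).mem_nhds (x := (t, y)) ht)).differentiableAt one_ne_zero).hasFDerivAt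
  have hchain := (htotal.comp y (hasFDerivAt_prodMk_right t y)).unique hpartial
  refine congr($hchain a b).trans ?_
  simp
  ring

lemma contDiffOn_radialPrimitive (hO : IsOpen O) (hx : StarConvex ℝ x O)
    (hΩ : ContDiffOn ℝ ∞ Ω O) : ContDiffOn ℝ ∞ (radialPrimitive Ω x) O :=
  contDiffOn_integral (isOpen_setOf_ray_mem hO) (contDiffOn_radialIntegrand hΩ)
    fun _ hy _ ht => hx.add_smul_sub_mem hy ht.1 ht.2

@[simp] lemma radialPrimitive_self : radialPrimitive Ω x x = 0 := by
  simp [radialPrimitive, radialIntegrand]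

lemma intervalIntegrable_fderiv_radialIntegrand (hO : IsOpen O) (hx : StarConvex ℝ x O)
    (hΩ : ContDiffOn ℝ 1 Ω O) (hy : y ∈ O) (a : E) :
    IntervalIntegrable (fun t => fderiv ℝ (radialIntegrand Ω x) (t, y) (0, a))
      MeasureTheory.volume 0 1 := by
  refine ContinuousOn.intervalIntegrable ?_
  rw [uIcc_of_le zero_le_one]
  have hcont := (contDiffOn_radialIntegrand (x := x) hΩ).continuousOn_fderiv_of_isOpen
    (isOpen_setOf_ray_mem hO) le_rfl
  exact (hcont.comp (f := fun t : ℝ => (t, y)) (by fun_prop)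
    fun t ht => hx.add_smul_sub_mem hy ht.1 ht.2).clm_apply continuousOn_const

lemma fderiv_radialPrimitive (hO : IsOpen O) (hx : StarConvex ℝ x O) (hΩ : ContDiffOn ℝ 1 Ω O)
    (hy : y ∈ O) (a b : E) :
    fderiv ℝ (radialPrimitive Ω x) y a b = ∫ t in (0 : ℝ)..1,
      (t ^ 2 * fderiv ℝ Ω (x + t • (y - x)) a (y - x) b + t * Ω (x + t • (y - x)) a b) := by
  have hmem : ∀ y ∈ O, ∀ t ∈ Icc (0 : ℝ) 1, x + t • (y - x) ∈ O :=
    fun y hy t ht => hx.add_smul_sub_mem hy ht.1 ht.2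
  have hfderiv := fderiv_integral_apply (isOpen_setOf_ray_mem hO) (contDiffOn_radialIntegrand hΩ) hO
    hmem hy a
  rw [show radialPrimitive Ω x = fun y => ∫ t in (0 : ℝ)..1, radialIntegrand Ω x (t, y) from rfl,
    hfderiv, ContinuousLinearMap.intervalIntegral_apply
      (intervalIntegrable_fderiv_radialIntegrand hO hx hΩ hy a)]
  refine intervalIntegral.integral_congr fun t ht => ?_
  rw [uIcc_of_le zero_le_one] at ht
  exact fderiv_radialIntegrand_apply hO hΩ (hmem y hy t ht) a b

lemma hasDerivAt_sq_mul_ray (hO : IsOpen O) (hΩ : ContDiffOn ℝ 1 Ω O) {h : E} {t : ℝ}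
    (ht : x + t • h ∈ O) (a b : E) :
    HasDerivAt (fun t : ℝ => t ^ 2 * Ω (x + t • h) a b)
      (2 * t * Ω (x + t • h) a b + t ^ 2 * fderiv ℝ Ω (x + t • h) h a b) t := by
  have hΩ' : HasFDerivAt Ω (fderiv ℝ Ω (x + t • h)) (x + t • h) :=
    ((hΩ.contDiffAt (hO.mem_nhds ht)).differentiableAt one_ne_zero).hasFDerivAt
  have hray : HasDerivAt (fun t : ℝ => x + t • h) h t := by
    simpa using ((hasDerivAt_id t).smul_const h).const_add x
  have hΩray : HasDerivAt (fun t => Ω (x + t • h)) (fderiv ℝ Ω (x + t • h) h) t :=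
    hΩ'.comp_hasDerivAt t hray
  have happly := (hΩray.clm_apply (hasDerivAt_const t a)).clm_apply (hasDerivAt_const t b)
  simpa using (hasDerivAt_pow 2 t).fun_mul happly

lemma continuousOn_ray {G : Type*} [TopologicalSpace G] {g : E → G} (hg : ContinuousOn g O) {h : E}
    (hmem : ∀ t ∈ Icc (0 : ℝ) 1, x + t • h ∈ O) :
    ContinuousOn (fun t : ℝ => g (x + t • h)) (uIcc 0 1) :=
  hg.comp (by fun_prop) fun t ht => hmem t (uIcc_of_le (zero_le_one' ℝ) ▸ ht)

lemma integral_deriv_sq_mul_ray (hO : IsOpen O) (hΩ : ContDiffOn ℝ 1 Ω O) {h : E}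
    (hmem : ∀ t ∈ Icc (0 : ℝ) 1, x + t • h ∈ O) (a b : E) :
    ∫ t in (0 : ℝ)..1, (2 * t * Ω (x + t • h) a b + t ^ 2 * fderiv ℝ Ω (x + t • h) h a b) =
      Ω (x + h) a b := by
  have hcontΩ := continuousOn_ray hΩ.continuousOn hmem
  have hcontDΩ := continuousOn_ray (hΩ.continuousOn_fderiv_of_isOpen hO le_rfl) hmem
  rw [intervalIntegral.integral_eq_sub_of_hasDerivAt
    (fun t ht => hasDerivAt_sq_mul_ray hO hΩ (hmem t (uIcc_of_le (zero_le_one' ℝ) ▸ ht)) a b)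
    (ContinuousOn.intervalIntegrable <| ((continuousOn_const.mul continuousOn_id).mul
      ((hcontΩ.clm_apply continuousOn_const).clm_apply continuousOn_const)).add
        ((continuousOn_pow 2).mul (((hcontDΩ.clm_apply continuousOn_const).clm_apply
          continuousOn_const).clm_apply continuousOn_const)))]
  simp

theorem fderiv_radialPrimitive_sub_swap (hO : IsOpen O) (hx : StarConvex ℝ x O)
    (hΩ : ContDiffOn ℝ 1 Ω O) (hanti : ∀ y ∈ O, ∀ a b, Ω y a b = -Ω y b a)
    (hclosed : ∀ y ∈ O, IsClosedAt Ω y) (hy : y ∈ O) (a b : E) :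
    fderiv ℝ (radialPrimitive Ω x) y a b - fderiv ℝ (radialPrimitive Ω x) y b a = Ω y a b := by
  have hmem : ∀ t ∈ Icc (0 : ℝ) 1, x + t • (y - x) ∈ O :=
    fun t ht => hx.add_smul_sub_mem hy ht.1 ht.2
  have hcontΩ := continuousOn_ray hΩ.continuousOn hmem
  have hcontDΩ := continuousOn_ray (hΩ.continuousOn_fderiv_of_isOpen hO le_rfl) hmem
  have hintegrable : ∀ a b, IntervalIntegrable (fun t : ℝ =>
      t ^ 2 * fderiv ℝ Ω (x + t • (y - x)) a (y - x) b + t * Ω (x + t • (y - x)) a b)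
      MeasureTheory.volume 0 1 := fun a b => ContinuousOn.intervalIntegrable <|
    ((continuousOn_pow 2).mul (((hcontDΩ.clm_apply continuousOn_const).clm_apply
      continuousOn_const).clm_apply continuousOn_const)).add (continuousOn_id.mul
        ((hcontΩ.clm_apply continuousOn_const).clm_apply continuousOn_const))
  rw [fderiv_radialPrimitive hO hx hΩ hy, fderiv_radialPrimitive hO hx hΩ hy,
    ← intervalIntegral.integral_sub (hintegrable a b) (hintegrable b a)]
  calc
    _ = ∫ t in (0 : ℝ)..1, (2 * t * Ω (x + t • (y - x)) a b +
        t ^ 2 * fderiv ℝ Ω (x + t • (y - x)) (y - x) a b) := by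
      refine intervalIntegral.integral_congr fun t ht => ?_
      rw [uIcc_of_le zero_le_one] at ht
      have hanti' := hanti _ (hmem t ht) a b
      have hswap := fderiv_antisymm
        ((hO.eventually_mem (hmem t ht)).mono fun z hz => hanti z hz) a (y - x) b
      linear_combination -t ^ 2 * hclosed _ (hmem t ht) (y - x) a b + t ^ 2 * hswap - t * hanti'
    _ = Ω y a b := by simpa using integral_deriv_sq_mul_ray hO hΩ hmem a b

lemma fderiv_radialPrimitive_self (hO : IsOpen O) (hx : StarConvex ℝ x O) (hxO : x ∈ O)
    (hΩ : ContDiffOn ℝ 1 Ω O) : fderiv ℝ (radialPrimitive Ω x) x = (1 / 2 : ℝ) • Ω x := by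
  ext a b
  simp [fderiv_radialPrimitive hO hx hΩ hxO]

end Poincare

section Moser

universe u

variable {E : Type u} [NormedAddCommGroup E] [NormedSpace ℝ E] {S : Set (ℝ × E)}
  {Θ : ℝ × E → E →L[ℝ] E →L[ℝ] ℝ} {X : ℝ × E → E}

section

variable {α : E → E →L[ℝ] ℝ} {p : ℝ × E}

lemma fderiv_apply_add_apply_fderiv (hΘ : DifferentiableAt ℝ Θ p) (hX : DifferentiableAt ℝ X p)
    (hα : DifferentiableAt ℝ α p.2) (hXα : ∀ᶠ q in 𝓝 p, Θ q (X q) = -α q.2) (m : ℝ × E) :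
    fderiv ℝ Θ p m (X p) + Θ p (fderiv ℝ X p m) = -fderiv ℝ α p.2 m.2 := by
  have hleft := hΘ.hasFDerivAt.clm_apply hX.hasFDerivAt
  have hright := (hα.hasFDerivAt.comp p hasFDerivAt_snd).neg
  have hunique := (hleft.congr_of_eventuallyEq (hXα.mono fun q hq => hq.symm)).unique hright
  exact (add_comm _ _).trans congr($hunique m)

/-- Moser's trick: by Cartan's formula, if `ι_X Θ = -α` and `∂_t Θ = dα` then the Lie derivative of
the time-dependent closed 2-form `Θ` along `∂_t + X` vanishes. -/
lemma fderiv_apply_add_apply_fderiv_add_eq_zero (hΘ : DifferentiableAt ℝ Θ p)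
    (hX : DifferentiableAt ℝ X p) (hα : DifferentiableAt ℝ α p.2)
    (hanti : ∀ᶠ q in 𝓝 p, ∀ a b, Θ q a b = -Θ q b a)
    (hclosed : ∀ a b c, fderiv ℝ Θ p (0, a) b c + fderiv ℝ Θ p (0, b) c a +
      fderiv ℝ Θ p (0, c) a b = 0)
    (hXα : ∀ᶠ q in 𝓝 p, Θ q (X q) = -α q.2)
    (hΘα : ∀ a b, fderiv ℝ Θ p (1, 0) a b = fderiv ℝ α p.2 a b - fderiv ℝ α p.2 b a) (a b : E) :
    fderiv ℝ Θ p (1, X p) a b + Θ p (fderiv ℝ X p (0, a)) b + Θ p a (fderiv ℝ X p (0, b)) = 0 := by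
  have hcontract : ∀ a b, fderiv ℝ Θ p (0, a) (X p) b + Θ p (fderiv ℝ X p (0, a)) b =
      -fderiv ℝ α p.2 a b :=
    fun a b => congr($(fderiv_apply_add_apply_fderiv hΘ hX hα hXα (0, a)) b)
  have hsplit : fderiv ℝ Θ p (1, X p) a b =
      fderiv ℝ Θ p (1, 0) a b + fderiv ℝ Θ p (0, X p) a b := by
    rw [← add_apply, ← add_apply, ← map_add, Prod.mk_add_mk, add_zero, zero_add]
  linear_combination hsplit + hcontract a b - hcontract b a + hΘα a b + hclosed (X p) a b -
    fderiv_antisymm hanti (0, a) (X p) b + hanti.self_of_nhds a (fderiv ℝ X p (0, b))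

end

lemma IsFlowOn.apply_fderiv_fderiv_one [CompleteSpace E] {O : Set E} {γ : E → C(I, E)}
    (hγ : IsFlowOn X S O γ) (hS : IsOpen S) (hX : ContDiffOn ℝ 1 X S) (hΘ : ContDiffOn ℝ 1 Θ S)
    (hLie : ∀ p ∈ S, ∀ a b, fderiv ℝ Θ p (1, X p) a b + Θ p (fderiv ℝ X p (0, a)) b +
      Θ p a (fderiv ℝ X p (0, b)) = 0) (hO : IsOpen O) {z : E} (hz : z ∈ O) (v w : E) :
    Θ (1, γ z 1) (fderiv ℝ γ z v 1) (fderiv ℝ γ z w 1) = Θ (0, z) v w := by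
  let c := IccExtend zero_le_one (γ z)
  let D := fun v => IccExtend zero_le_one (fderiv ℝ γ z v)
  have hderiv : ∀ t ∈ Icc (0 : ℝ) 1,
      HasDerivWithinAt (fun t => Θ (t, c t) (D v t) (D w t)) 0 (Icc 0 1) t := by
    intro t ht
    have hmem : (t, c t) ∈ S := hγ.mem hz ht
    have hΘt : HasFDerivAt Θ (fderiv ℝ Θ (t, c t)) (t, c t) :=
      ((hΘ.contDiffAt (hS.mem_nhds hmem)).differentiableAt one_ne_zero).hasFDerivAt
    have hcurve := hΘt.comp_hasDerivWithinAt (f := fun t => (t, c t)) t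
      ((hasDerivWithinAt_id t _).prodMk (hγ.hasDerivWithinAt hX.continuousOn hz ht))
    have hΘcurve := (hcurve.clm_apply (hγ.hasDerivWithinAt_fderiv hS hX hO hz v ht)).clm_apply
      (hγ.hasDerivWithinAt_fderiv hS hX hO hz w ht)
    exact hΘcurve.congr_deriv (hLie _ hmem (D v t) (D w t))
  have hconst := constant_of_derivWithin_zero (fun t ht => (hderiv t ht).differentiableWithinAt)
    (fun t ht => (hderiv t ⟨ht.1, ht.2.le⟩).derivWithin
      (uniqueDiffOn_Icc zero_lt_one t ⟨ht.1, ht.2.le⟩)) 1 (right_mem_Icc.2 zero_le_one)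
  simpa [c, D, hγ.apply_zero hz, hγ.fderiv_apply_zero hS hX hO hz] using hconst

end Moser

section DarbouxForm

universe u

variable {E : Type u} [NormedAddCommGroup E] [NormedSpace ℝ E] {Ω : E → E →L[ℝ] E →L[ℝ] ℝ}
  {O : Set E} {x : E}

/-- The segment from the constant form `Ω x` to the form `Ω`, as a time-dependent form. -/
def moserForm (Ω : E → E →L[ℝ] E →L[ℝ] ℝ) (x : E) (p : ℝ × E) : E →L[ℝ] E →L[ℝ] ℝ :=
  Ω x + p.1 • (Ω p.2 - Ω x)

/-- The 1-form with exterior derivative `Ω - Ω x` that drives Moser's argument. -/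
def moserPrimitive (Ω : E → E →L[ℝ] E →L[ℝ] ℝ) (x : E) : E → E →L[ℝ] ℝ :=
  radialPrimitive (fun y => Ω y - Ω x) x

/-- The time-dependent vector field whose flow carries the constant form `Ω x` to `Ω`. It is only
meaningful on `moserDomain Ω O x`, as `ContinuousLinearMap.inverse` is zero off the invertible
maps. -/
def moserField (Ω : E → E →L[ℝ] E →L[ℝ] ℝ) (x : E) (p : ℝ × E) : E :=
  -(moserForm Ω x p).inverse (moserPrimitive Ω x p.2)

/-- The part of `ℝ × O` where the interpolating form is nondegenerate. -/
def moserDomain (Ω : E → E →L[ℝ] E →L[ℝ] ℝ) (O : Set E) (x : E) : Set (ℝ × E) :=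
  Prod.snd ⁻¹' O ∩ moserForm Ω x ⁻¹' {A | A.IsInvertible}

lemma moserForm_center (t : ℝ) : moserForm Ω x (t, x) = Ω x := by simp [moserForm]

lemma moserForm_zero (z : E) : moserForm Ω x (0, z) = Ω x := by simp [moserForm]

lemma moserForm_one (z : E) : moserForm Ω x (1, z) = Ω z := by simp [moserForm]

lemma moserForm_antisymm (hxO : x ∈ O) (hanti : ∀ y ∈ O, ∀ a b, Ω y a b = -Ω y b a) {p : ℝ × E}
    (hp : p.2 ∈ O) (a b : E) : moserForm Ω x p a b = -moserForm Ω x p b a := by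
  simp only [moserForm, add_apply, smul_apply, sub_apply, smul_eq_mul]
  linear_combination (1 - p.1) * hanti x hxO a b + p.1 * hanti p.2 hp a b

lemma contDiffOn_moserForm {k : WithTop ℕ∞} (hΩ : ContDiffOn ℝ k Ω O) :
    ContDiffOn ℝ k (moserForm Ω x) (Prod.snd ⁻¹' O) :=
  contDiffOn_const.add (contDiffOn_fst.smul
    ((hΩ.comp contDiffOn_snd fun _ hp => hp).sub contDiffOn_const))

lemma fderiv_moserForm {p : ℝ × E} (hΩ : DifferentiableAt ℝ Ω p.2) (m : ℝ × E) :
    fderiv ℝ (moserForm Ω x) p m = p.1 • fderiv ℝ Ω p.2 m.2 + m.1 • (Ω p.2 - Ω x) := by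
  have hderiv := ((hasFDerivAt_fst (p := p)).smul
    ((hΩ.hasFDerivAt.comp p hasFDerivAt_snd).sub_const (Ω x))).const_add (Ω x)
  exact congr($hderiv.fderiv m)

lemma isOpen_moserDomain [CompleteSpace E] (hO : IsOpen O) (hΩ : ContinuousOn Ω O) :
    IsOpen (moserDomain Ω O x) :=
  (contDiffOn_moserForm (contDiffOn_zero.2 hΩ)).continuousOn.isOpen_inter_preimage
    (hO.preimage continuous_snd) isOpen_setOf_isInvertible

lemma mk_mem_moserDomain (hxO : x ∈ O) (hinv : (Ω x).IsInvertible) (t : ℝ) :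
    (t, x) ∈ moserDomain Ω O x :=
  ⟨hxO, by rwa [mem_preimage, moserForm_center]⟩

lemma moserForm_moserField {p : ℝ × E} (hp : p ∈ moserDomain Ω O x) :
    moserForm Ω x p (moserField Ω x p) = -moserPrimitive Ω x p.2 := by
  rw [moserField, map_neg, hp.2.self_apply_inverse]

lemma moserPrimitive_center : moserPrimitive Ω x x = 0 := radialPrimitive_self

lemma moserField_center (t : ℝ) : moserField Ω x (t, x) = 0 := by
  rw [moserField, moserPrimitive_center, map_zero, neg_zero]

section StarConvex

variable (hO : IsOpen O) (hx : StarConvex ℝ x O)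

include hO hx

lemma contDiffOn_moserPrimitive (hΩ : ContDiffOn ℝ ∞ Ω O) :
    ContDiffOn ℝ ∞ (moserPrimitive Ω x) O :=
  contDiffOn_radialPrimitive hO hx (hΩ.sub contDiffOn_const)

lemma contDiffOn_moserField [CompleteSpace E] (hΩ : ContDiffOn ℝ ∞ Ω O) :
    ContDiffOn ℝ ∞ (moserField Ω x) (moserDomain Ω O x) := by
  have hform := (contDiffOn_moserForm (x := x) hΩ).mono
    (inter_subset_left (t := moserForm Ω x ⁻¹' {A | A.IsInvertible}))
  have hinverse : ContDiffOn ℝ ∞ (fun p => (moserForm Ω x p).inverse) (moserDomain Ω O x) :=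
    fun p hp => hp.2.contDiffAt_map_inverse.comp_contDiffWithinAt p (hform p hp)
  exact (hinverse.clm_apply ((contDiffOn_moserPrimitive hO hx hΩ).comp contDiffOn_snd
    fun _ hp => hp.1)).neg

variable (hxO : x ∈ O)

include hxO

lemma fderiv_moserPrimitive_sub_swap (hΩ : ContDiffOn ℝ 1 Ω O)
    (hanti : ∀ y ∈ O, ∀ a b, Ω y a b = -Ω y b a) (hclosed : ∀ y ∈ O, IsClosedAt Ω y) {y : E}
    (hy : y ∈ O) (a b : E) :
    fderiv ℝ (moserPrimitive Ω x) y a b - fderiv ℝ (moserPrimitive Ω x) y b a =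
      Ω y a b - Ω x a b := by
  refine fderiv_radialPrimitive_sub_swap hO hx (hΩ.sub contDiffOn_const) (fun y hy a b => ?_)
    (fun y hy a b c => ?_) hy a b
  · simp only [sub_apply]
    linear_combination hanti y hy a b - hanti x hxO a b
  · simpa only [fderiv_sub_const] using hclosed y hy a b c

lemma fderiv_moserPrimitive_center (hΩ : ContDiffOn ℝ 1 Ω O) :
    fderiv ℝ (moserPrimitive Ω x) x = 0 := by
  rw [moserPrimitive, fderiv_radialPrimitive_self hO hx hxO (hΩ.sub contDiffOn_const), sub_self,
    smul_zero]

variable [CompleteSpace E] (hΩ : ContDiffOn ℝ ∞ Ω O)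

include hΩ

lemma fderiv_moserField_center (hinv : (Ω x).IsInvertible) (t : ℝ) (v : E) :
    fderiv ℝ (moserField Ω x) (t, x) (0, v) = 0 := by
  have hmem := mk_mem_moserDomain hxO hinv t
  have hdom := isOpen_moserDomain (x := x) hO hΩ.continuousOn
  have hcontract := fderiv_apply_add_apply_fderiv
    (((contDiffOn_moserForm hΩ).contDiffAt ((hO.preimage continuous_snd).mem_nhds
      (x := (t, x)) hxO)).differentiableAt (by simp))
    (((contDiffOn_moserField hO hx hΩ).contDiffAt (hdom.mem_nhds hmem)).differentiableAt (by simp))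
    (((contDiffOn_moserPrimitive hO hx hΩ).contDiffAt (hO.mem_nhds hxO)).differentiableAt (by simp))
    ((hdom.eventually_mem hmem).mono fun q hq => moserForm_moserField hq) (0, v)
  rw [moserField_center, map_zero, zero_add, moserForm_center,
    fderiv_moserPrimitive_center hO hx hxO (hΩ.of_le (by simp)), zero_apply, neg_zero] at hcontract
  exact hinv.injective (hcontract.trans (map_zero _).symm)

lemma fderiv_moserForm_add_eq_zero (hanti : ∀ y ∈ O, ∀ a b, Ω y a b = -Ω y b a)
    (hclosed : ∀ y ∈ O, IsClosedAt Ω y) {p : ℝ × E} (hp : p ∈ moserDomain Ω O x) (a b : E) :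
    fderiv ℝ (moserForm Ω x) p (1, moserField Ω x p) a b +
      moserForm Ω x p (fderiv ℝ (moserField Ω x) p (0, a)) b +
      moserForm Ω x p a (fderiv ℝ (moserField Ω x) p (0, b)) = 0 := by
  have hdom := isOpen_moserDomain (x := x) hO hΩ.continuousOn
  have hΩp := (hΩ.contDiffAt (hO.mem_nhds hp.1)).differentiableAt (by simp)
  refine fderiv_apply_add_apply_fderiv_add_eq_zero
    (((contDiffOn_moserForm hΩ).contDiffAt
      ((hO.preimage continuous_snd).mem_nhds hp.1)).differentiableAt (by simp))
    (((contDiffOn_moserField hO hx hΩ).contDiffAt (hdom.mem_nhds hp)).differentiableAt (by simp))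
    (((contDiffOn_moserPrimitive hO hx hΩ).contDiffAt
      (hO.mem_nhds hp.1)).differentiableAt (by simp))
    ((hdom.eventually_mem hp).mono fun q hq => moserForm_antisymm hxO hanti hq.1)
    (fun a b c => ?_) ((hdom.eventually_mem hp).mono fun q hq => moserForm_moserField hq)
    (fun a b => ?_) a b
  · simp only [fderiv_moserForm hΩp, zero_smul, add_zero, smul_apply, smul_eq_mul]
    linear_combination p.1 * hclosed p.2 hp.1 a b c
  · rw [fderiv_moserPrimitive_sub_swap hO hx hxO (hΩ.of_le (by simp)) hanti hclosed hp.1]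
    simp [fderiv_moserForm hΩp]

theorem exists_pullback_eq_const (hanti : ∀ y ∈ O, ∀ a b, Ω y a b = -Ω y b a)
    (hclosed : ∀ y ∈ O, IsClosedAt Ω y) (hinv : (Ω x).IsInvertible) :
    ∃ N, IsOpen N ∧ x ∈ N ∧ ∃ ψ : E → E, ContDiffOn ℝ ∞ ψ N ∧ MapsTo ψ N O ∧ ψ x = x ∧
      fderiv ℝ ψ x = .id ℝ E ∧
      ∀ z ∈ N, ∀ v w, Ω (ψ z) (fderiv ℝ ψ z v) (fderiv ℝ ψ z w) = Ω x v w := by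
  have hS := isOpen_moserDomain (x := x) hO hΩ.continuousOn
  have hX := contDiffOn_moserField hO hx hΩ
  have hX₁ := hX.of_le (m := 1) (by simp)
  obtain ⟨N, hN, hxN, γ, hγ, hγx⟩ := exists_isFlowOn_of_equilibrium hS hX
    (fun t _ => mk_mem_moserDomain hxO hinv t) (fun t _ => moserField_center t)
    fun t _ => fderiv_moserField_center hO hx hxO hΩ hinv t
  let evalOne : C(I, E) →L[ℝ] E := ContinuousMap.evalCLM ℝ 1
  have hfderiv : ∀ z ∈ N, ∀ v, fderiv ℝ (fun z => γ z 1) z v = fderiv ℝ γ z v 1 := fun z hz v =>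
    congr($((evalOne.hasFDerivAt.comp z ((hγ.contDiffOn.contDiffAt
      (hN.mem_nhds hz)).differentiableAt (by simp)).hasFDerivAt).fderiv) v)
  have hlin : linearization (moserField Ω x) (γ x) = 0 := by
    ext v t
    rw [linearization_apply hS hX₁ (hγ.range_graph_subset x hxN), hγx]
    exact fderiv_moserField_center hO hx hxO hΩ hinv t (v t)
  refine ⟨N, hN, hxN, fun z => γ z 1, evalOne.contDiff.comp_contDiffOn hγ.contDiffOn,
    fun z hz => ?_, congr($hγx 1), ?_, fun z hz v w => ?_⟩
  · exact (range_graph_subset_iff.1 (hγ.range_graph_subset z hz) 1).1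
  · ext v
    rw [hfderiv x hxN, hγ.fderiv_eq_const_add_primitive hS hX₁ hN hxN, hlin]
    simp
  · have hpullback := hγ.apply_fderiv_fderiv_one hS hX₁ ((contDiffOn_moserForm (hΩ.of_le
      (by simp))).mono inter_subset_left)
      (fun p => fderiv_moserForm_add_eq_zero hO hx hxO hΩ hanti hclosed) hN hz v w
    rwa [moserForm_one, moserForm_zero, ← hfderiv z hz, ← hfderiv z hz] at hpullback

end StarConvex

theorem exists_chart_form_eq_const [CompleteSpace E] {U : Set E} (hU : IsOpen U)
    (hΩ : ContDiffOn ℝ ∞ Ω U)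
    (hanti : ∀ y ∈ U, ∀ a b, Ω y a b = -Ω y b a) (hclosed : ∀ y ∈ U, IsClosedAt Ω y) (hxU : x ∈ U)
    (hinv : (Ω x).IsInvertible) :
    ∃ u : OpenPartialHomeomorph E E, x ∈ u.source ∧ u.source ⊆ U ∧ ContDiffOn ℝ ∞ u u.source ∧
      ∀ y ∈ u.source, (fderiv ℝ u y).IsInvertible ∧
        ∀ v w, Ω x (fderiv ℝ u y v) (fderiv ℝ u y w) = Ω y v w := by
  obtain ⟨r, hr, hrU⟩ := Metric.isOpen_iff.1 hU x hxU
  obtain ⟨N, hN, hxN, ψ, hψ, hψU, hψx, hDψx, hψΩ⟩ := exists_pullback_eq_const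
    Metric.isOpen_ball ((convex_ball x r).starConvex (Metric.mem_ball_self hr))
    (Metric.mem_ball_self hr) (hΩ.mono hrU) (fun y hy => hanti y (hrU hy))
    (fun y hy => hclosed y (hrU hy)) hinv
  obtain ⟨e, he, hxe, heN, hDe, hsymm⟩ := exists_smooth_localInverse hN hψ hxN
    (hDψx ▸ ⟨.refl ℝ E, rfl⟩)
  refine ⟨e.symm, ?_, fun y hy => ?_, hsymm, fun y hy => ?_⟩
  · simpa [he, hψx] using e.map_source hxe
  · have hmem := hrU (hψU (heN (e.map_target hy)))
    rwa [← he, e.right_inv hy] at hmem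
  · have hsource := e.map_target hy
    obtain ⟨g, hg⟩ := hDe _ hsource
    have hderiv : HasFDerivAt e (g : E →L[ℝ] E) (e.symm y) := by
      rw [he, hg]
      exact ((hψ.contDiffAt (hN.mem_nhds (heN hsource))).differentiableAt (by simp)).hasFDerivAt
    rw [(e.hasFDerivAt_symm hy hderiv).fderiv]
    refine ⟨⟨g.symm, rfl⟩, fun v w => ?_⟩
    have hpullback := hψΩ _ (heN hsource) (g.symm v) (g.symm w)
    rw [← hg, ← he, e.right_inv hy] at hpullback
    simpa using hpullback.symm

end DarbouxForm

section Bivector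

section Inverse

variable {M E F : Type*} [NormedAddCommGroup M] [NormedSpace ℝ M] [NormedAddCommGroup E]
  [NormedSpace ℝ E] [CompleteSpace E] [NormedAddCommGroup F] [NormedSpace ℝ F]

lemma fderiv_clm_inverse_apply {A : M → E →L[ℝ] F} {y : M} (hA : DifferentiableAt ℝ A y)
    (hinv : (A y).IsInvertible) (m : M) (w : F) :
    fderiv ℝ (fun z => (A z).inverse) y m w =
      -(A y).inverse (fderiv ℝ A y m ((A y).inverse w)) := by
  have hinverse : DifferentiableAt ℝ (fun z => (A z).inverse) y :=
    ((hinv.contDiffAt_map_inverse (n := 1)).differentiableAt one_ne_zero).comp y hA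
  have hproduct := hA.hasFDerivAt.clm_apply
    (hinverse.hasFDerivAt.clm_apply (hasFDerivAt_const w y))
  have hconst : (fun z => A z ((A z).inverse w)) =ᶠ[𝓝 y] fun _ => w :=
    (hA.continuousAt.eventually_mem (isOpen_setOf_isInvertible.mem_nhds hinv)).mono
      fun z hz => hz.self_apply_inverse w
  have hzero : A y (fderiv ℝ (fun z => (A z).inverse) y m w) +
      fderiv ℝ A y m ((A y).inverse w) = 0 := by
    simpa using congr($(hproduct.unique ((hasFDerivAt_const w y).congr_of_eventuallyEq hconst)) m)
  rw [← hinv.inverse_apply_self (fderiv ℝ (fun z => (A z).inverse) y m w),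
    eq_neg_of_add_eq_zero_left hzero, map_neg]

end Inverse

universe u

variable {E : Type u} [NormedAddCommGroup E] [NormedSpace ℝ E] {B : E → (E →L[ℝ] ℝ) →L[ℝ] E} {y : E}

lemma inverse_antisymm {A : (E →L[ℝ] ℝ) →L[ℝ] E} (hA : A.IsInvertible)
    (hanti : ∀ p q : E →L[ℝ] ℝ, q (A p) = -p (A q)) (a b : E) :
    A.inverse a b = -A.inverse b a := by
  simpa only [hA.self_apply_inverse] using hanti (A.inverse b) (A.inverse a)

/-- The Schouten–Nijenhuis bracket, up to a constant factor, of a bivector field with itself. The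
bivector field is encoded by its contraction `B`, so its value on the covectors `p`, `q` is
`q (B y p)`. -/
def jacobiator (B : E → (E →L[ℝ] ℝ) →L[ℝ] E) (y : E) (p q r : E →L[ℝ] ℝ) : ℝ :=
  r (fderiv ℝ B y (B y p) q) + p (fderiv ℝ B y (B y q) r) + q (fderiv ℝ B y (B y r) p)

lemma jacobiator_rotate (p q r : E →L[ℝ] ℝ) : jacobiator B y p q r = jacobiator B y q r p := by
  unfold jacobiator
  ring

lemma jacobiator_eq_zero_of_basis_left {ι : Type*} (b : Module.Basis ι ℝ (E →L[ℝ] ℝ))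
    {q r : E →L[ℝ] ℝ} (h : ∀ i, jacobiator B y (b i) q r = 0) (p : E →L[ℝ] ℝ) :
    jacobiator B y p q r = 0 := by
  let L : (E →L[ℝ] ℝ) →L[ℝ] ℝ := r ∘L (fderiv ℝ B y).flip q ∘L B y +
    ContinuousLinearMap.apply ℝ ℝ (fderiv ℝ B y (B y q) r) + q ∘L fderiv ℝ B y (B y r)
  have hL : (L : (E →L[ℝ] ℝ) →ₗ[ℝ] ℝ) = 0 := b.ext h
  exact congr($hL p)

lemma jacobiator_eq_zero_iff_basis {ι : Type*} (b : Module.Basis ι ℝ (E →L[ℝ] ℝ)) :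
    (∀ p q r, jacobiator B y p q r = 0) ↔ ∀ i j k, jacobiator B y (b i) (b j) (b k) = 0 := by
  refine ⟨fun h i j k => h _ _ _, fun h p q r => ?_⟩
  refine jacobiator_eq_zero_of_basis_left b (fun i => ?_) p
  rw [jacobiator_rotate]
  refine jacobiator_eq_zero_of_basis_left b (fun j => ?_) q
  rw [jacobiator_rotate]
  refine jacobiator_eq_zero_of_basis_left b (fun k => ?_) r
  rw [jacobiator_rotate]
  exact h i j k

lemma isClosedAt_inverse [CompleteSpace E] (hB : DifferentiableAt ℝ B y)
    (hanti : ∀ p q : E →L[ℝ] ℝ, q (B y p) = -p (B y q)) (hinv : (B y).IsInvertible)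
    (hjac : ∀ p q r, jacobiator B y p q r = 0) : IsClosedAt (fun z => (B z).inverse) y := by
  have hfderiv : ∀ a b c, fderiv ℝ (fun z => (B z).inverse) y a b c =
      (B y).inverse c (fderiv ℝ B y a ((B y).inverse b)) := fun a b c => by
    rw [fderiv_clm_inverse_apply hB hinv, neg_apply, inverse_antisymm hinv hanti, neg_neg]
  intro a b c
  rw [hfderiv, hfderiv, hfderiv]
  simpa only [jacobiator, hinv.self_apply_inverse] using
    hjac ((B y).inverse a) ((B y).inverse b) ((B y).inverse c)

theorem exists_chart_bivector_eq_const [CompleteSpace E] {U : Set E} (hU : IsOpen U)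
    (hB : ContDiffOn ℝ ∞ B U) (hanti : ∀ y ∈ U, ∀ p q : E →L[ℝ] ℝ, q (B y p) = -p (B y q))
    (hinv : ∀ y ∈ U, (B y).IsInvertible) (hjac : ∀ y ∈ U, ∀ p q r, jacobiator B y p q r = 0)
    {x : E} (hx : x ∈ U) :
    ∃ u : OpenPartialHomeomorph E E, x ∈ u.source ∧ u.source ⊆ U ∧ ContDiffOn ℝ ∞ u u.source ∧
      ∀ y ∈ u.source, (fderiv ℝ u y).IsInvertible ∧
        ∀ p, fderiv ℝ u y (B y (p ∘L fderiv ℝ u y)) = B x p := by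
  obtain ⟨u, hxu, huU, hu, hDu⟩ := exists_chart_form_eq_const hU
    (Ω := fun y => (B y).inverse)
    (fun y hy => (hinv y hy).contDiffAt_map_inverse.comp_contDiffWithinAt y (hB y hy))
    (fun y hy => inverse_antisymm (hinv y hy) (hanti y hy))
    (fun y hy => isClosedAt_inverse ((hB.contDiffAt (hU.mem_nhds hy)).differentiableAt (by simp))
      (hanti y hy) (hinv y hy) (hjac y hy)) hx (hinv x hx).inverse
  refine ⟨u, hxu, huU, hu, fun y hy => ⟨(hDu y hy).1, fun p => ?_⟩⟩
  have hpush : (B x).inverse (fderiv ℝ u y (B y (p ∘L fderiv ℝ u y))) = p := by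
    ext w
    obtain ⟨v, rfl⟩ := (hDu y hy).1.surjective w
    rw [(hDu y hy).2, (hinv y (huU hy)).inverse_apply_self]
    rfl
  rw [← (hinv x hx).self_apply_inverse (fderiv ℝ u y _), hpush]

lemma apply_fderiv_of_pushforward_const {u : E → E} (hu : ContDiffAt ℝ 2 u y)
    (hB : DifferentiableAt ℝ B y) (hanti : ∀ p q : E →L[ℝ] ℝ, q (B y p) = -p (B y q))
    {C : (E →L[ℝ] ℝ) → E}
    (hC : ∀ᶠ z in 𝓝 y, ∀ p, fderiv ℝ u z (B z (p ∘L fderiv ℝ u z)) = C p)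
    (p q : E →L[ℝ] ℝ) (a : E) :
    q (fderiv ℝ u y (fderiv ℝ B y a (p ∘L fderiv ℝ u y))) =
      p (fderiv ℝ (fderiv ℝ u) y a (B y (q ∘L fderiv ℝ u y))) -
        q (fderiv ℝ (fderiv ℝ u) y a (B y (p ∘L fderiv ℝ u y))) := by
  have hDu : HasFDerivAt (fderiv ℝ u) (fderiv ℝ (fderiv ℝ u) y) y :=
    ((hu.fderiv_right (m := 1) (by norm_num)).differentiableAt one_ne_zero).hasFDerivAt
  have hpull := (ContinuousLinearMap.compL ℝ E E ℝ p).hasFDerivAt.comp y hDu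
  have hpush := hDu.clm_apply (hB.hasFDerivAt.clm_apply hpull)
  have hzero := congr(q ($(hpush.unique ((hasFDerivAt_const (C p) y).congr_of_eventuallyEq
    (hC.mono fun z hz => hz p))) a))
  have hzero' : q (fderiv ℝ u y (B y (p ∘L fderiv ℝ (fderiv ℝ u) y a) +
      fderiv ℝ B y a (p ∘L fderiv ℝ u y)) +
      fderiv ℝ (fderiv ℝ u) y a (B y (p ∘L fderiv ℝ u y))) = 0 := hzero.trans (map_zero q)
  have hanti' : q (fderiv ℝ u y (B y (p ∘L fderiv ℝ (fderiv ℝ u) y a))) =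
      -p (fderiv ℝ (fderiv ℝ u) y a (B y (q ∘L fderiv ℝ u y))) :=
    hanti (p ∘L fderiv ℝ (fderiv ℝ u) y a) (q ∘L fderiv ℝ u y)
  simp only [map_add] at hzero'
  linear_combination hzero' - hanti'

theorem jacobiator_eq_zero_of_pushforward_const {u : E → E} (hu : ContDiffAt ℝ 2 u y)
    (hDu : (fderiv ℝ u y).IsInvertible) (hB : DifferentiableAt ℝ B y)
    (hanti : ∀ p q : E →L[ℝ] ℝ, q (B y p) = -p (B y q)) {C : (E →L[ℝ] ℝ) → E}
    (hC : ∀ᶠ z in 𝓝 y, ∀ p, fderiv ℝ u z (B z (p ∘L fderiv ℝ u z)) = C p) (p q r : E →L[ℝ] ℝ) :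
    jacobiator B y p q r = 0 := by
  have hsymm : IsSymmSndFDerivAt ℝ u y := hu.isSymmSndFDerivAt (by simp)
  have hfactor : ∀ p : E →L[ℝ] ℝ, ∃ p', p = p' ∘L fderiv ℝ u y := by
    obtain ⟨g, hg⟩ := hDu
    exact fun p => ⟨p ∘L g.symm, by ext v; simp [← hg]⟩
  obtain ⟨p, rfl⟩ := hfactor p
  obtain ⟨q, rfl⟩ := hfactor q
  obtain ⟨r, rfl⟩ := hfactor r
  have hderiv := apply_fderiv_of_pushforward_const hu hB hanti hC
  simp only [jacobiator, ContinuousLinearMap.comp_apply, hderiv]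
  rw [hsymm.eq (B y (q ∘L _)) (B y (p ∘L _)), hsymm.eq (B y (r ∘L _)) (B y (p ∘L _)),
    hsymm.eq (B y (r ∘L _)) (B y (q ∘L _))]
  ring

end Bivector

section Coordinates

lemma isInvertible_of_bijective {E F : Type*} [NormedAddCommGroup E] [NormedSpace ℝ E]
    [CompleteSpace E] [NormedAddCommGroup F] [NormedSpace ℝ F] [CompleteSpace F] {A : E →L[ℝ] F}
    (hA : Function.Bijective A) : A.IsInvertible :=
  ⟨.ofBijective A (LinearMap.ker_eq_bot.2 hA.1) (LinearMap.range_eq_top.2 hA.2), rfl⟩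

lemma apply_cons_swap {D : Type*} [NormedAddCommGroup D] [NormedSpace ℝ D] {A : D [×2]→L[ℝ] ℝ}
    (hA : ∀ (w : Fin 2 → D) (i j), i ≠ j → w i = w j → A w = 0) (p q : D) :
    A ![p, q] = -A ![q, p] := by
  let A' : D [⋀^Fin 2]→ₗ[ℝ] ℝ :=
    { A.toMultilinearMap with map_eq_zero_of_eq' := fun w i j hw hij => hA w i j hij hw }
  have hswap : ![q, p] ∘ Equiv.swap (0 : Fin 2) 1 = ![p, q] := by
    ext i
    fin_cases i <;> rfl
  exact hswap ▸ A'.map_swap ![q, p] zero_ne_one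

variable {n : ℕ}

open ContinuousLinearMap (proj)

/-- The basis of the continuous dual of `ℝⁿ` given by the coordinates. -/
def projBasis (n : ℕ) : Module.Basis (Fin n) ℝ ((Fin n → ℝ) →L[ℝ] ℝ) :=
  (Pi.basisFun ℝ (Fin n)).dualBasis.map LinearMap.toContinuousLinearMap

lemma projBasis_apply (i : Fin n) : projBasis n i = proj i := by
  ext v
  simp [projBasis]

/-- The contraction `p ↦ A(p, ·)` of a bivector, as a map from covectors to vectors. -/
def sharp : (((Fin n → ℝ) →L[ℝ] ℝ) [×2]→L[ℝ] ℝ) →L[ℝ] ((Fin n → ℝ) →L[ℝ] ℝ) →L[ℝ] (Fin n → ℝ) :=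
  let bidual : (((Fin n → ℝ) →L[ℝ] ℝ) [×1]→L[ℝ] ℝ) →L[ℝ] Fin n → ℝ :=
    .pi fun i => ContinuousMultilinearMap.apply ℝ _ ℝ ![proj i]
  ContinuousLinearMap.compL ℝ _ _ _ bidual ∘L
    (continuousMultilinearCurryLeftEquiv ℝ (fun _ : Fin 2 => (Fin n → ℝ) →L[ℝ] ℝ)
      ℝ).toContinuousLinearEquiv

variable {A : ((Fin n → ℝ) →L[ℝ] ℝ) [×2]→L[ℝ] ℝ}

lemma contDiff_sharp {k : WithTop ℕ∞} : ContDiff ℝ k (sharp (n := n)) := sharp.contDiff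

lemma sharp_apply (p : (Fin n → ℝ) →L[ℝ] ℝ) (i : Fin n) : sharp A p i = A ![p, proj i] := rfl

lemma apply_sharp (p q : (Fin n → ℝ) →L[ℝ] ℝ) : q (sharp A p) = A ![p, q] := by
  let contraction := A.toContinuousLinearMap ![p, 0] 1
  have hcontraction : ∀ q, contraction q = A ![p, q] := fun q => congrArg A <| by
    ext i : 1
    fin_cases i <;> rfl
  have hlin : (ContinuousLinearMap.apply ℝ ℝ (sharp A p)).toLinearMap = contraction.toLinearMap :=
    (projBasis n).ext fun i => by simp [projBasis_apply, hcontraction, sharp_apply]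
  exact congr($hlin q).trans (hcontraction q)

lemma pushforward_sharp_eq_iff {c : ((Fin n → ℝ) →L[ℝ] ℝ) [×2]→L[ℝ] ℝ}
    {T : (Fin n → ℝ) →L[ℝ] (Fin n → ℝ)} :
    (∀ p, T (sharp A (p ∘L T)) = sharp c p) ↔ ∀ w, c w = A fun i => (w i).comp T := by
  have hcons : ∀ w : Fin 2 → (Fin n → ℝ) →L[ℝ] ℝ,
      (fun i => (w i).comp T) = ![w 0 ∘L T, w 1 ∘L T] := fun w => by
    ext i : 1
    fin_cases i <;> rfl
  refine ⟨fun h w => ?_, fun h p => ?_⟩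
  · rw [hcons, ← apply_sharp, ContinuousLinearMap.comp_apply, h, apply_sharp]
    congr
    ext i : 1
    fin_cases i <;> rfl
  · ext i
    rw [sharp_apply, h, hcons, ← apply_sharp]
    rfl

lemma sum_apply_proj_mul (hA : ∀ p q, A ![p, q] = -A ![q, p]) (p : (Fin n → ℝ) →L[ℝ] ℝ)
    (f : (Fin n → ℝ) →L[ℝ] ℝ) :
    ∑ l, A ![proj l, p] * f (Pi.single l 1) = -f (sharp A p) := by
  calc
    _ = -∑ l, sharp A p l • f (Pi.single l 1) := by
      simp only [hA (proj _) p, ← sharp_apply, smul_eq_mul, neg_mul, Finset.sum_neg_distrib]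
    _ = -f (sharp A p) := by
      simpa using congr(-f $((Pi.basisFun ℝ (Fin n)).sum_repr (sharp A p)))

lemma fderiv_apply_cons {V : (Fin n → ℝ) → (((Fin n → ℝ) →L[ℝ] ℝ) [×2]→L[ℝ] ℝ)}
    {y : Fin n → ℝ} (hV : DifferentiableAt ℝ V y) (p q : (Fin n → ℝ) →L[ℝ] ℝ) (a : Fin n → ℝ) :
    fderiv ℝ (fun z => V z ![p, q]) y a = q (fderiv ℝ (fun z => sharp (V z)) y a p) := by
  have hsharp : fderiv ℝ (fun z => sharp (V z)) y a = sharp (fderiv ℝ V y a) :=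
    congr($((sharp.hasFDerivAt.comp y hV.hasFDerivAt).fderiv) a)
  rw [hsharp, apply_sharp]
  exact fderiv_continuousMultilinear_apply_const_apply hV _ _

lemma sum_schouten_eq_neg_jacobiator
    {V : (Fin n → ℝ) → (((Fin n → ℝ) →L[ℝ] ℝ) [×2]→L[ℝ] ℝ)} {y : Fin n → ℝ}
    (hV : DifferentiableAt ℝ V y) (hanti : ∀ p q, V y ![p, q] = -V y ![q, p]) (i j k : Fin n) :
    ∑ l, (V y ![proj l, proj i] * fderiv ℝ (fun z => V z ![proj j, proj k]) y (Pi.single l 1) +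
      V y ![proj l, proj j] * fderiv ℝ (fun z => V z ![proj k, proj i]) y (Pi.single l 1) +
      V y ![proj l, proj k] * fderiv ℝ (fun z => V z ![proj i, proj j]) y (Pi.single l 1)) =
    -jacobiator (fun z => sharp (V z)) y (proj i) (proj j) (proj k) := by
  simp only [Finset.sum_add_distrib, sum_apply_proj_mul hanti]
  simp only [fderiv_apply_cons hV, jacobiator]
  ring

lemma jacobiator_sharp_eq_zero_iff
    {V : (Fin n → ℝ) → (((Fin n → ℝ) →L[ℝ] ℝ) [×2]→L[ℝ] ℝ)} {y : Fin n → ℝ}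
    (hV : DifferentiableAt ℝ V y) (hanti : ∀ p q, V y ![p, q] = -V y ![q, p]) :
    (∀ p q r, jacobiator (fun z => sharp (V z)) y p q r = 0) ↔ ∀ i j k,
      ∑ l, (V y ![proj l, proj i] * fderiv ℝ (fun z => V z ![proj j, proj k]) y (Pi.single l 1) +
        V y ![proj l, proj j] * fderiv ℝ (fun z => V z ![proj k, proj i]) y (Pi.single l 1) +
        V y ![proj l, proj k] * fderiv ℝ (fun z => V z ![proj i, proj j]) y (Pi.single l 1)) =
      0 := by
  simp only [jacobiator_eq_zero_iff_basis (projBasis n), projBasis_apply,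
    sum_schouten_eq_neg_jacobiator hV hanti, neg_eq_zero]

end Coordinates

end Darboux

end

open Darboux

/-- let `n` be even and let `V` be a smooth bivector field on `U ⊆ ℝⁿ`
of maximal rank `n`, i.e. the map `V♮_y : (ℝⁿ)* → ℝⁿ`, `εⁱ(V♮_y w) = V_y(w, εⁱ)`, is
bijective for every `y ∈ U`. Then `V` has constant coefficients near `x ∈ U` iff its
Schouten–Nijenhuis bracket with itself vanishes near `x`:
`Σ_l ( V^{li} ∂_l V^{jk} + V^{lj} ∂_l V^{ki} + V^{lk} ∂_l V^{ij} ) = 0`,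
where `V^{ij}(y) = V_y(εⁱ, εʲ)`. -/
theorem maximalRank_bivector_constantCoefficients_iff_schouten_zero (n : ℕ)
    (hn : Even n)
    (U : Set (Fin n → ℝ)) (hU : IsOpen U)
    (V : (Fin n → ℝ) → (((Fin n → ℝ) →L[ℝ] ℝ) [×2]→L[ℝ] ℝ))
    (hV : ContDiffOn ℝ (⊤ : ℕ∞) V U)
    (halt : ∀ y ∈ U, ∀ w : Fin 2 → ((Fin n → ℝ) →L[ℝ] ℝ), ∀ i j, i ≠ j → w i = w j →
      V y w = 0)
    (hmax : ∀ y ∈ U, Function.Bijective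
      (fun (w : (Fin n → ℝ) →L[ℝ] ℝ) => (fun i : Fin n =>
        V y ![w, ContinuousLinearMap.proj i]) : ((Fin n → ℝ) →L[ℝ] ℝ) → (Fin n → ℝ)))
    (x : Fin n → ℝ) (hx : x ∈ U)
    (Vc : Fin n → Fin n → (Fin n → ℝ) → ℝ)
    (hVc : ∀ i j y, Vc i j y =
      V y ![ContinuousLinearMap.proj i, ContinuousLinearMap.proj j]) :
    HasConstantCoefficientsVecAt n 2 U V x ↔
      ∃ W : Set (Fin n → ℝ), IsOpen W ∧ x ∈ W ∧
        ∀ y ∈ W, ∀ i j k : Fin n,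
          ∑ l : Fin n,
            (Vc l i y * fderiv ℝ (Vc j k) y (Pi.single l 1) +
             Vc l j y * fderiv ℝ (Vc k i) y (Pi.single l 1) +
             Vc l k y * fderiv ℝ (Vc i j) y (Pi.single l 1)) = 0 := by
  obtain rfl : Vc = fun i j y => V y ![.proj i, .proj j] := by ext; exact hVc ..
  have hVd : ∀ y ∈ U, DifferentiableAt ℝ V y := fun y hy =>
    (hV.contDiffAt (hU.mem_nhds hy)).differentiableAt (by simp)
  have hB : ContDiffOn ℝ (⊤ : ℕ∞) (fun y => sharp (V y)) U := contDiff_sharp.comp_contDiffOn hV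
  have hswap : ∀ y ∈ U, ∀ p q, V y ![p, q] = -V y ![q, p] := fun y hy =>
    apply_cons_swap (halt y hy)
  have hanti : ∀ y ∈ U, ∀ p q : (Fin n → ℝ) →L[ℝ] ℝ, q (sharp (V y) p) = -p (sharp (V y) q) :=
    fun y hy p q => by rw [apply_sharp, apply_sharp, hswap y hy]
  constructor
  · rintro ⟨W, hW, hxW, hWU, u, hu, -, -, hDu, c, hc⟩
    refine ⟨W, hW, hxW, fun y hy => (jacobiator_sharp_eq_zero_iff (hVd y (hWU hy))
      (hswap y (hWU hy))).1 ?_⟩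
    exact jacobiator_eq_zero_of_pushforward_const
      ((hu.contDiffAt (hW.mem_nhds hy)).of_le ENat.LEInfty.out)
      (isInvertible_of_bijective (hDu y hy))
      ((contDiff_sharp.differentiable one_ne_zero _).comp y (hVd y (hWU hy)))
      (hanti y (hWU hy))
      ((hW.eventually_mem hy).mono fun z hz => pushforward_sharp_eq_iff.2 (hc z hz))
  · rintro ⟨W, hW, hxW, hjac⟩
    obtain ⟨u, hxu, huUW, hu, hDu⟩ := exists_chart_bivector_eq_const (hU.inter hW)
      (hB.mono Set.inter_subset_left) (fun y hy => hanti y hy.1)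
      (fun y hy => isInvertible_of_bijective (hmax y hy.1)) (fun y hy =>
        (jacobiator_sharp_eq_zero_iff (hVd y hy.1) (hswap y hy.1)).2 (hjac y hy.2)) ⟨hx, hxW⟩
    exact ⟨u.source, u.open_source, hxu, fun y hy => (huUW hy).1, u, hu, u.injOn,
      u.image_source_eq_target ▸ u.open_target, fun y hy => (hDu y hy).1.bijective, V x,
      fun y hy => pushforward_sharp_eq_iff.1 (hDu y hy).2⟩
end

section
/- Let n ≥ 2, let V be a smooth (n−1)-vector field on an open set U ⊆ ℝⁿ with V_{x₀} ≠ 0 at a point x₀ ∈ U, and let α be the smooth 1-form on U defined by v ∧ V_y = α_y(v) · (e₁∧⋯∧eₙ) for all v ∈ ℝⁿ, where e₁∧⋯∧eₙ is the standard generator of Λⁿℝⁿ. Then V has constant coefficients on a neighbourhood of x₀ if and only if the following two conditions hold on some open neighbourhood of x₀: (1) there exists a closed nowhere-vanishing smooth 1-form ζ such that for every y one has {w ∈ (ℝⁿ)* : i_wV_y = 0} = ℝ·ζ_y; and (2) there exists a closed smooth 1-form θ with dα + θ ∧ α = 0. -/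
/-!
The covectors `w` annihilating `V` are those with `w ∧ α = 0`, and a change of coordinates `u`
carrying `V` to `c` satisfies `det Du • α = u^*γ`, where `γ` corresponds to `c` as `α` does to
`V`. Hence if `c` is constant, then `det Du` is an integrating factor of `α`. An integrating
factor `g`, with `g • α = dz`, makes `dz` span the annihilator of `V`, and `θ = d log |g|`
satisfies `dα + θ ∧ α = 0`. Conversely, a primitive `z` of the form `ζ` of condition (1) satisfies
`dz = g • α` for some `g`; complete `z` to a coordinate system and change its last coordinate, by
an integration, so that the Jacobian becomes `g`. In these coordinates `V` is constant.
-/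

open scoped ContDiff Topology
open MeasureTheory Set Filter

section VolumeDual

variable {R M : Type*} [CommRing R] [AddCommGroup M] [Module R M] {n : ℕ}

/-- Relative to a basis `b` of `M` with top form `b.det`, the vector `a` with
`b.det (a, w₁, …, wₙ) = A (w₁, …, wₙ)` when `A` is alternating. For `M` the dual of `ℝⁿ⁺¹`, it is
the 1-form `α` with `v ∧ A = α(v) • (e₁ ∧ ⋯ ∧ eₙ₊₁)`. It is defined for all functions `A` by its
coordinates in `b`. -/
noncomputable def volumeDual (b : Module.Basis (Fin (n + 1)) R M) (A : (Fin n → M) → R) : M :=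
  ∑ i : Fin (n + 1), ((-1) ^ (i : ℕ) * A fun j => b (i.succAbove j)) • b i

variable (b : Module.Basis (Fin (n + 1)) R M)

theorem det_update_self {ι : Type*} [Fintype ι] [DecidableEq ι] (b : Module.Basis ι R M) (i : ι)
    (a : M) : b.det (Function.update b i a) = b.repr a i := by
  suffices h : b.det.toMultilinearMap.toLinearMap b i = b.coord i from DFunLike.congr_fun h a
  refine b.ext fun k => ?_
  rcases eq_or_ne k i with rfl | hk
  · simp [b.det_self]
  · simpa [hk.symm] using b.det.map_update_self b hk.symm

theorem det_cons_succAbove (i : Fin (n + 1)) (a : M) :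
    b.det (Fin.cons a fun j => b (i.succAbove j)) = (-1) ^ (i : ℕ) * b.repr a i := by
  have h_insert := b.det.neg_one_pow_smul_map_insertNth i a fun j => b (i.succAbove j)
  rw [show i.insertNth a (fun j => b (i.succAbove j)) = Function.update b i a from
    Fin.insertNth_removeNth i a b, det_update_self] at h_insert
  simpa [Matrix.vecCons] using h_insert.symm

theorem volumeDual_curryLeft_det (a : M) :
    volumeDual b (b.det.curryLeft a) = a := by
  have h_coord (i : Fin (n + 1)) :
      (-1) ^ (i : ℕ) * b.det.curryLeft a (fun j => b (i.succAbove j)) = b.repr a i := by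
    rw [AlternatingMap.curryLeft_apply_apply, Matrix.vecCons, det_cons_succAbove, ← mul_assoc,
      ← mul_pow]
    simp
  simp only [volumeDual, h_coord, b.sum_repr]

theorem curryLeft_det_volumeDual (A : M [⋀^Fin n]→ₗ[R] R) :
    b.det.curryLeft (volumeDual b A) = A := by
  refine b.ext_alternating fun v hv => ?_
  obtain ⟨i, hi⟩ : ∃ i, ∀ j, v j ≠ i := by
    by_contra! hv_surj
    simpa using Fintype.card_le_of_surjective v hv_surj
  choose σ hσ using fun j => Fin.exists_succAbove_eq (hi j)
  have hσ_inj : Function.Injective σ := fun j k hjk => hv (by rw [← hσ, ← hσ, hjk])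
  let τ : Equiv.Perm (Fin n) := .ofBijective σ (Finite.injective_iff_bijective.mp hσ_inj)
  have hv_perm : (fun j => b (v j)) = (fun j => b (i.succAbove j)) ∘ τ :=
    funext fun j => congrArg b (hσ j).symm
  rw [hv_perm, AlternatingMap.map_perm, AlternatingMap.map_perm]
  congr 1
  refine (det_cons_succAbove b i _).trans ?_
  rw [volumeDual, b.repr_sum_self, ← mul_assoc, ← mul_pow]
  simp

end VolumeDual

theorem exists_linearIndependent_extend_fin {K V : Type*} [DivisionRing K] [AddCommGroup V]
    [Module K V] {k n : ℕ} {v : Fin k → V} (hv : LinearIndependent K v) (hkn : k ≤ n)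
    (hn : n ≤ Module.finrank K V) :
    ∃ w : Fin n → V, LinearIndependent K w ∧ ∀ i, w (Fin.castLE hkn i) = v i := by
  induction n, hkn using Nat.le_induction with
  | base => exact ⟨v, hv, fun _ => rfl⟩
  | succ n hkn ih =>
    obtain ⟨w, hw, hwv⟩ := ih (by omega)
    obtain ⟨x, hx⟩ := exists_linearIndependent_snoc_of_lt_finrank hw hn
    exact ⟨Fin.snoc w x, hx, fun i => (Fin.snoc_castSucc (α := fun _ => V) x w _).trans (hwv i)⟩

section LinearIndependence

variable {K V : Type*} [Field K] [AddCommGroup V] [Module K V] {n : ℕ}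

theorem det_ne_zero_of_linearIndependent (b : Module.Basis (Fin n) K V) {v : Fin n → V}
    (hv : LinearIndependent K v) : b.det v ≠ 0 := by
  have := b.finiteDimensional_of_finite
  exact (b.is_basis_iff_det.mp ⟨hv, hv.span_eq_top_of_card_eq_finrank'
    (Module.finrank_eq_card_basis b).symm⟩).ne_zero

theorem forall_det_cons_cons_eq_zero_iff (b : Module.Basis (Fin (n + 2)) K V) {a : V} (ha : a ≠ 0)
    (w : V) : (∀ ws : Fin n → V, b.det (Fin.cons a (Fin.cons w ws : Fin (n + 1) → V)) = 0) ↔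
      ∃ t : K, w = t • a := by
  constructor
  · contrapose!
    intro hw
    have hpair : LinearIndependent K ![a, w] :=
      (LinearIndependent.pair_iff' ha).mpr fun t => (hw t).symm
    obtain ⟨v, hv, hv_ext⟩ := exists_linearIndependent_extend_fin hpair (Nat.le_add_left 2 n)
      (by simp [Module.finrank_eq_card_basis b])
    have hv_cons : Fin.cons a (Fin.cons w (Fin.tail (Fin.tail v)) : Fin (n + 1) → V) = v := by
      rw [show a = v 0 from (hv_ext 0).symm, show w = Fin.tail v 0 from (hv_ext 1).symm,
        Fin.cons_self_tail, Fin.cons_self_tail]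
    refine ⟨Fin.tail (Fin.tail v), ?_⟩
    rw [hv_cons]
    exact det_ne_zero_of_linearIndependent b hv
  · rintro ⟨t, rfl⟩ ws
    change (b.det.curryLeft a).curryLeft (t • a) ws = 0
    simp

end LinearIndependence

section Covectors

variable {n : ℕ}

/-- The basis of the continuous dual of `ℝⁿ` dual to the standard basis. -/
noncomputable def coordCovectors (n : ℕ) : Module.Basis (Fin n) ℝ ((Fin n → ℝ) →L[ℝ] ℝ) :=
  (Pi.basisFun ℝ (Fin n)).dualBasis.map LinearMap.toContinuousLinearMap

@[simp]
theorem coordCovectors_apply (i : Fin n) :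
    coordCovectors n i = ContinuousLinearMap.proj i := by
  ext v
  simp [coordCovectors]

@[simp]
theorem coordCovectors_repr (w : (Fin n → ℝ) →L[ℝ] ℝ) (j : Fin n) :
    (coordCovectors n).repr w j = w (Pi.single j 1) := by
  simp [coordCovectors]

theorem coordCovectors_det_eq_det (w : Fin n → (Fin n → ℝ) →L[ℝ] ℝ) :
    (coordCovectors n).det w = (ContinuousLinearMap.pi w).det := by
  rw [Module.Basis.det_apply, ContinuousLinearMap.det, ← LinearMap.det_toMatrix',
    ← Matrix.det_transpose]
  congr 1
  ext i j
  simp [Module.Basis.toMatrix_apply, LinearMap.toMatrix'_apply]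

theorem coordCovectors_det_comp (w : Fin n → (Fin n → ℝ) →L[ℝ] ℝ)
    (L : (Fin n → ℝ) →L[ℝ] (Fin n → ℝ)) :
    (coordCovectors n).det (fun i => (w i).comp L) = L.det * (coordCovectors n).det w := by
  rw [coordCovectors_det_eq_det, coordCovectors_det_eq_det, mul_comm]
  exact LinearMap.det_comp (ContinuousLinearMap.pi w).toLinearMap L.toLinearMap

theorem bijective_iff_det_ne_zero {E : Type*} [AddCommGroup E] [Module ℝ E] [TopologicalSpace E]
    [FiniteDimensional ℝ E] (L : E →L[ℝ] E) :
    Function.Bijective L ↔ L.det ≠ 0 := by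
  rw [← isUnit_iff_ne_zero]
  exact (Module.End.isUnit_iff _).symm.trans (LinearMap.isUnit_iff_isUnit_det _)

end Covectors

section MultivectorAlgebra

variable {M : Type*} [AddCommGroup M] [Module ℝ M] [TopologicalSpace M] {n : ℕ}

/-- A continuous multilinear form is alternating. As an unbundled predicate it applies to the values
of a field of multilinear forms. -/
def IsAlternating (A : M [×n]→L[ℝ] ℝ) : Prop :=
  ∀ w : Fin n → M, ∀ i j, i ≠ j → w i = w j → A w = 0

theorem IsAlternating.det_cons_volumeDual {A : M [×n]→L[ℝ] ℝ} (hA : IsAlternating A)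
    (b : Module.Basis (Fin (n + 1)) ℝ M) (w : Fin n → M) :
    b.det (Fin.cons (volumeDual b A) w) = A w :=
  DFunLike.congr_fun (curryLeft_det_volumeDual b
    { A.toMultilinearMap with map_eq_zero_of_eq' := fun w i j h hij => hA w i j hij h }) w

theorem IsAlternating.volumeDual_ne_zero {A : M [×n]→L[ℝ] ℝ} (hA : IsAlternating A) (h0 : A ≠ 0)
    (b : Module.Basis (Fin (n + 1)) ℝ M) : volumeDual b A ≠ 0 := by
  contrapose! h0
  ext w
  rw [← hA.det_cons_volumeDual b, h0]
  exact b.det.map_coord_zero 0 rfl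

theorem IsAlternating.cons_volumeDual {A : M [×(n + 1)]→L[ℝ] ℝ} (hA : IsAlternating A)
    (b : Module.Basis (Fin (n + 2)) ℝ M) (ws : Fin n → M) :
    A (Fin.cons (volumeDual b A) ws) = 0 := by
  rw [← hA.det_cons_volumeDual b]
  exact b.det.map_eq_zero_of_eq _ (i := 0) (j := 1) rfl zero_ne_one

theorem IsAlternating.forall_cons_eq_zero_iff {A : M [×(n + 1)]→L[ℝ] ℝ} (hA : IsAlternating A)
    {b : Module.Basis (Fin (n + 2)) ℝ M} (hb : volumeDual b A ≠ 0) (w : M) :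
    (∀ ws : Fin n → M, A (Fin.cons w ws) = 0) ↔ ∃ t : ℝ, w = t • volumeDual b A := by
  simp_rw [← hA.det_cons_volumeDual b]
  exact forall_det_cons_cons_eq_zero_iff b hb w

theorem IsAlternating.eq_comp_iff_volumeDual_comp
    {A c : ((Fin (n + 1) → ℝ) →L[ℝ] ℝ) [×n]→L[ℝ] ℝ} (hA : IsAlternating A) (hc : IsAlternating c)
    {L : (Fin (n + 1) → ℝ) →L[ℝ] (Fin (n + 1) → ℝ)} (hL : L.det ≠ 0) :
    (∀ w, c w = A fun i => (w i).comp L) ↔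
      (volumeDual (coordCovectors (n + 1)) c).comp L =
        L.det • volumeDual (coordCovectors (n + 1)) A := by
  set b := coordCovectors (n + 1)
  have hc_pullback (w : Fin n → (Fin (n + 1) → ℝ) →L[ℝ] ℝ) :
      b.det (Fin.cons ((volumeDual b c).comp L) fun i => (w i).comp L) = L.det * c w := by
    rw [← hc.det_cons_volumeDual b, ← coordCovectors_det_comp]
    congr 1
    ext i : 1
    cases i using Fin.cases <;> rfl
  have hA_pullback (v : Fin n → (Fin (n + 1) → ℝ) →L[ℝ] ℝ) :
      b.det (Fin.cons (L.det • volumeDual b A) v) = L.det * A v := by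
    rw [← hA.det_cons_volumeDual b]
    exact DFunLike.congr_fun (b.det.curryLeft.map_smul L.det (volumeDual b A)) v
  constructor
  · intro h
    have h_det : b.det.curryLeft ((volumeDual b c).comp L) =
        b.det.curryLeft (L.det • volumeDual b A) := by
      ext v
      change b.det (Fin.cons _ v) = b.det (Fin.cons _ v)
      let e := L.toContinuousLinearEquivOfDetNeZero hL
      have hv : (fun i => ((v i).comp (e.symm : _ →L[ℝ] _)).comp L) = v := by
        ext i x
        exact congrArg (v i) (e.symm_apply_apply x)
      rw [← hv, hc_pullback, hA_pullback, h]
    rw [← volumeDual_curryLeft_det b ((volumeDual b c).comp L), h_det, volumeDual_curryLeft_det]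
  · intro h w
    refine mul_left_cancel₀ hL ?_
    rw [← hc_pullback, h, hA_pullback]

theorem IsAlternating.exists_isAlternating_volumeDual_eq
    {A : ((Fin (n + 1) → ℝ) →L[ℝ] ℝ) [×n]→L[ℝ] ℝ} (hA : IsAlternating A)
    {L : (Fin (n + 1) → ℝ) →L[ℝ] (Fin (n + 1) → ℝ)} (hL : L.det ≠ 0)
    {γ : (Fin (n + 1) → ℝ) →L[ℝ] ℝ}
    (hγ : γ.comp L = L.det • volumeDual (coordCovectors (n + 1)) A) :
    ∃ c : ((Fin (n + 1) → ℝ) →L[ℝ] ℝ) [×n]→L[ℝ] ℝ, IsAlternating c ∧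
      volumeDual (coordCovectors (n + 1)) c = γ := by
  let c := A.compContinuousLinearMap fun _ => (ContinuousLinearMap.compL ℝ _ _ ℝ).flip L
  have hc : IsAlternating c := fun w i j hij hw => hA _ i j hij (by rw [hw])
  have h_comp := (hA.eq_comp_iff_volumeDual_comp hc hL).mp fun w => rfl
  rw [← hγ] at h_comp
  exact ⟨c, hc, ContinuousLinearMap.ext
    (((bijective_iff_det_ne_zero L).mpr hL).2.forall.mpr (DFunLike.congr_fun h_comp))⟩

end MultivectorAlgebra

section DirectionalPrimitive

variable {E : Type*} [NormedAddCommGroup E] [NormedSpace ℝ E] [FiniteDimensional ℝ E]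

theorem exists_contDiff_hasCompactSupport_eventuallyEq {F : Type*} [NormedAddCommGroup F]
    [NormedSpace ℝ F] {G : E → F} {O : Set E} {p₀ : E} (hG : ContDiffOn ℝ ∞ G O) (hO : O ∈ 𝓝 p₀) :
    ∃ G₁ : E → F, ContDiff ℝ ∞ G₁ ∧ HasCompactSupport G₁ ∧ G₁ =ᶠ[𝓝 p₀] G := by
  obtain ⟨R, hR, hRO⟩ := Metric.nhds_basis_closedBall.mem_iff.mp (interior_mem_nhds.mpr hO)
  let χ : ContDiffBump p₀ := ⟨R / 2, R, by positivity, by linarith⟩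
  refine ⟨fun p => χ p • G p, ?_, χ.hasCompactSupport.smul_right, ?_⟩
  · refine contMDiff_iff_contDiff.mp (contMDiff_of_tsupport fun p hp => ?_)
    have hpR : p ∈ Metric.closedBall p₀ R := χ.tsupport_eq ▸ tsupport_smul_subset_left χ G hp
    exact (χ.contDiffAt.smul
      (hG.contDiffAt (mem_interior_iff_mem_nhds.mp (hRO hpR)))).contMDiffAt
  · filter_upwards [χ.eventuallyEq_one] with p hp
    simp [hp]

theorem hasDerivAt_integral_Iic {F : Type*} [NormedAddCommGroup F] [NormedSpace ℝ F]
    [CompleteSpace F] {g : ℝ → F} (hg : Continuous g) (hg_int : Integrable g) (x : ℝ) :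
    HasDerivAt (fun y => ∫ s in Iic y, g s) (g x) x := by
  have h_split : (fun y => ∫ s in Iic y, g s) = fun y => (∫ s in Iic x, g s) + ∫ s in x..y, g s :=
    funext fun y => by
      rw [← intervalIntegral.integral_Iic_sub_Iic hg_int.integrableOn hg_int.integrableOn,
        add_sub_cancel]
  rw [h_split]
  exact (hg.integral_hasStrictDerivAt x x).hasDerivAt.const_add _

theorem exists_contDiff_forall_fderiv_apply_eq {F : Type*} [NormedAddCommGroup F] [NormedSpace ℝ F]
    [CompleteSpace F] {G : E → F} (hG : ContDiff ℝ ∞ G) (hG_supp : HasCompactSupport G) {v : E}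
    (hv : v ≠ 0) :
    ∃ h : E → F, ContDiff ℝ ∞ h ∧ ∀ p, fderiv ℝ h p v = G p := by
  borelize E
  have h_ray : Topology.IsClosedEmbedding fun t : ℝ => t • v := isClosedEmbedding_smul_left hv
  -- Convolution with Lebesgue measure on the ray `ℝ≥0 • v` integrates along lines parallel to `v`.
  let μ : Measure E := (volume.restrict (Ici (0 : ℝ))).map fun t => t • v
  have : IsFiniteMeasureOnCompacts μ := ⟨fun K hK => by
    rw [h_ray.measurableEmbedding.map_apply]
    exact (h_ray.isCompact_preimage hK).measure_lt_top⟩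
  let h : E → F := convolution (fun _ => (1 : ℝ)) G (.lsmul ℝ ℝ) μ
  have hh : ContDiff ℝ ∞ h :=
    hG_supp.contDiff_convolution_right _ (locallyIntegrable_const 1) hG
  have h_eq (p : E) (x : ℝ) : h (p + x • v) = ∫ s in Iic x, G (p + s • v) := by
    have h_preimage : (fun t => x - t) ⁻¹' Ici 0 = Iic x := by ext; simp
    change ∫ q, (1 : ℝ) • G (p + x • v - q) ∂μ = _
    rw [h_ray.measurableEmbedding.integral_map,
      ← (volume.measurePreserving_sub_left x).setIntegral_preimage_emb
        (Homeomorph.subLeft x).measurableEmbedding, h_preimage]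
    refine integral_congr_ae (.of_forall fun s => ?_)
    simp only [one_smul]
    congr 1
    module
  refine ⟨h, hh, fun p => ?_⟩
  have h_line : Topology.IsClosedEmbedding fun s : ℝ => p + s • v :=
    (Homeomorph.addLeft p).isClosedEmbedding.comp h_ray
  have hG_line : Continuous fun s : ℝ => G (p + s • v) := hG.continuous.comp h_line.continuous
  have h_ftc := hasDerivAt_integral_Iic hG_line
    (hG_line.integrable_of_hasCompactSupport (hG_supp.comp_isClosedEmbedding h_line)) 0
  simp_rw [← h_eq, zero_smul, add_zero] at h_ftc
  exact (hh.differentiable (by simp) p).hasFDerivAt.hasLineDerivAt v |>.unique h_ftc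

theorem exists_contDiff_fderiv_apply_eventuallyEq {F : Type*} [NormedAddCommGroup F]
    [NormedSpace ℝ F] [CompleteSpace F] {G : E → F} {O : Set E} {p₀ : E}
    (hG : ContDiffOn ℝ ∞ G O) (hO : O ∈ 𝓝 p₀) {v : E} (hv : v ≠ 0) :
    ∃ h : E → F, ContDiff ℝ ∞ h ∧ ∀ᶠ p in 𝓝 p₀, fderiv ℝ h p v = G p := by
  obtain ⟨G₁, hG₁, hG₁_supp, hG₁_eq⟩ := exists_contDiff_hasCompactSupport_eventuallyEq hG hO
  obtain ⟨h, hh, hh_deriv⟩ := exists_contDiff_forall_fderiv_apply_eq hG₁ hG₁_supp hv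
  exact ⟨h, hh, hG₁_eq.mono fun p hp => (hh_deriv p).trans hp⟩

end DirectionalPrimitive

section Smoothness

variable {E F : Type*} [NormedAddCommGroup E] [NormedSpace ℝ E] [NormedAddCommGroup F]
  [NormedSpace ℝ F] {k : WithTop ℕ∞} {W : Set E}

theorem contDiffOn_volumeDual {n : ℕ} {V : E → F [×n]→L[ℝ] ℝ} (hV : ContDiffOn ℝ k V W)
    (b : Module.Basis (Fin (n + 1)) ℝ F) : ContDiffOn ℝ k (fun y => volumeDual b (V y)) W :=
  ContDiffOn.sum fun i _ => (contDiffOn_const.mul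
    ((ContinuousMultilinearMap.apply ℝ (fun _ : Fin n => F) ℝ
      fun j => b (i.succAbove j)).contDiff.comp_contDiffOn hV)).smul contDiffOn_const

theorem contDiff_det_s9 [FiniteDimensional ℝ E] : ContDiff ℝ k fun L : E →L[ℝ] E => L.det := by
  let b := Module.finBasis ℝ E
  simp_rw [ContinuousLinearMap.det, ← LinearMap.det_toMatrix b, Matrix.det_apply',
    LinearMap.toMatrix_apply]
  refine ContDiff.sum fun σ _ => contDiff_const.mul (contDiff_prod fun j _ => ?_)
  exact (b.coord (σ j)).toContinuousLinearMap.contDiff.comp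
    (ContinuousLinearMap.apply ℝ E (b j)).contDiff

theorem exists_contDiffOn_smul_eq {α ζ : E → F →L[ℝ] ℝ} (hW : IsOpen W)
    (hα : ContDiffOn ℝ k α W) (hζ : ContDiffOn ℝ k ζ W) (hαζ : ∀ y ∈ W, ∃ t : ℝ, α y = t • ζ y)
    {x₀ : E} (hx₀ : x₀ ∈ W) (hα₀ : α x₀ ≠ 0) :
    ∃ (g : E → ℝ) (S : Set E), IsOpen S ∧ x₀ ∈ S ∧ S ⊆ W ∧ ContDiffOn ℝ k g S ∧
      ∀ y ∈ S, ζ y = g y • α y := by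
  obtain ⟨v, hv⟩ := DFunLike.ne_iff.mp hα₀
  have hα_v : ContDiffOn ℝ k (fun y => α y v) W := hα.clm_apply contDiffOn_const
  refine ⟨fun y => ζ y v / α y v, W ∩ (fun y => α y v) ⁻¹' {0}ᶜ,
    hα_v.continuousOn.isOpen_inter_preimage hW isOpen_compl_singleton, ⟨hx₀, hv⟩,
    inter_subset_left, ?_, ?_⟩
  · exact ((hζ.clm_apply contDiffOn_const).mono inter_subset_left).div
      (hα_v.mono inter_subset_left) fun y hy => hy.2
  · rintro y ⟨hyW, hyv : α y v ≠ 0⟩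
    obtain ⟨t, ht⟩ := hαζ y hyW
    have hζ_v : t * ζ y v = α y v := by rw [ht, _root_.smul_apply, smul_eq_mul]
    change ζ y = (ζ y v / α y v) • α y
    nth_rw 2 [ht]
    rw [smul_smul, div_mul_eq_mul_div, mul_comm, hζ_v, div_self hyv, one_smul]

end Smoothness

section ClosedForms

variable {E : Type*} [NormedAddCommGroup E] [NormedSpace ℝ E] {W : Set E}

/-- The 1-form `ζ` is closed on `W`: `dζ(a, b) = Dζ(a)(b) - Dζ(b)(a)` vanishes there. -/
def IsClosedFormOn (ζ : E → E →L[ℝ] ℝ) (W : Set E) : Prop :=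
  ∀ y ∈ W, ∀ a b, fderiv ℝ ζ y a b = fderiv ℝ ζ y b a

theorem isClosedFormOn_fderiv {f : E → ℝ} (hW : IsOpen W) (hf : ContDiffOn ℝ ∞ f W) :
    IsClosedFormOn (fderiv ℝ f) W := fun y hy a b => by
  refine (hf.contDiffAt (hW.mem_nhds hy)).isSymmSndFDerivAt ?_ a b
  simp only [minSmoothness_of_isRCLikeNormedField]
  exact WithTop.coe_le_coe.mpr le_top

theorem IsClosedFormOn.exists_primitive {ζ : E → E →L[ℝ] ℝ} (hζ_closed : IsClosedFormOn ζ W)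
    (hW : IsOpen W) (hζ : ContDiffOn ℝ ∞ ζ W) {x₀ : E} (hx₀ : x₀ ∈ W) :
    ∃ (z : E → ℝ) (S : Set E), IsOpen S ∧ x₀ ∈ S ∧ S ⊆ W ∧ ContDiffOn ℝ ∞ z S ∧
      ∀ y ∈ S, fderiv ℝ z y = ζ y := by
  obtain ⟨R, hR, hRW⟩ := Metric.isOpen_iff.mp hW x₀ hx₀
  obtain ⟨z, hz⟩ := (convex_ball x₀ R).exists_forall_hasFDerivAt_of_fderiv_symmetric
    Metric.isOpen_ball ((hζ.differentiableOn (by simp)).mono hRW) fun y hy => hζ_closed y (hRW hy)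
  have hz_fderiv (y) (hy : y ∈ Metric.ball x₀ R) : fderiv ℝ z y = ζ y := (hz y hy).fderiv
  refine ⟨z, Metric.ball x₀ R, Metric.isOpen_ball, Metric.mem_ball_self hR, hRW, ?_, hz_fderiv⟩
  exact (contDiffOn_infty_iff_fderiv_of_isOpen Metric.isOpen_ball).mpr
    ⟨fun y hy => (hz y hy).differentiableAt.differentiableWithinAt,
      (hζ.mono hRW).congr hz_fderiv⟩

/-- The condition that `dα + θ ∧ α = 0` on `W` for some smooth closed 1-form `θ`. -/
def HasFlatTwistOn (α : E → E →L[ℝ] ℝ) (W : Set E) : Prop :=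
  ∃ θ : E → E →L[ℝ] ℝ, ContDiffOn ℝ ∞ θ W ∧ IsClosedFormOn θ W ∧
    ∀ y ∈ W, ∀ a b,
      (fderiv ℝ α y a b - fderiv ℝ α y b a) + (θ y a * α y b - θ y b * α y a) = 0

/-- The 1-form `α` has an integrating factor `g` on `W`: the multiple `g • α` is the differential of
a smooth function `z` without critical points. -/
def HasIntegratingFactorOn (α : E → E →L[ℝ] ℝ) (W : Set E) : Prop :=
  ∃ z g : E → ℝ, ContDiffOn ℝ ∞ z W ∧ ContDiffOn ℝ ∞ g W ∧
    ∀ y ∈ W, fderiv ℝ z y ≠ 0 ∧ fderiv ℝ z y = g y • α y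

theorem HasIntegratingFactorOn.hasFlatTwistOn {α : E → E →L[ℝ] ℝ}
    (h : HasIntegratingFactorOn α W) (hW : IsOpen W) (hα : DifferentiableOn ℝ α W) :
    HasFlatTwistOn α W := by
  obtain ⟨z, g, hz, hg, hzg⟩ := h
  have hg₀ (y) (hy : y ∈ W) : g y ≠ 0 := left_ne_zero_of_smul ((hzg y hy).2 ▸ (hzg y hy).1)
  have h_log : ContDiffOn ℝ ∞ (fun y => Real.log (g y)) W := hg.log hg₀
  refine ⟨fderiv ℝ fun y => Real.log (g y),
    ((contDiffOn_infty_iff_fderiv_of_isOpen hW).mp h_log).2, isClosedFormOn_fderiv hW h_log,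
    fun y hy a b => ?_⟩
  have hg_deriv : HasFDerivAt g (fderiv ℝ g y) y :=
    ((hg.differentiableOn (by simp)).differentiableAt (hW.mem_nhds hy)).hasFDerivAt
  have hα_deriv : HasFDerivAt α (fderiv ℝ α y) y :=
    (hα.differentiableAt (hW.mem_nhds hy)).hasFDerivAt
  have hz_eq : fderiv ℝ z =ᶠ[𝓝 y] g • α :=
    eventuallyEq_of_mem (hW.mem_nhds hy) fun x hx => (hzg x hx).2
  have h_symm := isClosedFormOn_fderiv hW hz y hy a b
  rw [hz_eq.fderiv_eq, (hg_deriv.smul hα_deriv).fderiv] at h_symm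
  rw [(hg_deriv.log (hg₀ y hy)).fderiv]
  simp only [_root_.add_apply, _root_.smul_apply, smul_eq_mul,
    ContinuousLinearMap.smulRight_apply] at h_symm ⊢
  field_simp [hg₀ y hy]
  linear_combination h_symm

end ClosedForms

section NormalForm

theorem exists_openPartialHomeomorph_of_det_ne_zero {E : Type*} [NormedAddCommGroup E]
    [NormedSpace ℝ E] [FiniteDimensional ℝ E] {f : E → E} {U : Set E} (hU : IsOpen U)
    (hf : ContDiffOn ℝ ∞ f U) {x₀ : E} (hx₀ : x₀ ∈ U) (hdet : (fderiv ℝ f x₀).det ≠ 0) :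
    ∃ Φ : OpenPartialHomeomorph E E, ⇑Φ = f ∧ x₀ ∈ Φ.source ∧ Φ.source ⊆ U ∧
      ContDiffOn ℝ ∞ Φ.symm Φ.target ∧ ∀ y ∈ Φ.source, (fderiv ℝ f y).det ≠ 0 := by
  have := FiniteDimensional.complete ℝ E
  have hf_deriv (y) (hy : y ∈ U) (hdet : (fderiv ℝ f y).det ≠ 0) :
      HasFDerivAt f
        ((fderiv ℝ f y).toContinuousLinearEquivOfDetNeZero hdet : E →L[ℝ] E) y :=
    ((hf.differentiableOn (by simp)).differentiableAt (hU.mem_nhds hy)).hasFDerivAt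
  have hdet_open : IsOpen (U ∩ (fun y => (fderiv ℝ f y).det) ⁻¹' {0}ᶜ) :=
    (ContinuousLinearMap.continuous_det.comp_continuousOn
      (hf.continuousOn_fderiv_of_isOpen hU (by simp))).isOpen_inter_preimage hU
      isOpen_compl_singleton
  let Φ := ((hf.contDiffAt (hU.mem_nhds hx₀)).toOpenPartialHomeomorph f
    (hf_deriv x₀ hx₀ hdet) (by simp)).restrOpen _ hdet_open
  have hΦ_source : Φ.source ⊆ U ∩ (fun y => (fderiv ℝ f y).det) ⁻¹' {0}ᶜ := inter_subset_right
  refine ⟨Φ, rfl, ⟨ContDiffAt.mem_toOpenPartialHomeomorph_source _ _ _, hx₀, hdet⟩,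
    fun y hy => (hΦ_source hy).1, fun p hp => ?_, fun y hy => (hΦ_source hy).2⟩
  obtain ⟨hpU, hp_det⟩ := hΦ_source (Φ.map_target hp)
  exact (Φ.contDiffAt_symm hp (hf_deriv _ hpU hp_det)
    (hf.contDiffAt (hU.mem_nhds hpU))).contDiffWithinAt

theorem det_fderiv_comp {E : Type*} [NormedAddCommGroup E] [NormedSpace ℝ E] {f g : E → E} {x : E}
    (hg : DifferentiableAt ℝ g (f x)) (hf : DifferentiableAt ℝ f x) :
    (fderiv ℝ (g ∘ f) x).det = (fderiv ℝ g (f x)).det * (fderiv ℝ f x).det := by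
  rw [fderiv_comp x hg hf]
  exact LinearMap.det_comp (fderiv ℝ g (f x)).toLinearMap (fderiv ℝ f x).toLinearMap

variable {n : ℕ}

theorem exists_contDiff_det_fderiv_eventuallyEq {g : (Fin n → ℝ) → ℝ} {O : Set (Fin n → ℝ)}
    {p₀ : Fin n → ℝ} (hg : ContDiffOn ℝ ∞ g O) (hO : O ∈ 𝓝 p₀) (l : Fin n) :
    ∃ H : (Fin n → ℝ) → (Fin n → ℝ), ContDiff ℝ ∞ H ∧ (∀ p, ∀ i ≠ l, H p i = p i) ∧
      ∀ᶠ p in 𝓝 p₀, (fderiv ℝ H p).det = g p := by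
  obtain ⟨h, hh, hh_deriv⟩ := exists_contDiff_fderiv_apply_eventuallyEq hg hO
    (v := Pi.single l (1 : ℝ)) (by simp)
  have hH_deriv (p : Fin n → ℝ) : HasFDerivAt (fun p => Function.update p l (h p))
      (ContinuousLinearMap.pi (Function.update (coordCovectors n) l (fderiv ℝ h p))) p := by
    refine hasFDerivAt_pi.mpr fun i => ?_
    rcases eq_or_ne i l with rfl | hi
    · simpa using (hh.differentiable (by simp) p).hasFDerivAt
    · simpa [hi] using hasFDerivAt_apply i p
  refine ⟨fun p => Function.update p l (h p), contDiff_pi.mpr fun i => ?_,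
    fun p i hi => Function.update_of_ne hi _ _, hh_deriv.mono fun p hp => ?_⟩
  · rcases eq_or_ne i l with rfl | hi
    · simpa using hh
    · simpa [hi] using contDiff_apply ℝ ℝ i
  · rw [(hH_deriv p).fderiv, ← coordCovectors_det_eq_det, det_update_self, coordCovectors_repr, hp]

theorem exists_contDiffOn_zero_eq_det_fderiv_ne_zero {z : (Fin (n + 1) → ℝ) → ℝ}
    {W : Set (Fin (n + 1) → ℝ)} (hW : IsOpen W) (hz : ContDiffOn ℝ ∞ z W) {x₀ : Fin (n + 1) → ℝ}
    (hx₀ : x₀ ∈ W) (hdz : fderiv ℝ z x₀ ≠ 0) :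
    ∃ φ : (Fin (n + 1) → ℝ) → (Fin (n + 1) → ℝ), ContDiffOn ℝ ∞ φ W ∧ (∀ y, φ y 0 = z y) ∧
      (fderiv ℝ φ x₀).det ≠ 0 := by
  obtain ⟨w, hw, hw_zero⟩ := exists_linearIndependent_extend_fin
    (LinearIndependent.of_subsingleton (v := ![fderiv ℝ z x₀]) 0 hdz) (Nat.le_add_left 1 n)
    (by rw [Module.finrank_eq_card_basis (coordCovectors (n + 1)), Fintype.card_fin])
  let φ (y : Fin (n + 1) → ℝ) : Fin (n + 1) → ℝ := Fin.cons (z y) fun i => w i.succ y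
  have hφ_deriv : HasFDerivAt φ (ContinuousLinearMap.pi w) x₀ := by
    refine hasFDerivAt_pi.mpr (Fin.cases ?_ fun i => (w i.succ).hasFDerivAt)
    rw [show w 0 = fderiv ℝ z x₀ from hw_zero 0]
    exact ((hz.differentiableOn (by simp)).differentiableAt (hW.mem_nhds hx₀)).hasFDerivAt
  refine ⟨φ, contDiffOn_pi.mpr (Fin.cases hz fun i => (w i.succ).contDiff.contDiffOn),
    fun y => rfl, ?_⟩
  rw [hφ_deriv.fderiv, ← coordCovectors_det_eq_det]
  exact det_ne_zero_of_linearIndependent _ hw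

theorem exists_openPartialHomeomorph_zero_eq_det_fderiv_eq {z g : (Fin (n + 2) → ℝ) → ℝ}
    {W : Set (Fin (n + 2) → ℝ)} (hW : IsOpen W) (hz : ContDiffOn ℝ ∞ z W)
    (hg : ContDiffOn ℝ ∞ g W) {x₀ : Fin (n + 2) → ℝ} (hx₀ : x₀ ∈ W) (hdz : fderiv ℝ z x₀ ≠ 0)
    (hg₀ : g x₀ ≠ 0) :
    ∃ Φ : OpenPartialHomeomorph (Fin (n + 2) → ℝ) (Fin (n + 2) → ℝ), x₀ ∈ Φ.source ∧
      Φ.source ⊆ W ∧ ContDiffOn ℝ ∞ Φ Φ.source ∧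
      ∀ y ∈ Φ.source, Φ y 0 = z y ∧ (fderiv ℝ Φ y).det = g y := by
  obtain ⟨φ, hφ, hφ_zero, hφ_det⟩ := exists_contDiffOn_zero_eq_det_fderiv_ne_zero hW hz hx₀ hdz
  obtain ⟨Ψ, rfl, hx₀Ψ, hΨW, hΨ_symm, hΨ_det⟩ :=
    exists_openPartialHomeomorph_of_det_ne_zero hW hφ hx₀ hφ_det
  have hdet_smooth : ContDiffOn ℝ ∞ (fun y => (fderiv ℝ Ψ y).det) W :=
    contDiff_det_s9.comp_contDiffOn ((contDiffOn_infty_iff_fderiv_of_isOpen hW).mp hφ).2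
  have h_ratio : ContDiffOn ℝ ∞ ((fun y => g y / (fderiv ℝ Ψ y).det) ∘ Ψ.symm) Ψ.target :=
    ((hg.mono hΨW).div (hdet_smooth.mono hΨW) hΨ_det).comp hΨ_symm Ψ.mapsTo_symm
  obtain ⟨H, hH, hH_fix, hH_det⟩ := exists_contDiff_det_fderiv_eventuallyEq h_ratio
    (Ψ.open_target.mem_nhds (Ψ.map_source hx₀Ψ)) (Fin.last (n + 1))
  obtain ⟨N, hN_det, hN, hx₀N⟩ := eventually_nhds_iff.mp
    (((Ψ.continuousAt hx₀Ψ).eventually hH_det).and (Ψ.open_source.mem_nhds hx₀Ψ))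
  have hu_det (y) (hy : y ∈ N) : (fderiv ℝ (H ∘ Ψ) y).det = g y := by
    obtain ⟨hyH, hyΨ⟩ := hN_det y hy
    rw [det_fderiv_comp (hH.differentiable (by simp) _)
      ((hφ.differentiableOn (by simp)).differentiableAt (hW.mem_nhds (hΨW hyΨ))), hyH,
      Function.comp_apply, Ψ.left_inv hyΨ, div_mul_cancel₀ _ (hΨ_det y hyΨ)]
  have hNW : N ⊆ W := fun y hy => hΨW (hN_det y hy).2
  have hu : ContDiffOn ℝ ∞ (H ∘ Ψ) N := hH.comp_contDiffOn (hφ.mono hNW)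
  obtain ⟨Φ, hΦ, hx₀Φ, hΦN, -⟩ := exists_openPartialHomeomorph_of_det_ne_zero hN hu hx₀N
    ((hu_det x₀ hx₀N).trans_ne hg₀)
  refine ⟨Φ, hx₀Φ, hΦN.trans hNW, hΦ ▸ hu.mono hΦN, fun y hy => ⟨?_, hΦ ▸ hu_det y (hΦN hy)⟩⟩
  rw [hΦ, Function.comp_apply, hH_fix _ _ Fin.last_pos.ne, hφ_zero]

end NormalForm

section ClosedAnnihilator

variable {E : Type*} [NormedAddCommGroup E] [NormedSpace ℝ E] {n : ℕ} {W : Set E}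

/-- The covectors annihilating the multivector field `V` on `W` are the multiples of a smooth closed
nowhere-vanishing 1-form: condition (1) of the theorem. -/
def HasClosedAnnihilatorOn (V : E → (E →L[ℝ] ℝ) [×(n + 1)]→L[ℝ] ℝ) (W : Set E) : Prop :=
  ∃ ζ : E → E →L[ℝ] ℝ, ContDiffOn ℝ ∞ ζ W ∧ (∀ y ∈ W, ζ y ≠ 0) ∧ IsClosedFormOn ζ W ∧
    ∀ y ∈ W, ∀ w : E →L[ℝ] ℝ,
      (∀ ws : Fin n → E →L[ℝ] ℝ, V y (Fin.cons w ws) = 0) ↔ ∃ t : ℝ, w = t • ζ y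

variable {V : E → (E →L[ℝ] ℝ) [×(n + 1)]→L[ℝ] ℝ} {b : Module.Basis (Fin (n + 2)) ℝ (E →L[ℝ] ℝ)}

theorem HasIntegratingFactorOn.hasClosedAnnihilatorOn
    (h : HasIntegratingFactorOn (fun y => volumeDual b (V y)) W)
    (hW : IsOpen W) (hV_alt : ∀ y ∈ W, IsAlternating (V y)) : HasClosedAnnihilatorOn V W := by
  obtain ⟨z, g, hz, -, hzg⟩ := h
  refine ⟨fderiv ℝ z, ((contDiffOn_infty_iff_fderiv_of_isOpen hW).mp hz).2,
    fun y hy => (hzg y hy).1, isClosedFormOn_fderiv hW hz, fun y hy w => ?_⟩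
  obtain ⟨hdz, hdz_eq⟩ := hzg y hy
  rw [hdz_eq] at hdz ⊢
  rw [(hV_alt y hy).forall_cons_eq_zero_iff (right_ne_zero_of_smul hdz)]
  constructor
  · rintro ⟨t, rfl⟩
    exact ⟨t / g y, by rw [smul_smul, div_mul_cancel₀ _ (left_ne_zero_of_smul hdz)]⟩
  · rintro ⟨t, rfl⟩
    exact ⟨t * g y, smul_smul t (g y) _⟩

theorem HasClosedAnnihilatorOn.exists_hasIntegratingFactorOn (h : HasClosedAnnihilatorOn V W)
    (hW : IsOpen W) (hV : ContDiffOn ℝ ∞ V W) (hV_alt : ∀ y ∈ W, IsAlternating (V y))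
    {x₀ : E} (hx₀ : x₀ ∈ W) (hV₀ : V x₀ ≠ 0) :
    ∃ S, IsOpen S ∧ x₀ ∈ S ∧ S ⊆ W ∧
      HasIntegratingFactorOn (fun y => volumeDual b (V y)) S := by
  obtain ⟨ζ, hζ, hζ_ne, hζ_closed, hζ_span⟩ := h
  obtain ⟨g, S, hS, hx₀S, hSW, hg, hζg⟩ := exists_contDiffOn_smul_eq hW (contDiffOn_volumeDual hV b)
    hζ (fun y hy => (hζ_span y hy _).mp ((hV_alt y hy).cons_volumeDual b))
    hx₀ ((hV_alt x₀ hx₀).volumeDual_ne_zero hV₀ _)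
  obtain ⟨z, T, hT, hx₀T, -, hz, hdz⟩ := hζ_closed.exists_primitive hW hζ hx₀
  refine ⟨S ∩ T, hS.inter hT, ⟨hx₀S, hx₀T⟩, fun y hy => hSW hy.1, z, g, hz.mono inter_subset_right,
    hg.mono inter_subset_left, fun y hy => ?_⟩
  rw [hdz y hy.2]
  exact ⟨hζ_ne y (hSW hy.1), hζg y hy.1⟩

end ClosedAnnihilator

section ConstantCoefficients

variable {n : ℕ} {V : (Fin (n + 1) → ℝ) → ((Fin (n + 1) → ℝ) →L[ℝ] ℝ) [×n]→L[ℝ] ℝ}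
  {U W : Set (Fin (n + 1) → ℝ)} {x₀ : Fin (n + 1) → ℝ}

theorem HasConstantCoefficientsVecAt.exists_hasIntegratingFactorOn
    (h : HasConstantCoefficientsVecAt (n + 1) n U V x₀)
    (hV_alt : ∀ y ∈ U, IsAlternating (V y)) (hV₀ : V x₀ ≠ 0) :
    ∃ W, IsOpen W ∧ x₀ ∈ W ∧ W ⊆ U ∧
      HasIntegratingFactorOn (fun y => volumeDual (coordCovectors (n + 1)) (V y)) W := by
  obtain ⟨W, hW, hx₀, hWU, u, hu, -, -, hu_bij, c, hc⟩ := h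
  set b := coordCovectors (n + 1)
  let γ := volumeDual b c
  have hdet (y) (hy : y ∈ W) : (fderiv ℝ u y).det ≠ 0 :=
    (bijective_iff_det_ne_zero _).mp (hu_bij y hy)
  have hc_alt : IsAlternating c := fun w i j hij hw => by
    rw [hc x₀ hx₀]
    exact hV_alt x₀ (hWU hx₀) _ i j hij (by rw [hw])
  have hγ_comp (y) (hy : y ∈ W) :
      γ.comp (fderiv ℝ u y) = (fderiv ℝ u y).det • volumeDual b (V y) :=
    ((hV_alt y (hWU hy)).eq_comp_iff_volumeDual_comp hc_alt (hdet y hy)).mp (hc y hy)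
  have hγ₀ : γ ≠ 0 := by
    intro hγ
    have h_zero := hγ_comp x₀ hx₀
    rw [hγ, ContinuousLinearMap.zero_comp] at h_zero
    exact smul_ne_zero (hdet x₀ hx₀) ((hV_alt x₀ (hWU hx₀)).volumeDual_ne_zero hV₀ b) h_zero.symm
  refine ⟨W, hW, hx₀, hWU, γ ∘ u, fun y => (fderiv ℝ u y).det, γ.contDiff.comp_contDiffOn hu,
    contDiff_det_s9.comp_contDiffOn ((contDiffOn_infty_iff_fderiv_of_isOpen hW).mp hu).2,
    fun y hy => ?_⟩
  rw [fderiv_comp y γ.differentiableAt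
    ((hu.differentiableOn (by simp)).differentiableAt (hW.mem_nhds hy)), γ.fderiv]
  refine ⟨fun h_zero => hγ₀ ?_, hγ_comp y hy⟩
  exact ContinuousLinearMap.ext ((hu_bij y hy).2.forall.mpr (DFunLike.congr_fun h_zero))

theorem HasIntegratingFactorOn.hasConstantCoefficientsVecAt
    {V : (Fin (n + 2) → ℝ) → ((Fin (n + 2) → ℝ) →L[ℝ] ℝ) [×(n + 1)]→L[ℝ] ℝ}
    {U W : Set (Fin (n + 2) → ℝ)} {x₀ : Fin (n + 2) → ℝ}
    (h : HasIntegratingFactorOn (fun y => volumeDual (coordCovectors (n + 2)) (V y)) W)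
    (hW : IsOpen W) (hWU : W ⊆ U) (hx₀ : x₀ ∈ W) (hV_alt : ∀ y ∈ W, IsAlternating (V y)) :
    HasConstantCoefficientsVecAt (n + 2) (n + 1) U V x₀ := by
  obtain ⟨z, g, hz, hg, hzg⟩ := h
  have hg₀ (y) (hy : y ∈ W) : g y ≠ 0 := left_ne_zero_of_smul ((hzg y hy).2 ▸ (hzg y hy).1)
  obtain ⟨Φ, hx₀Φ, hΦW, hΦ, hΦ_normal⟩ :=
    exists_openPartialHomeomorph_zero_eq_det_fderiv_eq hW hz hg hx₀ (hzg x₀ hx₀).1 (hg₀ x₀ hx₀)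
  set b := coordCovectors (n + 2)
  have hdet (y) (hy : y ∈ Φ.source) : (fderiv ℝ Φ y).det ≠ 0 :=
    (hΦ_normal y hy).2.trans_ne (hg₀ y (hΦW hy))
  have hΦ_comp (y) (hy : y ∈ Φ.source) :
      (ContinuousLinearMap.proj 0).comp (fderiv ℝ Φ y) =
        (fderiv ℝ Φ y).det • volumeDual b (V y) := by
    have hz_eq : z =ᶠ[𝓝 y] (ContinuousLinearMap.proj (R := ℝ) (φ := fun _ => ℝ) 0) ∘ Φ :=
      eventuallyEq_of_mem (Φ.open_source.mem_nhds hy) fun x hx => (hΦ_normal x hx).1.symm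
    rw [(hΦ_normal y hy).2, ← (hzg y (hΦW hy)).2, hz_eq.fderiv_eq,
      fderiv_comp y (ContinuousLinearMap.differentiableAt _)
        ((hΦ.differentiableOn (by simp)).differentiableAt (Φ.open_source.mem_nhds hy)),
      ContinuousLinearMap.fderiv]
  obtain ⟨c, hc_alt, hc_dual⟩ :=
    (hV_alt x₀ hx₀).exists_isAlternating_volumeDual_eq (hdet x₀ hx₀Φ) (hΦ_comp x₀ hx₀Φ)
  refine ⟨Φ.source, Φ.open_source, hx₀Φ, hΦW.trans hWU, Φ, hΦ, Φ.injOn,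
    Φ.image_source_eq_target ▸ Φ.open_target,
    fun y hy => (bijective_iff_det_ne_zero _).mpr (hdet y hy), c, fun y hy => ?_⟩
  rw [(hV_alt y (hΦW hy)).eq_comp_iff_volumeDual_comp hc_alt (hdet y hy), hc_dual, hΦ_comp y hy]

end ConstantCoefficients

theorem codimOneVector_constantCoefficients_iff_general (m : ℕ) (U : Set (Fin (m + 2) → ℝ))
    (V : (Fin (m + 2) → ℝ) → (((Fin (m + 2) → ℝ) →L[ℝ] ℝ) [×(m + 1)]→L[ℝ] ℝ))
    (hV : ContDiffOn ℝ (⊤ : ℕ∞) V U) (hV_alt : ∀ y ∈ U, IsAlternating (V y))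
    (x₀ : Fin (m + 2) → ℝ) (hV₀ : V x₀ ≠ 0)
    (α : (Fin (m + 2) → ℝ) → ((Fin (m + 2) → ℝ) →L[ℝ] ℝ))
    (hα : ∀ y v, α y v = ∑ i : Fin (m + 2), (-1 : ℝ) ^ (i : ℕ) * v i *
      V y (fun j : Fin (m + 1) => ContinuousLinearMap.proj (i.succAbove j))) :
    List.TFAE [HasConstantCoefficientsVecAt (m + 2) (m + 1) U V x₀,
      ∃ W, IsOpen W ∧ x₀ ∈ W ∧ W ⊆ U ∧ HasClosedAnnihilatorOn V W,
      ∃ W, IsOpen W ∧ x₀ ∈ W ∧ W ⊆ U ∧ HasClosedAnnihilatorOn V W ∧ HasFlatTwistOn α W] := by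
  obtain rfl : α = fun y => volumeDual (coordCovectors (m + 2)) (V y) := by
    ext y v
    simp [hα, volumeDual, _root_.sum_apply, mul_right_comm]
  tfae_have 1 → 3 := fun h => by
    obtain ⟨W, hW, hx₀, hWU, hα_factor⟩ := h.exists_hasIntegratingFactorOn hV_alt hV₀
    exact ⟨W, hW, hx₀, hWU, hα_factor.hasClosedAnnihilatorOn hW fun y hy => hV_alt y (hWU hy),
      hα_factor.hasFlatTwistOn hW
        ((contDiffOn_volumeDual (hV.mono hWU) _).differentiableOn (by simp))⟩
  tfae_have 3 → 2 := fun ⟨W, hW, hx₀, hWU, hV_ann, _⟩ => ⟨W, hW, hx₀, hWU, hV_ann⟩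
  tfae_have 2 → 1 := fun ⟨W, hW, hx₀, hWU, hV_ann⟩ => by
    have hW_alt (y) (hy : y ∈ W) : IsAlternating (V y) := hV_alt y (hWU hy)
    obtain ⟨S, hS, hx₀S, hSW, hα_factor⟩ := hV_ann.exists_hasIntegratingFactorOn
      (b := coordCovectors (m + 2)) hW (hV.mono hWU) hW_alt hx₀ hV₀
    exact hα_factor.hasConstantCoefficientsVecAt hS (hSW.trans hWU) hx₀S
      fun y hy => hW_alt y (hSW hy)
  tfae_finish

/-- Proposition 1.16: with `n = m + 2 ≥ 2`, let `V` be a smooth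
`(n−1)`-vector field with `V_{x₀} ≠ 0`, and let `α` be the `1`-form defined by
`v ∧ V_y = α_y(v)·(e₁∧⋯∧eₙ)`, i.e.
`α_y(v) = Σᵢ (−1)ⁱ vⁱ V_y(ε¹,…,ε̂ⁱ,…,εⁿ)`.
Then `V` has constant coefficients near `x₀` iff on some open neighbourhood `W` of
`x₀`: (1) there is a closed nowhere-vanishing smooth `1`-form `ζ` with
`{w : i_w V_y = 0} = ℝ·ζ_y` for all `y ∈ W`, and (2) there is a closed smooth
`1`-form `θ` with `dα + θ ∧ α = 0` on `W`. -/
theorem codimOneVector_constantCoefficients_iff (m : ℕ)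
    (U : Set (Fin (m + 2) → ℝ)) (hU : IsOpen U)
    (V : (Fin (m + 2) → ℝ) → (((Fin (m + 2) → ℝ) →L[ℝ] ℝ) [×(m + 1)]→L[ℝ] ℝ))
    (hV : ContDiffOn ℝ (⊤ : ℕ∞) V U)
    (halt : ∀ y ∈ U, ∀ w : Fin (m + 1) → ((Fin (m + 2) → ℝ) →L[ℝ] ℝ), ∀ i j,
      i ≠ j → w i = w j → V y w = 0)
    (x₀ : Fin (m + 2) → ℝ) (hx₀ : x₀ ∈ U) (hx0 : V x₀ ≠ 0)
    (α : (Fin (m + 2) → ℝ) → ((Fin (m + 2) → ℝ) →L[ℝ] ℝ))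
    (hα : ∀ y : Fin (m + 2) → ℝ, ∀ v : Fin (m + 2) → ℝ,
      α y v = ∑ i : Fin (m + 2), (-1 : ℝ) ^ (i : ℕ) * v i *
        V y (fun j : Fin (m + 1) => ContinuousLinearMap.proj (i.succAbove j))) :
    HasConstantCoefficientsVecAt (m + 2) (m + 1) U V x₀ ↔
      ∃ W : Set (Fin (m + 2) → ℝ), IsOpen W ∧ x₀ ∈ W ∧ W ⊆ U ∧
        (∃ ζ : (Fin (m + 2) → ℝ) → ((Fin (m + 2) → ℝ) →L[ℝ] ℝ),
          ContDiffOn ℝ (⊤ : ℕ∞) ζ W ∧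
          (∀ y ∈ W, ζ y ≠ 0) ∧
          (∀ y ∈ W, ∀ a b : Fin (m + 2) → ℝ,
            fderiv ℝ ζ y a b = fderiv ℝ ζ y b a) ∧
          (∀ y ∈ W, ∀ w : (Fin (m + 2) → ℝ) →L[ℝ] ℝ,
            (∀ ws : Fin m → ((Fin (m + 2) → ℝ) →L[ℝ] ℝ), V y (Fin.cons w ws) = 0) ↔
              (∃ t : ℝ, w = t • ζ y))) ∧
        (∃ θ : (Fin (m + 2) → ℝ) → ((Fin (m + 2) → ℝ) →L[ℝ] ℝ),
          ContDiffOn ℝ (⊤ : ℕ∞) θ W ∧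
          (∀ y ∈ W, ∀ a b : Fin (m + 2) → ℝ,
            fderiv ℝ θ y a b = fderiv ℝ θ y b a) ∧
          (∀ y ∈ W, ∀ a b : Fin (m + 2) → ℝ,
            (fderiv ℝ α y a b - fderiv ℝ α y b a) +
              (θ y a * α y b - θ y b * α y a) = 0)) := 
  (codimOneVector_constantCoefficients_iff_general m U V hV halt x₀ hx0 α hα).out 0 2
end
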